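/- Fix d > 1 and ε > 0. For each n, let A_n be an n×n random matrix with independent identically distributed Ber(d/n) entries. Then for Lebesgue almost every z ∈ ℂ, the probability P( σ_n(A_n − z·I_n) ≤ exp(−ε n) ) tends to 0 as n → ∞; i.e., the set of z ∈ ℂ for which this convergence fails has Lebesgue measure zero. -/

import Mathlib

open MeasureTheory

/-- The Bernoulli measure on `ℂ`, putting mass `p` at `1` and mass `1 - p` at `0`. -/
noncomputable def bernoulliC (p : ℝ) : Measure ℂ :=
  ENNReal.ofReal p • Measure.dirac 1 + ENNReal.ofReal (1 - p) • Measure.dirac 0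

/-- The law of an `n × n` matrix with iid `Ber(p)` entries (taking values `0` or `1` in `ℂ`). -/
noncomputable def iidMatrixLaw (n : ℕ) (p : ℝ) : Measure (Fin n → Fin n → ℂ) :=
  Measure.pi fun _ => Measure.pi fun _ => bernoulliC p

/-- The Euclidean norm of a vector in `ℂ^n`. -/
noncomputable def vecNorm2 {n : ℕ} (v : Fin n → ℂ) : ℝ :=
  Real.sqrt (∑ i, ‖v i‖ ^ 2)

/-- The least singular value of an `n × n` complex matrix:
the infimum of `‖M v‖₂` over unit vectors `v`. -/
noncomputable def leastSingVal {n : ℕ} (M : Matrix (Fin n) (Fin n) ℂ) : ℝ :=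
  sInf {r | ∃ v : Fin n → ℂ, vecNorm2 v = 1 ∧ r = vecNorm2 (M.mulVec v)}

section PartPA

/-- Shifted 0/1 matrix. -/
noncomputable def smat {n : ℕ} (a : Fin n → Fin n → Bool) (z : ℂ) : Matrix (Fin n) (Fin n) ℂ :=
  Matrix.of fun i j => (if a i j then 1 else 0) - (if i = j then z else 0)

lemma smat_apply {n : ℕ} (a : Fin n → Fin n → Bool) (z : ℂ) (i j : Fin n) :
    smat a z i j = (if a i j then 1 else 0) - (if i = j then z else 0) := rfl

lemma smat_norm_le {n : ℕ} (a : Fin n → Fin n → Bool) (z : ℂ) (i j : Fin n) :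
    ‖smat a z i j‖ ≤ 1 + ‖z‖ := by
  rw [smat_apply]
  refine (norm_sub_le _ _).trans ?_
  gcongr
  · split_ifs <;> simp
  · split_ifs <;> simp

lemma smat_transpose {n : ℕ} (a : Fin n → Fin n → Bool) (z : ℂ) :
    (smat a z).transpose = smat (fun i j => a j i) z := by
  ext i j
  simp only [Matrix.transpose_apply, smat_apply, eq_comm (a := i) (b := j)]

lemma norm_mulVec_le {n : ℕ} (M : Matrix (Fin n) (Fin n) ℂ) (B : ℝ) (hB : ∀ i j, ‖M i j‖ ≤ B)
    (v : Fin n → ℂ) (i : Fin n) : ‖(M.mulVec v) i‖ ≤ n * B * ‖v‖ := by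
  rw [Matrix.mulVec, dotProduct]
  refine (norm_sum_le _ _).trans ?_
  calc ∑ j, ‖M i j * v j‖ ≤ ∑ _j : Fin n, B * ‖v‖ := by
        refine Finset.sum_le_sum fun j _ => ?_
        rw [norm_mul]
        exact mul_le_mul (hB i j) (norm_le_pi_norm v j) (norm_nonneg _)
          ((norm_nonneg _).trans (hB i j))
    _ = n * B * ‖v‖ := by simp; ring

/-- approximate nullity at least `m`, at scale `σ`, on the rows `R`. -/
def NN {n : ℕ} (M : Matrix (Fin n) (Fin n) ℂ) (R : Finset (Fin n)) (σ : ℝ) (m : ℕ) : Prop :=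
  ∃ W : Submodule ℂ (Fin n → ℂ), Module.finrank ℂ W = m ∧
    ∀ v ∈ W, ∀ i ∈ R, ‖(M.mulVec v) i‖ ≤ σ * ‖v‖

lemma exists_submodule_finrank {V : Type*} [AddCommGroup V] [Module ℂ V] [FiniteDimensional ℂ V]
    (W : Submodule ℂ V) (k : ℕ) (hk : k ≤ Module.finrank ℂ W) :
    ∃ W' : Submodule ℂ V, W' ≤ W ∧ Module.finrank ℂ W' = k := by
  obtain ⟨f, hf⟩ := exists_linearIndependent_of_le_finrank hk
  refine ⟨(Submodule.span ℂ (Set.range f)).map W.subtype, Submodule.map_subtype_le _ _, ?_⟩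
  rw [Submodule.finrank_map_subtype_eq, finrank_span_eq_card hf, Fintype.card_fin]

lemma NN.zero {n : ℕ} (M : Matrix (Fin n) (Fin n) ℂ) (R : Finset (Fin n)) (σ : ℝ) :
    NN M R σ 0 := by
  refine ⟨⊥, by simp, ?_⟩
  intro v hv i _
  rw [Submodule.mem_bot] at hv
  simp [hv]

lemma NN.anti {n : ℕ} {M : Matrix (Fin n) (Fin n) ℂ} {R : Finset (Fin n)} {σ : ℝ} {m k : ℕ}
    (h : NN M R σ m) (hk : k ≤ m) : NN M R σ k := by
  obtain ⟨W, hW, h⟩ := h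
  obtain ⟨W', h1, h2⟩ := exists_submodule_finrank W k (by omega)
  exact ⟨W', h2, fun v hv => h v (h1 hv)⟩

lemma NN.congr {n : ℕ} {M M' : Matrix (Fin n) (Fin n) ℂ} {R R' : Finset (Fin n)} {σ σ' : ℝ} {m : ℕ}
    (h : NN M R σ m) (hR : R' ⊆ R) (hM : ∀ i ∈ R', M' i = M i) (hσ : σ ≤ σ') : NN M' R' σ' m := by
  obtain ⟨W, hW, h⟩ := h
  refine ⟨W, hW, fun v hv i hi => ?_⟩
  have : (M'.mulVec v) i = (M.mulVec v) i := by
    simp [Matrix.mulVec, hM i hi]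
  rw [this]
  refine (h v hv i (hR hi)).trans ?_
  gcongr

/-- Adding one row costs at most one dimension. -/
lemma NN.add_row {n : ℕ} {M : Matrix (Fin n) (Fin n) ℂ} {σ : ℝ} (hσ : 0 ≤ σ) {m : ℕ} (i : Fin n)
    (h : NN M (Finset.univ.erase i) σ m) : NN M Finset.univ σ (m - 1) := by
  obtain ⟨W, hW, h⟩ := h
  let f : W →ₗ[ℂ] ℂ := ((LinearMap.proj i).comp M.mulVecLin).comp W.subtype
  have hr : Module.finrank ℂ (LinearMap.range f) ≤ 1 := by
    simpa using Submodule.finrank_le (LinearMap.range f)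
  have hk := LinearMap.finrank_range_add_finrank_ker f
  have : NN M Finset.univ σ (Module.finrank ℂ (LinearMap.ker f)) := by
    refine ⟨(LinearMap.ker f).map W.subtype, ?_, ?_⟩
    · exact Submodule.finrank_map_subtype_eq _ _
    · rintro v ⟨w, hw, rfl⟩ j _
      by_cases hj : j = i
      · subst hj
        have : (M.mulVec (w : Fin n → ℂ)) j = 0 := by simpa [f] using hw
        simp only [Submodule.subtype_apply, this, norm_zero]
        positivity
      · exact h w w.2 j (by simp [hj])
  exact this.anti (by omega)

/-- If row `i` is noncrucial, it can be added for free. -/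
lemma NN.add_row_free {n : ℕ} {M : Matrix (Fin n) (Fin n) ℂ} {σ σ' κ η : ℝ} {m : ℕ} (i : Fin n)
    (u : Fin n → ℂ) (hu : ‖u‖ ≤ 1) (hui : κ ≤ ‖u i‖) (hκ : 0 < κ)
    (hMu : ∀ j, ‖(M.transpose.mulVec u) j‖ ≤ η) (hσ' : 0 ≤ σ')
    (hσ : n * η + n * σ' ≤ κ * σ) (hσσ : σ' ≤ σ)
    (h : NN M (Finset.univ.erase i) σ' m) : NN M Finset.univ σ m := by
  obtain ⟨W, hW, h⟩ := h
  refine ⟨W, hW, fun v hv j _ => ?_⟩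
  by_cases hj : j = i
  swap
  · refine (h v hv j (by simp [hj])).trans ?_
    gcongr
  subst hj
  have key : u j * (M.mulVec v) j =
      ∑ k, (M.transpose.mulVec u) k * v k - ∑ k ∈ Finset.univ.erase j, u k * (M.mulVec v) k := by
    have h1 : ∑ k, (M.transpose.mulVec u) k * v k = ∑ k, u k * (M.mulVec v) k := by
      have := Matrix.dotProduct_mulVec u M v
      rw [← Matrix.mulVec_transpose] at this
      simpa [dotProduct] using this.symm
    rw [h1, ← Finset.add_sum_erase _ _ (Finset.mem_univ j)]
    ring
  have h2 : ‖u j * (M.mulVec v) j‖ ≤ n * η * ‖v‖ + n * σ' * ‖v‖ := by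
    rw [key]
    refine (norm_sub_le _ _).trans (add_le_add ?_ ?_)
    · refine (norm_sum_le _ _).trans ?_
      calc _ ≤ ∑ _k : Fin n, η * ‖v‖ := by
            refine Finset.sum_le_sum fun k _ => ?_
            rw [norm_mul]
            exact mul_le_mul (hMu k) (norm_le_pi_norm v k) (norm_nonneg _)
              ((norm_nonneg _).trans (hMu k))
        _ = _ := by simp; ring
    · refine (norm_sum_le _ _).trans ?_
      calc _ ≤ ∑ _k ∈ Finset.univ.erase j, σ' * ‖v‖ := by
            refine Finset.sum_le_sum fun k hk => ?_
            rw [norm_mul]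
            calc _ ≤ 1 * (σ' * ‖v‖) :=
                  mul_le_mul ((norm_le_pi_norm u k).trans hu) (h v hv k hk) (norm_nonneg _) (by simp)
              _ = _ := one_mul _
        _ ≤ ∑ _k : Fin n, σ' * ‖v‖ :=
            Finset.sum_le_sum_of_subset_of_nonneg (Finset.erase_subset _ _)
              (fun _ _ _ => by positivity)
        _ = _ := by simp; ring
  rw [norm_mul] at h2
  have h3 : κ * ‖(M.mulVec v) j‖ ≤ κ * (σ * ‖v‖) := by
    calc _ ≤ ‖u j‖ * ‖(M.mulVec v) j‖ := by gcongr
      _ ≤ (n * η + n * σ') * ‖v‖ := by rw [add_mul]; exact h2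
      _ ≤ (κ * σ) * ‖v‖ := by gcongr
      _ = _ := by ring
  exact le_of_mul_le_mul_left h3 hκ

/-- If the kernel vector `g` of the rows other than `i` is seen by row `i`, nullity drops. -/
lemma NN.drop_row {n : ℕ} {M : Matrix (Fin n) (Fin n) ℂ} {σ σ' κ D : ℝ} {m : ℕ} (i : Fin n)
    (g : Fin n → ℂ) (hg : ‖g‖ = 1) (hgz : ∀ j ≠ i, (M.mulVec g) j = 0) (hgi : κ ≤ ‖(M.mulVec g) i‖)
    (hκ : 0 < κ) (hκD : κ ≤ D)
    (hD : ∀ v : Fin n → ℂ, ‖(M.mulVec v) i‖ ≤ D * ‖v‖) (hσ0 : 0 ≤ σ) (hσ1 : σ ≤ κ / 2)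
    (hσ : 4 * D * σ ≤ κ * σ')
    (h : NN M Finset.univ σ m) : NN M (Finset.univ.erase i) σ' (m + 1) := by
  obtain ⟨W, hW, h⟩ := h
  have hgW : g ∉ W := by
    intro hc
    have := h g hc i (Finset.mem_univ i)
    rw [hg] at this
    linarith
  refine ⟨W ⊔ Submodule.span ℂ {g}, ?_, ?_⟩
  · have hdis : W ⊓ Submodule.span ℂ {g} = ⊥ := by
      rw [← disjoint_iff]
      exact (Submodule.disjoint_span_singleton' (by rintro rfl; simp at hg)).2 hgW
    have h1 := Submodule.finrank_sup_add_finrank_inf_eq W (Submodule.span ℂ {g})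
    rw [hdis, finrank_bot, finrank_span_singleton (by rintro rfl; simp at hg), hW] at h1
    omega
  · intro v hv j hj
    obtain ⟨w, hw, y, hy, rfl⟩ := Submodule.mem_sup.1 hv
    obtain ⟨c, rfl⟩ := Submodule.mem_span_singleton.1 hy
    have hji : j ≠ i := by simpa using hj
    have h1 : (M.mulVec (w + c • g)) j = (M.mulVec w) j := by
      rw [Matrix.mulVec_add, Matrix.mulVec_smul]; simp [hgz j hji]
    rw [h1]
    set v := w + c • g with hvdef
    have h2 : (M.mulVec v) i = (M.mulVec w) i + c * (M.mulVec g) i := by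
      rw [hvdef, Matrix.mulVec_add, Matrix.mulVec_smul]; simp
    have h3 : ‖c‖ * κ ≤ D * ‖v‖ + σ * ‖w‖ := by
      calc ‖c‖ * κ ≤ ‖c‖ * ‖(M.mulVec g) i‖ := by gcongr
        _ = ‖(M.mulVec v) i - (M.mulVec w) i‖ := by rw [h2, ← norm_mul]; congr 1; ring
        _ ≤ _ := (norm_sub_le _ _).trans (add_le_add (hD v) (h w hw i (Finset.mem_univ i)))
    have h4 : ‖w‖ ≤ ‖v‖ + ‖c‖ := by
      calc ‖w‖ = ‖v - c • g‖ := by rw [hvdef]; simp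
        _ ≤ ‖v‖ + ‖c • g‖ := norm_sub_le _ _
        _ = _ := by rw [norm_smul, hg, mul_one]
    have h5 := h w hw j (Finset.mem_univ j)
    have hw0 := norm_nonneg w
    have hv0 := norm_nonneg v
    have h6 : κ * ‖w‖ ≤ κ * ‖v‖ + D * ‖v‖ + σ * ‖w‖ := by nlinarith
    have h7 : κ * ‖w‖ ≤ 4 * D * ‖v‖ := by nlinarith
    have h8 : κ * (σ * ‖w‖) ≤ κ * (σ' * ‖v‖) := by
      calc _ = σ * (κ * ‖w‖) := by ring
        _ ≤ σ * (4 * D * ‖v‖) := by gcongr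
        _ = (4 * D * σ) * ‖v‖ := by ring
        _ ≤ (κ * σ') * ‖v‖ := by gcongr
        _ = _ := by ring
    exact h5.trans (le_of_mul_le_mul_left h8 hκ)

lemma norm_det_le_cols {n : ℕ} (M : Matrix (Fin n) (Fin n) ℂ) (c : Fin n → ℝ)
    (hc : ∀ i j, ‖M i j‖ ≤ c j) : ‖M.det‖ ≤ n.factorial * ∏ j, c j := by
  rw [Matrix.det_apply]
  refine (norm_sum_le _ _).trans ?_
  calc _ ≤ ∑ _σ : Equiv.Perm (Fin n), ∏ j, c j := by
        refine Finset.sum_le_sum fun σ _ => ?_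
        have : ‖Equiv.Perm.sign σ • ∏ i, M (σ i) i‖ = ∏ i, ‖M (σ i) i‖ := by
          rcases Int.units_eq_one_or (Equiv.Perm.sign σ) with h | h <;> simp [h]
        rw [this]
        exact Finset.prod_le_prod (fun _ _ => norm_nonneg _) (fun j _ => hc _ j)
    _ = _ := by simp [Fintype.card_perm]

lemma det_updateCol_mulVec {n : ℕ} (M : Matrix (Fin n) (Fin n) ℂ) (v : Fin n → ℂ) (j : Fin n) :
    (M.updateCol j (M.mulVec v)).det = M.det * v j := by
  rw [← Matrix.cramer_apply, Matrix.cramer_eq_adjugate_mulVec, Matrix.mulVec_mulVec,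
    Matrix.adjugate_mul, Matrix.smul_mulVec, Matrix.one_mulVec]
  simp

lemma NN_det_aux {n : ℕ} (σ D : ℝ) (m : ℕ) : ∀ (M : Matrix (Fin n) (Fin n) ℂ)
    (J : Finset (Fin n)) (W : Submodule ℂ (Fin n → ℂ)), Module.finrank ℂ W = m →
    (∀ v ∈ W, ∀ i, ‖(M.mulVec v) i‖ ≤ σ * ‖v‖) → (∀ v ∈ W, ∀ j ∈ J, v j = 0) →
    (∀ i, ∀ j ∈ J, ‖M i j‖ ≤ σ) → (∀ i, ∀ j ∉ J, ‖M i j‖ ≤ D) →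
    ‖M.det‖ ≤ n.factorial * (σ ^ (J.card + m) * D ^ (n - (J.card + m))) := by
  induction m with
  | zero =>
    intro M J W _ _ _ h1 h2
    refine (norm_det_le_cols M (fun j => if j ∈ J then σ else D) ?_).trans (le_of_eq ?_)
    · intro i j
      split_ifs with h
      · exact h1 i j h
      · exact h2 i j h
    · congr 1
      rw [Finset.prod_ite]
      simp only [Finset.prod_const]
      congr 2
      · simp
      · rw [add_zero]
        have := Finset.card_compl J
        rw [Fintype.card_fin] at this
        rw [← this]
        congr 1
        ext; simp
  | succ m ih =>
    intro M J W hW hs hz h1 h2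
    have hne : W ≠ ⊥ := by
      rintro rfl
      simp at hW
    obtain ⟨w, hw, hw0⟩ := Submodule.exists_mem_ne_zero_of_ne_bot hne
    have hn : Nonempty (Fin n) := by
      by_contra hc
      rw [not_nonempty_iff] at hc
      exact hw0 (Subsingleton.elim _ _)
    obtain ⟨j, hj⟩ : ∃ j, ‖w j‖ = ‖w‖ := by
      obtain ⟨j, hj⟩ := Finite.exists_max (fun j => ‖w j‖)
      exact ⟨j, le_antisymm (norm_le_pi_norm w j) ((pi_norm_le_iff_of_nonneg (norm_nonneg _)).2 hj)⟩
    have hwj : w j ≠ 0 := by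
      rw [← norm_ne_zero_iff, hj]; exact norm_ne_zero_iff.2 hw0
    set v := (w j)⁻¹ • w with hv
    have hvW : v ∈ W := W.smul_mem _ hw
    have hvj : v j = 1 := by simp [hv, hwj]
    have hvn : ‖v‖ = 1 := by
      rw [hv, norm_smul, norm_inv, hj]
      exact inv_mul_cancel₀ (norm_ne_zero_iff.2 hw0)
    have hjJ : j ∉ J := fun hc => hwj (hz w hw j hc)
    let f : W →ₗ[ℂ] ℂ := (LinearMap.proj j).comp W.subtype
    have hr : Module.finrank ℂ (LinearMap.range f) ≤ 1 := by
      simpa using Submodule.finrank_le (LinearMap.range f)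
    have hk := LinearMap.finrank_range_add_finrank_ker f
    obtain ⟨W', hW'1, hW'2⟩ := exists_submodule_finrank ((LinearMap.ker f).map W.subtype) m
      (by rw [Submodule.finrank_map_subtype_eq]; omega)
    have hW'W : W' ≤ W := hW'1.trans (Submodule.map_subtype_le _ _)
    have hW'j : ∀ v ∈ W', v j = 0 := by
      intro x hx
      obtain ⟨y, hy, rfl⟩ := hW'1 hx
      simpa [f] using hy
    have hcol : ∀ x ∈ W', (M.updateCol j (M.mulVec v)).mulVec x = M.mulVec x := by
      intro x hx
      ext i
      simp only [Matrix.mulVec, dotProduct]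
      refine Finset.sum_congr rfl fun k _ => ?_
      by_cases hkj : k = j
      · subst hkj; simp [hW'j x hx]
      · simp [Matrix.updateCol_ne hkj]
    have := ih (M.updateCol j (M.mulVec v)) (insert j J) W' hW'2
      (fun x hx i => by rw [hcol x hx]; exact hs x (hW'W hx) i)
      (fun x hx k hk => by
        rcases Finset.mem_insert.1 hk with rfl | hk
        · exact hW'j x hx
        · exact hz x (hW'W hx) k hk)
      (fun i k hk => by
        by_cases hkj : k = j
        · subst hkj
          rw [Matrix.updateCol_self]
          simpa [hvn] using hs v hvW i
        · rw [Matrix.updateCol_ne hkj]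
          exact h1 i k (by simpa [hkj] using hk))
      (fun i k hk => by
        have hkj : k ≠ j := by rintro rfl; simp at hk
        rw [Matrix.updateCol_ne hkj]
        exact h2 i k (fun hc => hk (Finset.mem_insert_of_mem hc)))
    rw [det_updateCol_mulVec, hvj, mul_one, Finset.card_insert_of_notMem hjJ] at this
    rwa [show J.card + (m + 1) = J.card + 1 + m by ring]

lemma NN.det_le {n : ℕ} {M : Matrix (Fin n) (Fin n) ℂ} {σ D : ℝ} {m : ℕ}
    (h : NN M Finset.univ σ m) (hD : ∀ i j, ‖M i j‖ ≤ D) :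
    ‖M.det‖ ≤ n.factorial * (σ ^ m * D ^ (n - m)) := by
  obtain ⟨W, hW, h⟩ := h
  simpa using NN_det_aux σ D m M ∅ W hW (fun v hv i => h v hv i (Finset.mem_univ i))
    (by simp) (by simp) (by simpa using hD)

/-- a right approximate null vector gives a left one (invertible case). -/
lemma exists_left_of_NN {n : ℕ} {M : Matrix (Fin n) (Fin n) ℂ} {σ : ℝ} (hσ : 0 ≤ σ)
    (hdet : M.det ≠ 0) (h : NN M Finset.univ σ 1) :
    ∃ u : Fin n → ℂ, ‖u‖ = 1 ∧ ∀ j, ‖(M.transpose.mulVec u) j‖ ≤ n * σ := by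
  obtain ⟨W, hW, h⟩ := h
  have hne : W ≠ ⊥ := by
    rintro rfl
    simp at hW
  obtain ⟨v, hv, hv0⟩ := Submodule.exists_mem_ne_zero_of_ne_bot hne
  have hn : Nonempty (Fin n) := by
    by_contra hc
    rw [not_nonempty_iff] at hc
    exact hv0 (Subsingleton.elim _ _)
  obtain ⟨j, hj⟩ : ∃ j, ‖v j‖ = ‖v‖ := by
    obtain ⟨j, hj⟩ := Finite.exists_max (fun j => ‖v j‖)
    exact ⟨j, le_antisymm (norm_le_pi_norm v j) ((pi_norm_le_iff_of_nonneg (norm_nonneg _)).2 hj)⟩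
  have hvp : 0 < ‖v‖ := norm_pos_iff.2 hv0
  set x : Fin n → ℂ := M⁻¹ j with hx
  have h1 : v j = ∑ k, x k * (M.mulVec v) k := by
    have : (M⁻¹).mulVec (M.mulVec v) = v := by
      rw [Matrix.mulVec_mulVec, Matrix.nonsing_inv_mul _ (isUnit_iff_ne_zero.2 hdet),
        Matrix.one_mulVec]
    conv_lhs => rw [← this]
    rfl
  have h2 : 1 ≤ n * ‖x‖ * σ := by
    have : ‖v‖ ≤ n * ‖x‖ * σ * ‖v‖ := by
      conv_lhs => rw [← hj, h1]
      refine (norm_sum_le _ _).trans ?_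
      calc _ ≤ ∑ _k : Fin n, ‖x‖ * (σ * ‖v‖) := by
            refine Finset.sum_le_sum fun k _ => ?_
            rw [norm_mul]
            exact mul_le_mul (norm_le_pi_norm x k) (h v hv k (Finset.mem_univ k)) (norm_nonneg _)
              (norm_nonneg _)
        _ = _ := by simp; ring
    by_contra hc
    push Not at hc
    nlinarith
  have hxp : 0 < ‖x‖ := by
    rcases (norm_nonneg x).eq_or_lt with hc | hc
    · rw [← hc] at h2; norm_num at h2
    · exact hc
  have hMx : M.transpose.mulVec x = Pi.single j 1 := by
    rw [Matrix.mulVec_transpose]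
    have : (M⁻¹ * M) j = (1 : Matrix (Fin n) (Fin n) ℂ) j := by
      rw [Matrix.nonsing_inv_mul _ (isUnit_iff_ne_zero.2 hdet)]
    have h3 : Matrix.vecMul x M = (M⁻¹ * M) j := by
      ext k; simp [Matrix.vecMul, Matrix.mul_apply, dotProduct, hx]
    rw [h3, this]
    ext k
    simp [Matrix.one_apply, Pi.single_apply, eq_comm]
  refine ⟨((‖x‖⁻¹ : ℝ) : ℂ) • x, ?_, ?_⟩
  · rw [norm_smul, Complex.norm_real, norm_inv, norm_norm, inv_mul_cancel₀ hxp.ne']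
  · intro k
    rw [Matrix.mulVec_smul, hMx]
    have h4 : ‖(Pi.single j (1 : ℂ) : Fin n → ℂ) k‖ ≤ 1 := by
      rw [Pi.single_apply]; split_ifs <;> simp
    calc _ = ‖x‖⁻¹ * ‖(Pi.single j (1 : ℂ) : Fin n → ℂ) k‖ := by
          simp [Pi.smul_apply]
      _ ≤ ‖x‖⁻¹ * (n * ‖x‖ * σ) := by gcongr; exact h4.trans h2
      _ = _ := by field_simp

end PartPA

section PartPB

/-- rows meeting `S` exactly once (diagonal included). -/
def uniqRows {n : ℕ} (a : Fin n → Fin n → Bool) (S : Finset (Fin n)) : Finset (Fin n) :=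
  Finset.univ.filter fun i => (S.filter fun j => a i j = true ∨ i = j).card = 1

def ExpP {n : ℕ} (a : Fin n → Fin n → Bool) (m0 K : ℕ) (δ : ℝ) : Prop :=
  ∀ S : Finset (Fin n), m0 ≤ S.card → (S.card : ℝ) < δ * n → S.card ≤ K * (uniqRows a S).card

def ColDeg {n : ℕ} (a : Fin n → Fin n → Bool) (Δ : ℕ) : Prop :=
  ∀ j, (Finset.univ.filter fun i => a i j = true).card ≤ Δ

def DiophZ (z : ℂ) (m0 : ℕ) (Q : ℝ) : Prop :=
  ∀ m ≤ m0, ∀ B : Fin m → Fin m → Bool, ∀ v : Fin m → ℂ, ‖v‖ ≤ Q * ‖(smat B z).mulVec v‖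

lemma DiophZ.block {n m0 : ℕ} {z : ℂ} {Q : ℝ} (h : DiophZ z m0 Q) (hQ : 0 ≤ Q)
    (a : Fin n → Fin n → Bool)
    (S : Finset (Fin n)) (hS : S.card ≤ m0) (v : Fin n → ℂ) (t : ℝ) (ht : 0 ≤ t)
    (hv : ∀ i ∈ S, ‖∑ j ∈ S, smat a z i j * v j‖ ≤ t) : ∀ j ∈ S, ‖v j‖ ≤ Q * t := by
  intro j hj
  let e : Fin S.card ≃ S := S.equivFin.symm
  have h1 := h S.card hS (fun i j => a (e i) (e j)) (fun i => v (e i))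
  have h2 : ‖(smat (fun i j => a (e i) (e j)) z).mulVec (fun i => v (e i))‖ ≤ t := by
    rw [pi_norm_le_iff_of_nonneg ht]
    intro i
    have h3 : ∀ k, smat (fun i j => a (e i) (e j)) z i k = smat a z (e i) (e k) := by
      intro k
      have : ((e i : Fin n) = e k) ↔ i = k := by
        rw [Subtype.coe_inj, e.apply_eq_iff_eq]
      simp [smat_apply, this]
    have h4 : (smat (fun i j => a (e i) (e j)) z).mulVec (fun i => v (e i)) i =
        ∑ j ∈ S, smat a z (e i) j * v j := by
      rw [Matrix.mulVec, dotProduct, ← Finset.sum_coe_sort S (fun j => smat a z (e i) j * v j),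
        ← e.sum_comp]
      simp [h3]
    rw [h4]
    exact hv _ (e i).2
  have h5 := norm_le_pi_norm (fun i => v (e i)) (e.symm ⟨j, hj⟩)
  simp only [Equiv.apply_symm_apply] at h5
  exact h5.trans (h1.trans (by gcongr))

/-- localisation alternative -/
def Loc {n : ℕ} (g : Fin n → ℂ) (E : Finset (Fin n)) (m0 : ℕ) (γ β : ℝ) : Prop :=
  ∃ i ∈ E, ∃ S : Finset (Fin n), S.card ≤ m0 ∧ i ∈ S ∧ γ ≤ ‖g i‖ ∧ ∀ j ∉ S, ‖g j‖ < β

/-- superlevel sets -/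
noncomputable def lev {n : ℕ} (g : Fin n → ℂ) (θ : ℝ) : Finset (Fin n) :=
  Finset.univ.filter fun j => θ ≤ ‖g j‖

lemma mem_lev {n : ℕ} {g : Fin n → ℂ} {θ : ℝ} {j : Fin n} : j ∈ lev g θ ↔ θ ≤ ‖g j‖ := by
  simp [lev]

lemma lev_mono {n : ℕ} (g : Fin n → ℂ) {θ θ' : ℝ} (h : θ' ≤ θ) : lev g θ ⊆ lev g θ' := by
  intro j hj
  rw [mem_lev] at *
  linarith

lemma exists_coord_norm_eq {n : ℕ} (g : Fin n → ℂ) (hg : ‖g‖ = 1) : ∃ j, ‖g j‖ = 1 := by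
  have hn : Nonempty (Fin n) := by
    by_contra hc
    rw [not_nonempty_iff] at hc
    rw [Subsingleton.elim g 0] at hg
    simp at hg
  obtain ⟨j, hj⟩ := Finite.exists_max (fun j => ‖g j‖)
  refine ⟨j, ?_⟩
  rw [← hg]
  exact le_antisymm (norm_le_pi_norm g j) ((pi_norm_le_iff_of_nonneg (norm_nonneg _)).2 hj)

lemma deloc_phase1 {n m0 : ℕ} {z : ℂ} {Q : ℝ} (h : DiophZ z m0 Q) (hQ : 1 ≤ Q)
    (a : Fin n → Fin n → Bool) (g : Fin n → ℂ) (hg : ‖g‖ = 1) (E : Finset (Fin n))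
    (hE : E.card ≤ 1) (η β : ℝ) (hη0 : 0 ≤ η) (hβ0 : 0 < β) (hβ : β ≤ 1 / 2)
    (hη : ∀ i ∉ E, ‖((smat a z).mulVec g) i‖ ≤ η)
    (hsmall : Q * (η + n * (1 + ‖z‖) * β) ≤ 1 / 4) :
    m0 + 1 ≤ (lev g (β ^ m0)).card ∨ Loc g E m0 (1 / (4 * Q * (1 + ‖z‖))) β := by
  by_contra hcon
  push Not at hcon
  obtain ⟨hc1, hc2⟩ := hcon
  -- find a gap
  obtain ⟨k, hk, hgap⟩ : ∃ k < m0, lev g (β ^ k) = lev g (β ^ (k + 1)) := by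
    by_contra hno
    push Not at hno
    have : ∀ k ≤ m0, k + 1 ≤ (lev g (β ^ k)).card := by
      intro k
      induction k with
      | zero =>
        intro _
        obtain ⟨j, hj⟩ := exists_coord_norm_eq g hg
        have : j ∈ lev g (β ^ 0) := by rw [mem_lev, pow_zero, hj]
        exact Finset.card_pos.2 ⟨j, this⟩
      | succ k ih =>
        intro hk
        have h1 := ih (by omega)
        have h2 : lev g (β ^ k) ⊂ lev g (β ^ (k + 1)) :=
          (lev_mono g (pow_le_pow_of_le_one hβ0.le (by linarith) (by omega))).ssubset_of_ne
            (hno k (by omega))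
        have := Finset.card_lt_card h2
        omega
    have := this m0 le_rfl
    omega
  set S := lev g (β ^ k) with hS
  have hSc : S.card ≤ m0 := by
    have : S.card ≤ (lev g (β ^ m0)).card := Finset.card_le_card
      (lev_mono g (pow_le_pow_of_le_one hβ0.le (by linarith) (by omega)))
    omega
  have hoff : ∀ j ∉ S, ‖g j‖ < β := by
    intro j hj
    rw [hgap, mem_lev, not_le] at hj
    refine hj.trans_le ?_
    calc β ^ (k + 1) ≤ β ^ 1 := pow_le_pow_of_le_one hβ0.le (by linarith) (by omega)
      _ = β := pow_one β
  have hz0 : 0 ≤ ‖z‖ := norm_nonneg z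
  set γ := 1 / (4 * Q * (1 + ‖z‖)) with hγ
  have hγ0 : 0 < γ := by positivity
  have hin : ∀ i ∈ E ∩ S, ‖g i‖ < γ := by
    intro i hi
    rw [Finset.mem_inter] at hi
    by_contra hc
    push Not at hc
    exact hc2 ⟨i, hi.1, S, hSc, hi.2, hc, hoff⟩
  have hblock := h.block (by linarith) a (S \ E) ((Finset.card_le_card Finset.sdiff_subset).trans hSc) g
    (η + n * (1 + ‖z‖) * β + (1 + ‖z‖) * γ) (by positivity) (by
      intro i hi
      have hiE : i ∉ E := (Finset.mem_sdiff.1 hi).2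
      have h1 : ∑ j ∈ S \ E, smat a z i j * g j = ((smat a z).mulVec g) i -
          (∑ j ∈ Sᶜ, smat a z i j * g j + ∑ j ∈ E ∩ S, smat a z i j * g j) := by
        have h2 : ((smat a z).mulVec g) i = ∑ j ∈ S, smat a z i j * g j +
          ∑ j ∈ Sᶜ, smat a z i j * g j := by
          rw [Finset.sum_add_sum_compl]; rfl
        have h3 : ∑ j ∈ S, smat a z i j * g j = ∑ j ∈ S \ E, smat a z i j * g j +
            ∑ j ∈ E ∩ S, smat a z i j * g j := by
          rw [Finset.inter_comm, add_comm, Finset.sum_inter_add_sum_sdiff]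
        rw [h2, h3]; ring
      rw [h1]
      refine (norm_sub_le _ _).trans ?_
      rw [add_assoc]
      refine add_le_add (hη i hiE) ((norm_add_le _ _).trans (add_le_add ?_ ?_))
      · refine (norm_sum_le _ _).trans ?_
        calc _ ≤ ∑ _j ∈ Sᶜ, (1 + ‖z‖) * β := by
              refine Finset.sum_le_sum fun j hj => ?_
              rw [norm_mul]
              exact mul_le_mul (smat_norm_le a z i j) (hoff j (by simpa using hj)).le
                (norm_nonneg _) (by positivity)
          _ = (Sᶜ.card : ℝ) * ((1 + ‖z‖) * β) := by simp
          _ ≤ n * ((1 + ‖z‖) * β) := by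
              gcongr
              simpa using Finset.card_le_univ Sᶜ
          _ = _ := by ring
      · refine (norm_sum_le _ _).trans ?_
        calc _ ≤ ∑ _j ∈ E ∩ S, (1 + ‖z‖) * γ := by
              refine Finset.sum_le_sum fun j hj => ?_
              rw [norm_mul]
              exact mul_le_mul (smat_norm_le a z i j) (hin j hj).le
                (norm_nonneg _) (by positivity)
          _ = ((E ∩ S).card : ℝ) * ((1 + ‖z‖) * γ) := by simp
          _ ≤ 1 * ((1 + ‖z‖) * γ) := by
              gcongr
              exact_mod_cast (Finset.card_le_card Finset.inter_subset_left).trans hE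
          _ = _ := one_mul _)
  have hγQ : Q * ((1 + ‖z‖) * γ) = 1 / 4 := by rw [hγ]; field_simp
  have hγ4 : γ ≤ 1 / 4 := by
    rw [← hγQ]
    have : 1 ≤ Q * (1 + ‖z‖) := by nlinarith
    nlinarith
  obtain ⟨j, hj⟩ := exists_coord_norm_eq g hg
  by_cases hjS : j ∈ S
  · by_cases hjE : j ∈ E
    · have := hin j (Finset.mem_inter.2 ⟨hjE, hjS⟩)
      linarith
    · have := hblock j (Finset.mem_sdiff.2 ⟨hjS, hjE⟩)
      rw [mul_add, hγQ] at this
      linarith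
  · have := hoff j hjS
    linarith

/-- one growth step -/
lemma deloc_step {n m0 K Δ : ℕ} {z : ℂ} {δ c : ℝ} (hc : 0 < c) (hc0 : c ≤ ‖z‖) (hc1 : c ≤ ‖1 - z‖)
    (hc2 : c ≤ 1)
    (a : Fin n → Fin n → Bool) (hexp : ExpP a m0 K δ) (hdeg : ColDeg a Δ) (hm0 : 2 * K ≤ m0)
    (g : Fin n → ℂ) (E : Finset (Fin n))
    (hE : E.card ≤ 1) (η θ : ℝ) (hθ : 0 < θ)
    (hη : ∀ i ∉ E, ‖((smat a z).mulVec g) i‖ ≤ η) (hηθ : η ≤ c * θ / 2)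
    (hS0 : m0 ≤ (lev g θ).card) (hS1 : ((lev g θ).card : ℝ) < δ * n) :
    (lev g θ).card * (2 * K * (Δ + 1) + 1) ≤
      2 * K * (Δ + 1) * (lev g (θ * (c / (2 * (n + 1) * (1 + ‖z‖))))).card := by
  set S := lev g θ with hS
  set θ' := θ * (c / (2 * (n + 1) * (1 + ‖z‖))) with hθ'
  have hz0 : 0 ≤ ‖z‖ := norm_nonneg z
  have hfac : c / (2 * (n + 1) * (1 + ‖z‖)) ≤ 1 := by
    rw [div_le_one (by positivity)]
    have : (0:ℝ) ≤ n := by positivity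
    nlinarith [mul_nonneg this hz0]
  have hθ'0 : 0 < θ' := by positivity
  have hSS : S ⊆ lev g θ' := lev_mono g (by rw [hθ']; nlinarith)
  have hex : ∀ i ∈ uniqRows a S \ E, ∃ j ∈ lev g θ' \ S, a i j = true ∨ i = j := by
    intro i hi
    rw [Finset.mem_sdiff] at hi
    obtain ⟨hiu, hiE⟩ := hi
    rw [uniqRows, Finset.mem_filter, Finset.card_eq_one] at hiu
    obtain ⟨-, j0, hj0⟩ := hiu
    have hj0m : j0 ∈ S.filter fun j => a i j = true ∨ i = j := by rw [hj0]; simp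
    rw [Finset.mem_filter] at hj0m
    by_contra hno
    push Not at hno
    have hbig : c * θ ≤ ‖smat a z i j0 * g j0‖ := by
      rw [norm_mul]
      refine mul_le_mul ?_ (mem_lev.1 hj0m.1) hθ.le (norm_nonneg _)
      rw [smat_apply]
      by_cases h1 : a i j0 = true <;> by_cases h2 : i = j0
      · subst h2; simpa [h1] using hc1
      · simpa [h1, h2] using hc2
      · subst h2; simpa [h1] using hc0
      · exact absurd hj0m.2 (by tauto)
    have hsum : ((smat a z).mulVec g) i = smat a z i j0 * g j0 + ∑ j ∈ Sᶜ, smat a z i j * g j := by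
      have h2 : ((smat a z).mulVec g) i = ∑ j ∈ S, smat a z i j * g j +
          ∑ j ∈ Sᶜ, smat a z i j * g j := by
          rw [Finset.sum_add_sum_compl]; rfl
      rw [h2]
      congr 1
      rw [← Finset.add_sum_erase _ _ hj0m.1, Finset.sum_eq_zero, add_zero]
      intro j hj
      have : ¬ (a i j = true ∨ i = j) := by
        intro hc
        have : j ∈ S.filter fun j => a i j = true ∨ i = j :=
          Finset.mem_filter.2 ⟨Finset.mem_of_mem_erase hj, hc⟩
        rw [hj0, Finset.mem_singleton] at this
        exact (Finset.ne_of_mem_erase hj) this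
      push Not at this
      rw [smat_apply]
      simp [this.1, this.2]
    have hrest : ‖∑ j ∈ Sᶜ, smat a z i j * g j‖ ≤ n * ((1 + ‖z‖) * θ') := by
      refine (norm_sum_le _ _).trans ?_
      calc _ ≤ ∑ _j ∈ Sᶜ, (1 + ‖z‖) * θ' := by
            refine Finset.sum_le_sum fun j hj => ?_
            rw [norm_mul]
            by_cases hjl : j ∈ lev g θ'
            · have := hno j (Finset.mem_sdiff.2 ⟨hjl, by simpa using hj⟩)
              rw [smat_apply]
              simp only [this.1, this.2]
              simp
              positivity
            · rw [mem_lev, not_le] at hjl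
              exact mul_le_mul (smat_norm_le a z i j) hjl.le (norm_nonneg _) (by positivity)
        _ = (Sᶜ.card : ℝ) * ((1 + ‖z‖) * θ') := by simp
        _ ≤ _ := by
            gcongr
            simpa using Finset.card_le_univ Sᶜ
    have h3 : c * θ ≤ η + n * ((1 + ‖z‖) * θ') := by
      calc _ ≤ _ := hbig
        _ = ‖((smat a z).mulVec g) i - ∑ j ∈ Sᶜ, smat a z i j * g j‖ := by rw [hsum]; simp
        _ ≤ _ := (norm_sub_le _ _).trans (add_le_add (hη i hiE) hrest)
    have h4 : (n + 1) * ((1 + ‖z‖) * θ') = c * θ / 2 := by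
      rw [hθ']; field_simp
    have h5 : 0 < (1 + ‖z‖) * θ' := by positivity
    nlinarith
  choose! f hf1 hf2 using hex
  have hcard : (uniqRows a S \ E).card ≤ (Δ + 1) * (lev g θ' \ S).card := by
    refine Finset.card_le_mul_card_image_of_maps_to (f := f) hf1 (Δ + 1) ?_
    intro j _
    calc _ ≤ (insert j (Finset.univ.filter fun i => a i j = true)).card := by
          refine Finset.card_le_card ?_
          intro i hi
          rw [Finset.mem_filter] at hi
          have := hf2 i hi.1
          rw [hi.2] at this
          rw [Finset.mem_insert, Finset.mem_filter]
          rcases this with h | h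
          · right; exact ⟨Finset.mem_univ _, h⟩
          · left; exact h
      _ ≤ _ := (Finset.card_insert_le _ _).trans (by have := hdeg j; omega)
  have h1 := hexp S hS0 hS1
  have h2 : (uniqRows a S).card ≤ (uniqRows a S \ E).card + 1 := by
    have := Finset.le_card_sdiff E (uniqRows a S)
    omega
  have h3 : (lev g θ' \ S).card = (lev g θ').card - S.card := Finset.card_sdiff_of_subset hSS
  have h4 := Finset.card_le_card hSS
  have h5 : (lev g θ').card = (lev g θ' \ S).card + S.card := by omega
  rw [h5]
  have h6 : K * (uniqRows a S).card ≤ K * ((Δ + 1) * (lev g θ' \ S).card + 1) :=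
    Nat.mul_le_mul_left K (h2.trans (by omega))
  nlinarith

lemma deloc_phase2 {n m0 K Δ : ℕ} {z : ℂ} {δ c : ℝ} (hc : 0 < c) (hc0 : c ≤ ‖z‖) (hc1 : c ≤ ‖1 - z‖)
    (hc2 : c ≤ 1)
    (a : Fin n → Fin n → Bool) (hexp : ExpP a m0 K δ) (hdeg : ColDeg a Δ) (hm0 : 2 * K ≤ m0)
    (hK : 1 ≤ K) (hδ : δ ≤ 1)
    (g : Fin n → ℂ) (E : Finset (Fin n))
    (hE : E.card ≤ 1) (η θ : ℝ) (hθ : 0 < θ) (t : ℕ)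
    (hη : ∀ i ∉ E, ‖((smat a z).mulVec g) i‖ ≤ η)
    (hηθ : η ≤ c / 2 * (θ * (c / (2 * (n + 1) * (1 + ‖z‖))) ^ t))
    (hS0 : m0 ≤ (lev g θ).card)
    (ht : (n : ℝ) < (1 + 1 / ((2 * K * (Δ + 1) : ℕ) : ℝ)) ^ t) :
    δ * n ≤ (lev g (θ * (c / (2 * (n + 1) * (1 + ‖z‖))) ^ t)).card := by
  set q := c / (2 * (n + 1) * (1 + ‖z‖)) with hq
  have hz0 : 0 ≤ ‖z‖ := norm_nonneg z
  have hq0 : 0 < q := by positivity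
  have hq1 : q ≤ 1 := by
    rw [hq, div_le_one (by positivity)]
    have : (0:ℝ) ≤ n := by positivity
    nlinarith [mul_nonneg this hz0]
  set x : ℕ := 2 * K * (Δ + 1) with hx
  have hx0 : 0 < x := by positivity
  have hind : ∀ s ≤ t, δ * n ≤ (lev g (θ * q ^ s)).card ∨
      (1 + 1 / (x : ℝ)) ^ s ≤ (lev g (θ * q ^ s)).card := by
    intro s
    induction s with
    | zero =>
      intro _
      right
      simp only [pow_zero, mul_one]
      have : 1 ≤ (lev g θ).card := by omega
      exact_mod_cast this
    | succ s ih =>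
      intro hs
      have hmono : ∀ s', lev g (θ) ⊆ lev g (θ * q ^ s') := fun s' => lev_mono g (by
        have := pow_le_one₀ hq0.le hq1 (n := s')
        nlinarith)
      by_cases hd : δ * n ≤ (lev g (θ * q ^ s)).card
      · left
        refine hd.trans ?_
        have : lev g (θ * q ^ s) ⊆ lev g (θ * q ^ (s + 1)) := lev_mono g (by
          rw [pow_succ, ← mul_assoc]
          have : 0 < θ * q ^ s := by positivity
          nlinarith)
        exact_mod_cast Finset.card_le_card this
      · right
        have h1 := (ih (by omega)).resolve_left hd
        push Not at hd
        have h2 := deloc_step hc hc0 hc1 hc2 a hexp hdeg hm0 g E hE η (θ * q ^ s) (by positivity) hη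
          (by
            refine hηθ.trans ?_
            have : q ^ t ≤ q ^ s := pow_le_pow_of_le_one hq0.le hq1 (by omega)
            have : θ * q ^ t ≤ θ * q ^ s := by gcongr
            nlinarith)
          (hS0.trans (Finset.card_le_card (hmono s))) hd
        rw [← hq, ← hx, mul_assoc θ, ← pow_succ] at h2
        have h3 : ((lev g (θ * q ^ s)).card : ℝ) * (x + 1) ≤ x * (lev g (θ * q ^ (s + 1))).card := by
          exact_mod_cast h2
        have hxr : (0 : ℝ) < x := by exact_mod_cast hx0
        have h4 : (1 + 1 / (x : ℝ)) * (lev g (θ * q ^ s)).card ≤ (lev g (θ * q ^ (s + 1))).card := by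
          have : x * ((1 + 1 / (x : ℝ)) * (lev g (θ * q ^ s)).card) ≤
              x * (lev g (θ * q ^ (s + 1))).card := by
            calc _ = ((lev g (θ * q ^ s)).card : ℝ) * (x + 1) := by field_simp
              _ ≤ _ := h3
          exact le_of_mul_le_mul_left this hxr
        rw [pow_succ, mul_comm]
        refine le_trans ?_ h4
        gcongr
  rcases hind t le_rfl with h | h
  · exact h
  · have h1 : (n : ℝ) < (lev g (θ * q ^ t)).card := ht.trans_le h
    have h2 : (lev g (θ * q ^ t)).card ≤ n := by simpa using Finset.card_le_univ (lev g (θ * q ^ t))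
    have h3 : ((lev g (θ * q ^ t)).card : ℝ) ≤ n := by exact_mod_cast h2
    linarith

/-- Delocalization. -/
lemma deloc {n m0 K Δ : ℕ} {z : ℂ} {δ c Q β κ : ℝ} (hc : 0 < c) (hc0 : c ≤ ‖z‖)
    (hc1 : c ≤ ‖1 - z‖) (hc2 : c ≤ 1)
    (hD : DiophZ z m0 Q) (hQ : 1 ≤ Q)
    (a : Fin n → Fin n → Bool) (hexp : ExpP a m0 K δ) (hdeg : ColDeg a Δ) (hm0 : 2 * K ≤ m0)
    (hK : 1 ≤ K) (hδ : δ ≤ 1) (t : ℕ)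
    (ht : (n : ℝ) < (1 + 1 / ((2 * K * (Δ + 1) : ℕ) : ℝ)) ^ t)
    (hβ0 : 0 < β) (hβ : β ≤ 1 / 2)
    (hκ : κ ≤ β ^ m0 * (c / (2 * (n + 1) * (1 + ‖z‖))) ^ t)
    (g : Fin n → ℂ) (hg : ‖g‖ = 1) (E : Finset (Fin n))
    (hE : E.card ≤ 1) (η : ℝ) (hη0 : 0 ≤ η)
    (hη : ∀ i ∉ E, ‖((smat a z).mulVec g) i‖ ≤ η)
    (hηκ : η ≤ c / 2 * κ)
    (hsmall : Q * (η + n * (1 + ‖z‖) * β) ≤ 1 / 4) :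
    δ * n ≤ (lev g κ).card ∨ Loc g E m0 (1 / (4 * Q * (1 + ‖z‖))) β := by
  rcases deloc_phase1 hD hQ a g hg E hE η β hη0 hβ0 hβ hη hsmall with h | h
  · left
    have := deloc_phase2 hc hc0 hc1 hc2 a hexp hdeg hm0 hK hδ g E hE η (β ^ m0) (by positivity) t hη
      (hηκ.trans (by gcongr)) (by omega) ht
    refine this.trans ?_
    exact_mod_cast Finset.card_le_card (lev_mono g hκ)
  · right; exact h

end PartPB

section PartPC

noncomputable def wt (p : ℝ) (b : Bool) : ℝ := if b then p else 1 - p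

noncomputable def rowW {n : ℕ} (p : ℝ) (r : Fin n → Bool) : ℝ := ∏ j, wt p (r j)

noncomputable def matW {n : ℕ} (p : ℝ) (a : Fin n → Fin n → Bool) : ℝ := ∏ i, rowW p (a i)

lemma wt_pos {p : ℝ} (h0 : 0 < p) (h1 : p < 1) (b : Bool) : 0 < wt p b := by
  unfold wt; split_ifs <;> linarith

lemma rowW_pos {n : ℕ} {p : ℝ} (h0 : 0 < p) (h1 : p < 1) (r : Fin n → Bool) : 0 < rowW p r :=
  Finset.prod_pos fun _ _ => wt_pos h0 h1 _

lemma matW_pos {n : ℕ} {p : ℝ} (h0 : 0 < p) (h1 : p < 1) (a : Fin n → Fin n → Bool) :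
    0 < matW p a :=
  Finset.prod_pos fun _ _ => rowW_pos h0 h1 _

lemma sum_row_prod {n : ℕ} (p : ℝ) (f : Fin n → Bool → ℝ) :
    ∑ r : Fin n → Bool, rowW p r * ∏ j, f j (r j) = ∏ j, (p * f j true + (1 - p) * f j false) := by
  have := Fintype.prod_sum (fun (j : Fin n) (b : Bool) => wt p b * f j b)
  simp only [Fintype.sum_bool] at this
  simp only [wt, if_true] at this
  simp only [Bool.false_eq_true, if_false] at this
  rw [this]
  refine Finset.sum_congr rfl fun r _ => ?_
  rw [rowW, ← Finset.prod_mul_distrib]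
  rfl

lemma sum_rowW {n : ℕ} (p : ℝ) : ∑ r : Fin n → Bool, rowW p r = 1 := by
  have := sum_row_prod (n := n) p (fun _ _ => 1)
  simpa using this

lemma sum_mat_prod {n : ℕ} (p : ℝ) (f : Fin n → (Fin n → Bool) → ℝ) :
    ∑ a : Fin n → Fin n → Bool, matW p a * ∏ i, f i (a i) = ∏ i, ∑ r, rowW p r * f i r := by
  have := Fintype.prod_sum (fun (i : Fin n) (r : Fin n → Bool) => rowW p r * f i r)
  rw [this]
  refine Finset.sum_congr rfl fun a _ => ?_
  rw [matW, ← Finset.prod_mul_distrib]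

lemma sum_matW {n : ℕ} (p : ℝ) : ∑ a : Fin n → Fin n → Bool, matW p a = 1 := by
  have := sum_mat_prod (n := n) p (fun _ _ => 1)
  simpa [sum_rowW] using this

lemma matW_eq {n : ℕ} (p : ℝ) (a : Fin n → Fin n → Bool) (i : Fin n) :
    matW p a = rowW p (a i) * ∏ k ∈ Finset.univ.erase i, rowW p (a k) :=
  (Finset.mul_prod_erase _ _ (Finset.mem_univ i)).symm

/-- resampling a row with a different law -/
lemma resample {n : ℕ} {p : ℝ} (h0 : 0 < p) (h1 : p < 1) (i : Fin n) (w : (Fin n → Bool) → ℝ)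
    (F : (Fin n → Fin n → Bool) → ℝ) :
    ∑ a, matW p a * ∑ r, w r * F (Function.update a i r) =
      ∑ a, matW p a * ((w (a i) / rowW p (a i)) * F a) := by
  have key : ∑ x : (Fin n → Fin n → Bool) × (Fin n → Bool),
      matW p x.1 * (w x.2 * F (Function.update x.1 i x.2)) =
      ∑ x : (Fin n → Fin n → Bool) × (Fin n → Bool),
      rowW p x.2 * (matW p x.1 * ((w (x.1 i) / rowW p (x.1 i)) * F x.1)) := by
    refine Finset.sum_nbij' (fun x => (Function.update x.1 i x.2, x.1 i))
      (fun x => (Function.update x.1 i x.2, x.1 i)) (by simp) (by simp) (by simp) (by simp) ?_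
    rintro ⟨a, r⟩ -
    simp only [Function.update_self]
    rw [matW_eq p a i, matW_eq p (Function.update a i r) i]
    simp only [Function.update_self]
    have : ∏ k ∈ Finset.univ.erase i, rowW p (Function.update a i r k) =
        ∏ k ∈ Finset.univ.erase i, rowW p (a k) :=
      Finset.prod_congr rfl fun k hk => by rw [Function.update_of_ne (Finset.ne_of_mem_erase hk)]
    rw [this]
    have := (rowW_pos h0 h1 r).ne'
    field_simp
  rw [Fintype.sum_prod_type, Fintype.sum_prod_type_right] at key
  simp only [← Finset.mul_sum] at key
  rw [key, ← Finset.sum_mul, sum_rowW, one_mul]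

/-- second moment of the density -/
noncomputable def VV (n : ℕ) (p P : ℝ) : ℝ := ∑ r : Fin n → Bool, rowW P r * (rowW P r / rowW p r)

lemma VV_eq {n : ℕ} {p : ℝ} (h0 : 0 < p) (h1 : p < 1) (P : ℝ) :
    VV n p P = (1 + (P - p) ^ 2 / (p * (1 - p))) ^ n := by
  have h : ∀ r : Fin n → Bool, rowW P r * (rowW P r / rowW p r) =
      rowW P r * ∏ j, (fun (_ : Fin n) b => wt P b / wt p b) j (r j) := by
    intro r
    simp [rowW, Finset.prod_div_distrib]
  rw [VV, Finset.sum_congr rfl (fun r _ => h r),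
    sum_row_prod P (fun (_ : Fin n) b => wt P b / wt p b)]
  simp only [wt, if_true, Bool.false_eq_true, if_false, Finset.prod_const, Finset.card_univ,
    Fintype.card_fin]
  congr 1
  have : 1 - p ≠ 0 := by linarith
  field_simp
  ring

lemma planted_compare {n : ℕ} (hn : 0 < n) {p P : ℝ} (h0 : 0 < p) (h1 : p < 1)
    (F : (Fin n → Fin n → Bool) → ℝ) (y s : ℝ) (hs : 0 < s) (hF0 : ∀ a, 0 ≤ F a)
    (hFy : ∀ a, F a ≤ y) :
    ∑ a, matW p a * F a ≤
      ∑ a, matW p a * ((1 / (n : ℝ)) * ∑ i, ∑ r, rowW P r * F (Function.update a i r))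
        + y * (s + VV n p P / (n * s)) := by
  have hnr : (0 : ℝ) < n := by exact_mod_cast hn
  set φ : (Fin n → Bool) → ℝ := fun r => rowW P r / rowW p r with hφ
  set D : (Fin n → Fin n → Bool) → ℝ := fun a => (1 / (n : ℝ)) * ∑ i, φ (a i) with hD
  have hswap : ∀ G : (Fin n → Fin n → Bool) → ℝ,
      ∑ a, matW p a * ((1 / (n : ℝ)) * ∑ i, ∑ r, rowW P r * G (Function.update a i r)) =
      ∑ a, matW p a * (D a * G a) := by
    intro G
    calc _ = (1 / (n : ℝ)) * ∑ i, ∑ a, matW p a * ∑ r, rowW P r * G (Function.update a i r) := by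
          rw [Finset.sum_comm, Finset.mul_sum]
          refine Finset.sum_congr rfl fun a _ => ?_
          rw [← Finset.mul_sum]; ring
      _ = (1 / (n : ℝ)) * ∑ i, ∑ a, matW p a * (φ (a i) * G a) := by
          congr 1
          refine Finset.sum_congr rfl fun i _ => ?_
          rw [resample h0 h1 i (rowW P) G]
      _ = _ := by
          rw [Finset.sum_comm, Finset.mul_sum]
          refine Finset.sum_congr rfl fun a _ => ?_
          rw [← Finset.mul_sum, ← Finset.sum_mul, hD]; ring
  have hφ1 : ∀ k, ∑ a : Fin n → Fin n → Bool, matW p a * φ (a k) = 1 := by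
    intro k
    have := resample h0 h1 k (rowW P) (fun _ => 1)
    simp only [mul_one] at this
    rw [← this]
    simp [sum_rowW, sum_matW]
  have hED : ∑ a, matW p a * D a = 1 := by
    have := hswap (fun _ => 1)
    simp only [mul_one] at this
    rw [← this]
    simp only [sum_rowW, Finset.sum_const, Finset.card_univ, Fintype.card_fin, nsmul_eq_mul]
    rw [← Finset.sum_mul, sum_matW]
    field_simp
  have hVV0 : 0 ≤ VV n p P := by
    rw [VV_eq h0 h1]
    have : 0 < p * (1 - p) := mul_pos h0 (by linarith)
    positivity
  have hED2 : ∑ a, matW p a * (D a * D a) ≤ 1 + VV n p P / n := by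
    rw [← hswap D]
    have hb : ∀ i, ∑ a, matW p a * ∑ r, rowW P r * D (Function.update a i r) ≤
        1 + VV n p P / n := by
      intro i
      have e1 : ∀ (a : Fin n → Fin n → Bool) (r : Fin n → Bool), D (Function.update a i r) =
          (1 / (n : ℝ)) * (φ r + ∑ k ∈ Finset.univ.erase i, φ (a k)) := by
        intro a r
        rw [hD]
        simp only
        rw [← Finset.add_sum_erase _ _ (Finset.mem_univ i), Function.update_self]
        congr 2
        exact Finset.sum_congr rfl fun k hk => by
          rw [Function.update_of_ne (Finset.ne_of_mem_erase hk)]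
      have e2 : ∀ a : Fin n → Fin n → Bool, ∑ r, rowW P r * D (Function.update a i r) =
          (1 / (n : ℝ)) * (VV n p P + ∑ k ∈ Finset.univ.erase i, φ (a k)) := by
        intro a
        simp only [e1]
        calc _ = (1 / (n : ℝ)) * (∑ r, rowW P r * φ r +
              (∑ r : Fin n → Bool, rowW P r) * ∑ k ∈ Finset.univ.erase i, φ (a k)) := by
              rw [Finset.sum_mul, ← Finset.sum_add_distrib, Finset.mul_sum]
              refine Finset.sum_congr rfl fun r _ => ?_
              ring
          _ = _ := by rw [sum_rowW, one_mul]; rfl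
      simp only [e2]
      have e3 : ∑ a : Fin n → Fin n → Bool, matW p a * ((1 / (n : ℝ)) * (VV n p P +
          ∑ k ∈ Finset.univ.erase i, φ (a k))) = (1 / (n : ℝ)) * (VV n p P +
          ∑ k ∈ Finset.univ.erase i, ∑ a : Fin n → Fin n → Bool, matW p a * φ (a k)) := by
        rw [Finset.sum_comm]
        simp only [← Finset.mul_sum]
        calc _ = (1 / (n : ℝ)) * ((∑ a : Fin n → Fin n → Bool, matW p a) * VV n p P +
              ∑ a : Fin n → Fin n → Bool, matW p a * ∑ k ∈ Finset.univ.erase i, φ (a k)) := by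
              rw [Finset.sum_mul, ← Finset.sum_add_distrib, Finset.mul_sum]
              refine Finset.sum_congr rfl fun r _ => ?_
              ring
          _ = _ := by rw [sum_matW, one_mul]
      rw [e3]
      simp only [hφ1]
      rw [Finset.sum_const, Finset.card_erase_of_mem (Finset.mem_univ i), Finset.card_univ,
        Fintype.card_fin, nsmul_eq_mul, mul_one, mul_add]
      have : ((n - 1 : ℕ) : ℝ) ≤ n := by exact_mod_cast Nat.sub_le n 1
      have h2 : (1 / (n : ℝ)) * ((n - 1 : ℕ) : ℝ) ≤ 1 := by
        rw [one_div, inv_mul_le_iff₀ hnr]; linarith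
      have h3 : (1 / (n : ℝ)) * VV n p P = VV n p P / n := by ring
      linarith
    calc _ = (1 / (n : ℝ)) * ∑ i, ∑ a, matW p a * ∑ r, rowW P r * D (Function.update a i r) := by
          rw [Finset.sum_comm, Finset.mul_sum]
          refine Finset.sum_congr rfl fun a _ => ?_
          rw [← Finset.mul_sum]; ring
      _ ≤ (1 / (n : ℝ)) * ∑ _i : Fin n, (1 + VV n p P / n) := by
          gcongr with i; exact hb i
      _ = _ := by
          simp only [Finset.sum_const, Finset.card_univ, Fintype.card_fin, nsmul_eq_mul]
          field_simp
  rw [hswap F]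
  have hy : 0 ≤ y := (hF0 (fun _ _ => true)).trans (hFy _)
  have hpt : ∀ a, matW p a * F a ≤ matW p a * (D a * F a) +
      matW p a * (y * (s + (1 - 2 * D a + D a * D a) / s)) := by
    intro a
    rw [← mul_add]
    refine mul_le_mul_of_nonneg_left ?_ (matW_pos h0 h1 a).le
    have h2 : |1 - D a| ≤ s + (1 - 2 * D a + D a * D a) / s := by
      have h3 : (1 - 2 * D a + D a * D a) = |1 - D a| ^ 2 := by rw [sq_abs]; ring
      rw [h3]
      have h4 := abs_nonneg (1 - D a)
      rw [← sub_le_iff_le_add', le_div_iff₀ hs]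
      nlinarith [sq_nonneg (|1 - D a| - s)]
    have h5 : F a * (1 - D a) ≤ y * |1 - D a| := by
        calc F a * (1 - D a) ≤ F a * |1 - D a| :=
              mul_le_mul_of_nonneg_left (le_abs_self _) (hF0 a)
          _ ≤ _ := mul_le_mul_of_nonneg_right (hFy a) (abs_nonneg _)
    have h6 : y * |1 - D a| ≤ y * (s + (1 - 2 * D a + D a * D a) / s) :=
      mul_le_mul_of_nonneg_left h2 hy
    linarith
  refine (Finset.sum_le_sum fun a _ => hpt a).trans ?_
  rw [Finset.sum_add_distrib]
  gcongr
  have e : ∑ a, matW p a * (y * (s + (1 - 2 * D a + D a * D a) / s)) =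
      y * (s * ∑ a : Fin n → Fin n → Bool, matW p a + (∑ a : Fin n → Fin n → Bool, matW p a - 2 * ∑ a, matW p a * D a +
        ∑ a, matW p a * (D a * D a)) / s) := by
    rw [Finset.mul_sum, Finset.mul_sum, ← Finset.sum_sub_distrib, ← Finset.sum_add_distrib,
      Finset.sum_div, ← Finset.sum_add_distrib, Finset.mul_sum]
    refine Finset.sum_congr rfl fun a _ => ?_
    ring
  rw [e, sum_matW, hED]
  refine mul_le_mul_of_nonneg_left ?_ hy
  rw [mul_one, ← div_div]
  gcongr
  linarith

open Classical in
/-- probability of an event -/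
noncomputable def Pr {n : ℕ} (p : ℝ) (E : (Fin n → Fin n → Bool) → Prop) : ℝ :=
  ∑ a, matW p a * (if E a then 1 else 0)

open Classical in
lemma Pr_nonneg {n : ℕ} {p : ℝ} (h0 : 0 < p) (h1 : p < 1) (E : (Fin n → Fin n → Bool) → Prop) :
    0 ≤ Pr p E :=
  Finset.sum_nonneg fun a _ => mul_nonneg (matW_pos h0 h1 a).le (by split_ifs <;> simp)

open Classical in
lemma Pr_le_sum {n : ℕ} {p : ℝ} (h0 : 0 < p) (h1 : p < 1) {E : (Fin n → Fin n → Bool) → Prop}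
    (f : (Fin n → Fin n → Bool) → ℝ) (hf0 : ∀ a, 0 ≤ f a) (hf : ∀ a, E a → 1 ≤ f a) :
    Pr p E ≤ ∑ a, matW p a * f a := by
  refine Finset.sum_le_sum fun a _ => mul_le_mul_of_nonneg_left ?_ (matW_pos h0 h1 a).le
  split_ifs with h
  · exact hf a h
  · exact hf0 a

open Classical in
lemma Pr_mono {n : ℕ} {p : ℝ} (h0 : 0 < p) (h1 : p < 1) {E E' : (Fin n → Fin n → Bool) → Prop}
    (h : ∀ a, E a → E' a) : Pr p E ≤ Pr p E' := by
  refine Pr_le_sum h0 h1 _ (fun a => by split_ifs <;> simp) (fun a ha => by simp [h a ha])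

open Classical in
lemma Pr_union {n : ℕ} {p : ℝ} (h0 : 0 < p) (h1 : p < 1) {ι : Type*} (s : Finset ι)
    (E : ι → (Fin n → Fin n → Bool) → Prop) :
    Pr p (fun a => ∃ i ∈ s, E i a) ≤ ∑ i ∈ s, Pr p (E i) := by
  refine (Pr_le_sum h0 h1 (fun a => ∑ i ∈ s, if E i a then 1 else 0) ?_ ?_).trans ?_
  · intro a
    exact Finset.sum_nonneg fun i _ => by split_ifs <;> simp
  · rintro a ⟨i, hi, hE⟩
    calc (1 : ℝ) = if E i a then 1 else 0 := by simp [hE]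
      _ ≤ _ := Finset.single_le_sum (f := fun i => if E i a then (1 : ℝ) else 0)
        (fun i _ => by split_ifs <;> simp) hi
  · simp only [Finset.mul_sum]
    rw [Finset.sum_comm]
    rfl

open Classical in
lemma Pr_or {n : ℕ} {p : ℝ} (h0 : 0 < p) (h1 : p < 1)
    (E F : (Fin n → Fin n → Bool) → Prop) :
    Pr p (fun a => E a ∨ F a) ≤ Pr p E + Pr p F := by
  rw [Pr, Pr, Pr, ← Finset.sum_add_distrib]
  refine Finset.sum_le_sum fun a _ => ?_
  have := (matW_pos h0 h1 a).le
  by_cases h : E a <;> by_cases h' : F a <;> simp [h, h', this]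

open Classical in
lemma Pr_transpose {n : ℕ} (p : ℝ) (E : (Fin n → Fin n → Bool) → Prop) :
    Pr p (fun a => E (fun i j => a j i)) = Pr p E := by
  rw [Pr, Pr]
  refine Finset.sum_nbij' (fun a i j => a j i) (fun a i j => a j i) (by simp) (by simp) (by simp)
    (by simp) ?_
  intro a _
  have : matW p a = matW p (fun i j => a j i) := by
    simp only [matW, rowW]
    rw [Finset.prod_comm]
  rw [this]

end PartPC

section PartPD

noncomputable def bpmf (P : ℝ) (m k : ℕ) : ℝ := (m.choose k : ℝ) * P ^ k * (1 - P) ^ (m - k)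

lemma bpmf_nonneg {P : ℝ} (h0 : 0 < P) (h1 : P < 1) (m k : ℕ) : 0 ≤ bpmf P m k := by
  have : 0 < 1 - P := by linarith
  unfold bpmf; positivity

lemma bpmf_step {P : ℝ} (h0 : 0 < P) (h1 : P < 1) (m k : ℕ) (hk : k + 1 ≤ m) :
    bpmf P m (k + 1) = bpmf P m k +
      bpmf P (m + 1) (k + 1) * (((m + 1 : ℕ) * P - (k + 1 : ℕ)) / ((m + 1 : ℕ) * P * (1 - P))) := by
  obtain ⟨e, rfl⟩ := Nat.exists_eq_add_of_le hk
  have q0 : 0 < 1 - P := by linarith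
  have c1 : (((k + 1 + e) + 1 : ℕ) : ℝ) * ((k + 1 + e).choose k : ℝ) =
      ((k + 1 + e + 1).choose (k + 1) : ℝ) * ((k + 1 : ℕ) : ℝ) := by
    exact_mod_cast Nat.add_one_mul_choose_eq (k + 1 + e) k
  have c2 : ((k + 1 + e).choose (k + 1) : ℝ) * (((k + 1 + e) + 1 : ℕ) : ℝ) =
      ((k + 1 + e + 1).choose (k + 1) : ℝ) * ((e + 1 : ℕ) : ℝ) := by
    have := Nat.choose_mul_succ_eq (k + 1 + e) (k + 1)
    rw [show k + 1 + e + 1 - (k + 1) = e + 1 by omega] at this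
    exact_mod_cast this
  unfold bpmf
  rw [show k + 1 + e - (k + 1) = e by omega, show k + 1 + e - k = e + 1 by omega,
    show k + 1 + e + 1 - (k + 1) = e + 1 by omega]
  set N : ℝ := ((k + 1 + e + 1 : ℕ) : ℝ) with hN
  have hNp : 0 < N := by rw [hN]; positivity
  set X := ((k + 1 + e).choose k : ℝ)
  set Y := ((k + 1 + e).choose (k + 1) : ℝ)
  set Z := ((k + 1 + e + 1).choose (k + 1) : ℝ)
  have hX : X = Z * ((k + 1 : ℕ) : ℝ) / N := by field_simp; linarith
  have hY : Y = Z * ((e + 1 : ℕ) : ℝ) / N := by field_simp; linarith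
  rw [hX, hY]
  have hN2 : N = k + 1 + e + 1 := by rw [hN]; push_cast; ring
  push_cast
  field_simp
  rw [hN2]
  ring

lemma bpmf_le_sum {P : ℝ} (h0 : 0 < P) (h1 : P < 1) (m k : ℕ) (hk : k ≤ m) :
    bpmf P m k ≤ ∑ j ∈ Finset.range (k + 1), bpmf P (m + 1) j *
      (|((m + 1 : ℕ) : ℝ) * P - (j : ℕ)| / ((m + 1 : ℕ) * P * (1 - P))) := by
  have q0 : 0 < 1 - P := by linarith
  have hden : 0 < ((m + 1 : ℕ) : ℝ) * P * (1 - P) := by positivity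
  induction k with
  | zero =>
    simp only [zero_add, Finset.range_one, Finset.sum_singleton, bpmf, Nat.choose_zero_right,
      Nat.cast_one, pow_zero, mul_one, one_mul, tsub_zero, Nat.cast_zero, sub_zero]
    rw [abs_of_nonneg (by positivity), pow_succ]
    apply le_of_eq
    field_simp
  | succ k ih =>
    rw [Finset.sum_range_succ, bpmf_step h0 h1 m k hk]
    refine add_le_add (ih (by omega)) ?_
    refine mul_le_mul_of_nonneg_left ?_ (bpmf_nonneg h0 h1 _ _)
    gcongr
    exact le_abs_self _

lemma bpmf_sum (P : ℝ) (m : ℕ) : ∑ j ∈ Finset.range (m + 1), bpmf P m j = 1 := by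
  have h := bernsteinPolynomial.sum ℝ m
  have := congrArg (Polynomial.eval P) h
  simpa [Polynomial.eval_finsetSum, bernsteinPolynomial, bpmf] using this

lemma bpmf_var (P : ℝ) (m : ℕ) :
    ∑ j ∈ Finset.range (m + 1), (m * P - j) ^ 2 * bpmf P m j = m * P * (1 - P) := by
  have h := bernsteinPolynomial.variance (R := ℝ) m
  have := congrArg (Polynomial.eval P) h
  simpa [Polynomial.eval_finsetSum, bernsteinPolynomial, bpmf] using this

lemma bpmf_bound {P : ℝ} (h0 : 0 < P) (h1 : P < 1) (m k : ℕ) (hk : k ≤ m) (s : ℝ) (hs : 0 < s) :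
    bpmf P m k ≤ s / ((m + 1 : ℕ) * P * (1 - P)) + 1 / s := by
  have q0 : 0 < 1 - P := by linarith
  set v : ℝ := ((m + 1 : ℕ) : ℝ) * P * (1 - P) with hv
  have hden : 0 < v := by positivity
  refine (bpmf_le_sum h0 h1 m k hk).trans ?_
  rw [← hv]
  calc _ ≤ ∑ j ∈ Finset.range (m + 1 + 1), bpmf P (m + 1) j *
        (|((m + 1 : ℕ) : ℝ) * P - (j : ℕ)| / v) := by
        refine Finset.sum_le_sum_of_subset_of_nonneg ?_ ?_
        · intro j; simp only [Finset.mem_range]; omega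
        · intro j _ _
          exact mul_nonneg (bpmf_nonneg h0 h1 _ _) (by positivity)
    _ ≤ ∑ j ∈ Finset.range (m + 1 + 1), (bpmf P (m + 1) j * (s / v) +
        (((m + 1 : ℕ) : ℝ) * P - j) ^ 2 * bpmf P (m + 1) j * (1 / (s * v))) := by
        refine Finset.sum_le_sum fun j _ => ?_
        have hb := bpmf_nonneg h0 h1 (m + 1) j
        have : |((m + 1 : ℕ) : ℝ) * P - (j : ℕ)| / v ≤ s / v +
            (((m + 1 : ℕ) : ℝ) * P - j) ^ 2 * (1 / (s * v)) := by
          rw [← sq_abs (((m + 1 : ℕ) : ℝ) * P - j)]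
          set y := |((m + 1 : ℕ) : ℝ) * P - (j : ℕ)|
          have hy : 0 ≤ y := abs_nonneg _
          rw [div_add' _ _ _ hden.ne', div_le_div_iff_of_pos_right hden]
          have : y ^ 2 * (1 / (s * v)) * v = y ^ 2 / s := by field_simp
          rw [this, ← sub_le_iff_le_add', le_div_iff₀ hs]
          nlinarith [sq_nonneg (y - s)]
        calc _ ≤ bpmf P (m + 1) j * (s / v + (((m + 1 : ℕ) : ℝ) * P - j) ^ 2 * (1 / (s * v))) := by
              gcongr
          _ = _ := by ring
    _ = s / v + 1 / s := by
        rw [Finset.sum_add_distrib, ← Finset.sum_mul, ← Finset.sum_mul, bpmf_sum, bpmf_var, ← hv]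
        field_simp

lemma lym_weight {α : Type*} [Fintype α] [DecidableEq α] {P η : ℝ}
    (hb : ∀ k ≤ Fintype.card α, bpmf P (Fintype.card α) k ≤ η) (hη : 0 ≤ η)
    (A : Finset (Finset α)) (hA : IsAntichain (· ⊆ ·) (A : Set (Finset α))) :
    ∑ s ∈ A, P ^ s.card * (1 - P) ^ (Fintype.card α - s.card) ≤ η := by
  have h := Finset.lubell_yamamoto_meshalkin_inequality_sum_inv_choose (𝕜 := ℝ) hA
  calc _ ≤ ∑ s ∈ A, η * ((Fintype.card α).choose s.card : ℝ)⁻¹ := by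
        refine Finset.sum_le_sum fun s _ => ?_
        have hs := Finset.card_le_univ s
        have h1 := hb s.card hs
        have h2 : (0 : ℝ) < (Fintype.card α).choose s.card := by
          exact_mod_cast Nat.choose_pos hs
        rw [le_mul_inv_iff₀ h2]
        unfold bpmf at h1
        linarith
    _ = η * ∑ s ∈ A, ((Fintype.card α).choose s.card : ℝ)⁻¹ := by rw [Finset.mul_sum]
    _ ≤ η * 1 := by gcongr
    _ = η := mul_one η

open Classical in
lemma LO_core {α : Type*} [Fintype α] {P η : ℝ}
    (hb : ∀ k ≤ Fintype.card α, bpmf P (Fintype.card α) k ≤ η) (hη : 0 ≤ η)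
    (f : α → ℝ) (κ : ℝ) (hκ : 0 < κ) (hf : ∀ i, κ / 2 ≤ f i) (c : ℝ) :
    ∑ x : α → Bool, (∏ i, wt P (x i)) *
      (if |∑ i, (if x i then f i else 0) + c| < κ / 4 then 1 else 0) ≤ η := by
  set A : Finset (Finset α) := Finset.univ.filter fun s => |∑ i ∈ s, f i + c| < κ / 4 with hAdef
  have hA : IsAntichain (· ⊆ ·) (A : Set (Finset α)) := by
    intro s hs t ht hne hst
    simp only [hAdef, Finset.coe_filter, Finset.mem_univ, true_and, Set.mem_ofPred_eq] at hs ht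
    obtain ⟨i, hit, his⟩ := Finset.exists_of_ssubset (hst.ssubset_of_ne hne)
    have h1 : ∑ j ∈ s, f j + f i ≤ ∑ j ∈ t, f j := by
      rw [add_comm, ← Finset.sum_insert his]
      refine Finset.sum_le_sum_of_subset_of_nonneg ?_ ?_
      · intro j hj
        rcases Finset.mem_insert.1 hj with rfl | hj
        · exact hit
        · exact hst hj
      · intro j _ _; linarith [hf j]
    have := hf i
    rw [abs_lt] at hs ht
    linarith
  refine le_trans (le_of_eq ?_) (lym_weight hb hη A hA)
  have hwt : ∀ s : Finset α, (∏ i, wt P (decide (i ∈ s))) =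
      P ^ s.card * (1 - P) ^ (Fintype.card α - s.card) := by
    intro s
    simp only [wt, decide_eq_true_eq]
    rw [Finset.prod_ite]
    simp only [Finset.prod_const]
    congr 2
    · simp
    · rw [← Finset.card_compl]; congr 1; ext; simp
  rw [Finset.sum_filter]
  refine Finset.sum_nbij' (fun x => Finset.univ.filter fun i => x i = true)
    (fun s i => decide (i ∈ s)) (by simp) (by simp) ?_ ?_ ?_
  · intro x _; ext i; simp
  · intro s _; ext i; simp
  · intro x _
    rw [← hwt, ← Finset.sum_filter]
    simp

open Classical in
lemma LO_real {n : ℕ} {P η : ℝ} (h0 : 0 < P) (h1 : P < 1)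
    (hη : 0 ≤ η) (f : Fin n → ℝ) (κ : ℝ) (hκ : 0 < κ) (H : Finset (Fin n))
    (hb : ∀ k ≤ H.card, bpmf P H.card k ≤ η)
    (hf : ∀ i ∈ H, κ / 2 ≤ f i) (c : ℝ) :
    ∑ x : Fin n → Bool, rowW P x *
      (if |∑ i, (if x i then f i else 0) + c| < κ / 4 then 1 else 0) ≤ η := by
  let e := Equiv.piEquivPiSubtypeProd (fun i => i ∈ H) (fun _ : Fin n => Bool)
  rw [← e.symm.sum_comp, Fintype.sum_prod_type_right]
  have hsplit : ∀ (x : {i // i ∈ H} → Bool) (y : {i // i ∉ H} → Bool),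
      rowW P (e.symm (x, y)) = (∏ i, wt P (x i)) * ∏ i, wt P (y i) := by
    intro x y
    rw [rowW, ← Fintype.prod_subtype_mul_prod_subtype (fun i => i ∈ H)]
    congr 1
    · refine Finset.prod_congr (by ext; simp) fun i _ => ?_
      simp [e, Equiv.piEquivPiSubtypeProd, i.2]
    · refine Finset.prod_congr (by ext; simp) fun i _ => ?_
      simp [e, Equiv.piEquivPiSubtypeProd, i.2]
  have hsum : ∀ (x : {i // i ∈ H} → Bool) (y : {i // i ∉ H} → Bool),
      ∑ i, (if e.symm (x, y) i then f i else 0) = ∑ i, (if x i then f i else 0) +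
        ∑ i, (if y i then f i else 0) := by
    intro x y
    rw [← Fintype.sum_subtype_add_sum_subtype (fun i => i ∈ H)]
    congr 1
    · refine Finset.sum_congr (by ext; simp) fun i _ => ?_
      simp [e, Equiv.piEquivPiSubtypeProd, i.2]
    · refine Finset.sum_congr (by ext; simp) fun i _ => ?_
      simp [e, Equiv.piEquivPiSubtypeProd, i.2]
  have hy1 : ∑ y : {i // i ∉ H} → Bool, ∏ i, wt P (y i) = 1 := by
    rw [← Fintype.prod_sum (fun (_ : {i // i ∉ H}) b => wt P b)]
    simp [wt]
  calc _ = ∑ y : {i // i ∉ H} → Bool, (∏ i, wt P (y i)) * ∑ x : {i // i ∈ H} → Bool,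
        (∏ i, wt P (x i)) * (if |∑ i, (if x i then f i else 0) +
          (∑ i, (if y i then f i else 0) + c)| < κ / 4 then 1 else 0) := by
        refine Finset.sum_congr rfl fun y _ => ?_
        rw [Finset.mul_sum]
        refine Finset.sum_congr rfl fun x _ => ?_
        rw [hsplit, hsum, add_assoc]
        ring
    _ ≤ ∑ y : {i // i ∉ H} → Bool, (∏ i, wt P (y i)) * η := by
        refine Finset.sum_le_sum fun y _ => ?_
        refine mul_le_mul_of_nonneg_left ?_ (Finset.prod_nonneg fun i _ => (wt_pos h0 h1 _).le)
        have hc : Fintype.card {i // i ∈ H} = H.card := by simp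
        refine le_trans (le_of_eq ?_) (LO_core (α := {i // i ∈ H}) (by rw [hc]; exact hb) hη
          (fun i : {i // i ∈ H} => f i.1) κ hκ (fun i => hf i i.2)
          (∑ i, (if y i then f i else 0) + c))
        exact Finset.sum_congr (by ext; simp) fun _ _ => rfl
    _ = η := by rw [← Finset.sum_mul, hy1, one_mul]

open Classical in
lemma LO {n : ℕ} {P η δ : ℝ} (h0 : 0 < P) (h1 : P < 1)
    (hη : 0 ≤ η) (g : Fin n → ℂ) (κ : ℝ) (hκ : 0 < κ) (hg : δ * n ≤ (lev g κ).card)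
    (hb : ∀ m k : ℕ, δ * n / 4 ≤ m → k ≤ m → bpmf P m k ≤ η) (c : ℂ) :
    ∑ x : Fin n → Bool, rowW P x *
      (if ‖∑ i, (if x i then g i else 0) + c‖ < κ / 4 then 1 else 0) ≤ η := by
  -- four directional functionals
  have main : ∀ L : ℂ →+ ℝ, (∀ w, |L w| ≤ ‖w‖) →
      δ * n / 4 ≤ (Finset.univ.filter fun i => κ / 2 ≤ L (g i)).card →
      ∑ x : Fin n → Bool, rowW P x *
      (if ‖∑ i, (if x i then g i else 0) + c‖ < κ / 4 then 1 else 0) ≤ η := by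
    intro L hL hc
    refine le_trans ?_ (LO_real h0 h1 hη (fun i => L (g i)) κ hκ
      (Finset.univ.filter fun i => κ / 2 ≤ L (g i)) (fun k hk => hb _ k hc hk) (by simp) (L c))
    refine Finset.sum_le_sum fun x _ => mul_le_mul_of_nonneg_left ?_ (rowW_pos h0 h1 x).le
    have hLs : L (∑ i, (if x i then g i else 0) + c) = ∑ i, (if x i then L (g i) else 0) + L c := by
      rw [map_add, map_sum]
      congr 1
      refine Finset.sum_congr rfl fun i _ => ?_
      split_ifs <;> simp
    split_ifs with h2 h3 h3
    · exact le_rfl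
    · exact absurd ((hLs ▸ hL _).trans_lt h2) h3
    · exact zero_le_one
    · exact le_rfl
  let R1 : ℂ →+ ℝ := Complex.reAddGroupHom
  let I1 : ℂ →+ ℝ := Complex.imAddGroupHom
  have hsub : lev g κ ⊆ ((Finset.univ.filter fun i => κ / 2 ≤ R1 (g i)) ∪
      (Finset.univ.filter fun i => κ / 2 ≤ (-R1) (g i))) ∪
      ((Finset.univ.filter fun i => κ / 2 ≤ I1 (g i)) ∪
      (Finset.univ.filter fun i => κ / 2 ≤ (-I1) (g i))) := by
    intro i hi
    rw [mem_lev] at hi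
    have := Complex.norm_le_abs_re_add_abs_im (g i)
    simp only [Finset.mem_union, Finset.mem_filter, Finset.mem_univ, true_and, AddMonoidHom.neg_apply]
    simp only [R1, I1, Complex.coe_reAddGroupHom, Complex.coe_imAddGroupHom]
    by_contra hcon
    push Not at hcon
    obtain ⟨⟨a1, a2⟩, a3, a4⟩ := hcon
    replace a2 : ¬ (κ / 2 ≤ -(g i).re) := fun h => a2 (Finset.mem_filter.2 ⟨Finset.mem_univ _, h⟩)
    replace a4 : ¬ (κ / 2 ≤ -(g i).im) := fun h => a4 (Finset.mem_filter.2 ⟨Finset.mem_univ _, h⟩)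
    rw [not_le] at a2 a4
    have : |(g i).re| < κ / 2 := abs_lt.2 ⟨by linarith, a1⟩
    have : |(g i).im| < κ / 2 := abs_lt.2 ⟨by linarith, a3⟩
    linarith
  have hcard := (Finset.card_le_card hsub).trans ((Finset.card_union_le _ _).trans
    (add_le_add (Finset.card_union_le _ _) (Finset.card_union_le _ _)))
  have hcr : ((lev g κ).card : ℝ) ≤ _ := Nat.cast_le.2 hcard
  push_cast at hcr
  by_contra hno
  have hR := fun L hL => not_le.1 (fun hc => hno (main L hL hc))
  have b1 := hR R1 (fun w => Complex.abs_re_le_norm w)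
  have b2 := hR (-R1) (fun w => by simpa [R1] using Complex.abs_re_le_norm w)
  have b3 := hR I1 (fun w => Complex.abs_im_le_norm w)
  have b4 := hR (-I1) (fun w => by simpa [I1] using Complex.abs_im_le_norm w)
  linarith

end PartPD

section PartPE

lemma prod_le_pow_card_real {ι : Type*} (s : Finset ι) (f : ι → ℝ) (b : ℝ) (h0 : ∀ i ∈ s, 0 ≤ f i)
    (h : ∀ i ∈ s, f i ≤ b) : ∏ i ∈ s, f i ≤ b ^ s.card := by
  rw [← Finset.prod_const]
  exact Finset.prod_le_prod h0 h

open Classical in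
lemma row_none {n : ℕ} (p : ℝ) (T : Finset (Fin n)) :
    ∑ r : Fin n → Bool, rowW p r * (if ∀ j ∈ T, r j = false then 1 else 0) = (1 - p) ^ T.card := by
  have h := sum_row_prod (n := n) p (fun j b => if j ∈ T then (if b then 0 else 1) else 1)
  have e1 : ∀ r : Fin n → Bool, (∏ j, if j ∈ T then (if r j then (0:ℝ) else 1) else 1) =
      if ∀ j ∈ T, r j = false then 1 else 0 := by
    intro r
    rw [Finset.prod_ite_mem, Finset.univ_inter]
    split_ifs with h
    · exact Finset.prod_eq_one fun j hj => by simp [h j hj]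
    · push Not at h
      obtain ⟨j, hj, hr⟩ := h
      exact Finset.prod_eq_zero hj (by simpa using hr)
  simp only [e1] at h
  rw [h]
  rw [← Finset.prod_const, ← Finset.univ_inter T, ← Finset.prod_ite_mem]
  refine Finset.prod_congr rfl fun j _ => ?_
  by_cases hj : j ∈ T <;> simp [hj]

open Classical in
lemma row_one {n : ℕ} (p : ℝ) (T : Finset (Fin n)) (j0 : Fin n) (hj0 : j0 ∉ T) :
    ∑ r : Fin n → Bool, rowW p r * (if r j0 = true ∧ ∀ j ∈ T, r j = false then 1 else 0) =
      p * (1 - p) ^ T.card := by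
  have h1 := row_none p T
  have h2 := row_none p (insert j0 T)
  rw [Finset.card_insert_of_notMem hj0] at h2
  have : ∀ r : Fin n → Bool, (if r j0 = true ∧ ∀ j ∈ T, r j = false then (1:ℝ) else 0) =
      (if ∀ j ∈ T, r j = false then 1 else 0) -
      (if ∀ j ∈ insert j0 T, r j = false then 1 else 0) := by
    intro r
    simp only [Finset.forall_mem_insert]
    by_cases hr : r j0 = true <;> by_cases hT : ∀ j ∈ T, r j = false <;> simp [hr, hT]
  simp only [this, mul_sub, Finset.sum_sub_distrib, h1, h2]
  ring

def uq {n : ℕ} (S : Finset (Fin n)) (i : Fin n) (r : Fin n → Bool) : Prop :=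
  (S.filter fun j => r j = true ∨ i = j).card = 1

open Classical in
lemma uq_in {n : ℕ} {p θ : ℝ} (h0 : 0 < p) (h1 : p < 1) (hθ : 0 ≤ θ) (hθ1 : θ ≤ 1)
    (S : Finset (Fin n)) (i : Fin n) (hi : i ∈ S) :
    ∑ r : Fin n → Bool, rowW p r * (if uq S i r then θ else 1) ≤ θ + S.card * p := by
  have key : ∀ r : Fin n → Bool, (if uq S i r then θ else 1) ≤
      1 - (1 - θ) * (if ∀ j ∈ S.erase i, r j = false then 1 else 0) := by
    intro r
    by_cases h : ∀ j ∈ S.erase i, r j = false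
    · have : uq S i r := by
        unfold uq
        rw [Finset.card_eq_one]
        refine ⟨i, ?_⟩
        ext j
        simp only [Finset.mem_filter, Finset.mem_singleton]
        constructor
        · rintro ⟨h2, h3 | h3⟩
          · by_contra hne
            have := h j (Finset.mem_erase.2 ⟨hne, h2⟩)
            simp [this] at h3
          · exact h3.symm
        · rintro rfl; exact ⟨hi, Or.inr rfl⟩
      rw [if_pos this, if_pos h]; linarith
    · rw [if_neg h]; split_ifs <;> linarith
  calc _ ≤ ∑ r : Fin n → Bool, rowW p r *
        (1 - (1 - θ) * (if ∀ j ∈ S.erase i, r j = false then 1 else 0)) :=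
        Finset.sum_le_sum fun r _ => mul_le_mul_of_nonneg_left (key r) (rowW_pos h0 h1 r).le
    _ = 1 - (1 - θ) * (1 - p) ^ (S.erase i).card := by
        rw [← row_none p, Finset.mul_sum]
        conv_rhs => enter [1]; rw [← sum_rowW (n := n) p]
        rw [← Finset.sum_sub_distrib]
        exact Finset.sum_congr rfl fun r _ => by ring
    _ ≤ _ := by
        have hb := one_add_mul_le_pow (a := -p) (by linarith) (S.erase i).card
        have hc : ((S.erase i).card : ℝ) ≤ S.card := by exact_mod_cast Finset.card_erase_le
        have h2 : 1 - S.card * p ≤ (1 - p) ^ (S.erase i).card := by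
          have : 1 + -p = 1 - p := by ring
          rw [this] at hb
          nlinarith
        have h3 : (1 - θ) * (1 - S.card * p) ≤ (1 - θ) * (1 - p) ^ (S.erase i).card :=
          mul_le_mul_of_nonneg_left h2 (by linarith)
        have h4 : 0 ≤ θ * (S.card * p) := by positivity
        nlinarith

open Classical in
lemma uq_out {n : ℕ} {p θ : ℝ} (h0 : 0 < p) (h1 : p < 1) (hθ : 0 ≤ θ) (hθ1 : θ ≤ 1)
    (S : Finset (Fin n)) (i : Fin n) (hi : i ∉ S) :
    ∑ r : Fin n → Bool, rowW p r * (if uq S i r then θ else 1) ≤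
      Real.exp (-((1 - θ) * (S.card * p * (1 - S.card * p)))) := by
  have key : ∀ r : Fin n → Bool, (if uq S i r then θ else 1) ≤
      1 - (1 - θ) * ∑ j0 ∈ S, (if r j0 = true ∧ ∀ j ∈ S.erase j0, r j = false then 1 else 0) := by
    intro r
    by_cases h : uq S i r
    · obtain ⟨j1, hj1⟩ := Finset.card_eq_one.1 h
      have hle : ∑ j0 ∈ S, (if r j0 = true ∧ ∀ j ∈ S.erase j0, r j = false then (1:ℝ) else 0) ≤
          ∑ j0 ∈ S, (if j0 = j1 then 1 else 0) := by
        refine Finset.sum_le_sum fun j0 hj0 => ?_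
        by_cases hr : r j0 = true
        · have : j0 ∈ S.filter fun j => r j = true ∨ i = j := by simp [hj0, hr]
          rw [hj1, Finset.mem_singleton] at this
          rw [if_pos this]; split_ifs <;> simp
        · rw [if_neg (by tauto)]; split_ifs <;> simp
      have hle2 : ∑ j0 ∈ S, (if j0 = j1 then (1:ℝ) else 0) ≤ 1 := by
        rw [Finset.sum_ite_eq']; split_ifs <;> simp
      rw [if_pos h]
      nlinarith
    · have : ∑ j0 ∈ S, (if r j0 = true ∧ ∀ j ∈ S.erase j0, r j = false then (1:ℝ) else 0) = 0 := by
        refine Finset.sum_eq_zero fun j0 hj0 => if_neg ?_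
        rintro ⟨h2, h3⟩
        apply h
        unfold uq
        rw [Finset.card_eq_one]
        refine ⟨j0, ?_⟩
        ext j
        simp only [Finset.mem_filter, Finset.mem_singleton]
        constructor
        · rintro ⟨h4, h5 | h5⟩
          · by_contra hne
            have := h3 j (Finset.mem_erase.2 ⟨hne, h4⟩)
            simp [this] at h5
          · exact absurd (h5 ▸ h4) hi
        · rintro rfl; exact ⟨hj0, Or.inl h2⟩
      rw [if_neg h, this]; simp
  calc _ ≤ ∑ r : Fin n → Bool, rowW p r *
        (1 - (1 - θ) * ∑ j0 ∈ S, (if r j0 = true ∧ ∀ j ∈ S.erase j0, r j = false then 1 else 0)) :=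
        Finset.sum_le_sum fun r _ => mul_le_mul_of_nonneg_left (key r) (rowW_pos h0 h1 r).le
    _ = 1 - (1 - θ) * (S.card * (p * (1 - p) ^ (S.card - 1))) := by
        have : ∑ j0 ∈ S, ∑ r : Fin n → Bool, rowW p r *
          (if r j0 = true ∧ ∀ j ∈ S.erase j0, r j = false then 1 else 0) =
          S.card * (p * (1 - p) ^ (S.card - 1)) := by
          rw [← nsmul_eq_mul, ← Finset.sum_const]
          refine Finset.sum_congr rfl fun j0 hj0 => ?_
          rw [row_one p _ _ (Finset.notMem_erase _ _), Finset.card_erase_of_mem hj0]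
        rw [← this, Finset.sum_comm, Finset.mul_sum]
        conv_rhs => enter [1]; rw [← sum_rowW (n := n) p]
        rw [← Finset.sum_sub_distrib]
        refine Finset.sum_congr rfl fun r _ => ?_
        rw [← Finset.mul_sum]; ring
    _ ≤ 1 - (1 - θ) * (S.card * p * (1 - S.card * p)) := by
        have hb := one_add_mul_le_pow (a := -p) (by linarith) (S.card - 1)
        have hc : ((S.card - 1 : ℕ) : ℝ) ≤ S.card := by exact_mod_cast Nat.sub_le _ _
        have h2 : 1 - S.card * p ≤ (1 - p) ^ (S.card - 1) := by
          have : 1 + -p = 1 - p := by ring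
          rw [this] at hb
          nlinarith
        have h3 : (S.card * p) * (1 - S.card * p) ≤ (S.card * p) * (1 - p) ^ (S.card - 1) :=
          mul_le_mul_of_nonneg_left h2 (by positivity)
        have := mul_le_mul_of_nonneg_left h3 (show 0 ≤ 1 - θ by linarith)
        linarith
    _ ≤ _ := by
        have := Real.add_one_le_exp (-((1 - θ) * (S.card * p * (1 - S.card * p))))
        linarith

open Classical in
lemma exp_S {n K : ℕ} {p θ : ℝ} (h0 : 0 < p) (h1 : p < 1) (hθ : 0 < θ) (hθ1 : θ ≤ 1) (hK : 1 ≤ K)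
    (S : Finset (Fin n)) :
    Pr p (fun a : Fin n → Fin n → Bool => K * (uniqRows a S).card < S.card) ≤
      Real.exp (-(Real.log θ) / K * S.card) * ((θ + S.card * p) ^ S.card *
      Real.exp (-((1 - θ) * (S.card * p * (1 - S.card * p)))) ^ (n - S.card)) := by
  have hlog : Real.log θ ≤ 0 := Real.log_nonpos hθ.le hθ1
  have hKr : (0:ℝ) < K := by exact_mod_cast hK
  have hf : ∀ a : Fin n → Fin n → Bool, ∏ i, (if uq S i (a i) then θ else 1) =
      θ ^ (uniqRows a S).card := by
    intro a
    rw [Finset.prod_ite]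
    simp only [Finset.prod_const, one_pow, mul_one]
    congr 2
    ext i; rw [uniqRows, Finset.mem_filter, Finset.mem_filter]; rfl
  refine (Pr_le_sum h0 h1 (fun a => Real.exp (-(Real.log θ) / K * S.card) *
    ∏ i, (if uq S i (a i) then θ else 1)) ?_ ?_).trans ?_
  · intro a; rw [hf]; positivity
  · intro a ha
    rw [hf, ← Real.exp_log hθ, ← Real.exp_nat_mul, ← Real.exp_add, Real.exp_log hθ]
    apply Real.one_le_exp
    have hu : (K:ℝ) * (uniqRows a S).card ≤ S.card := by exact_mod_cast ha.le
    have : -(Real.log θ) / K * S.card + (uniqRows a S).card * Real.log θ =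
      (-(Real.log θ) / K) * (S.card - K * (uniqRows a S).card) := by field_simp; ring
    rw [this]
    exact mul_nonneg (div_nonneg (by linarith) hKr.le) (by linarith)
  · have := sum_mat_prod (n := n) p (fun i r => if uq S i r then θ else 1)
    have e : ∀ a : Fin n → Fin n → Bool, matW p a * (Real.exp (-(Real.log θ) / K * S.card) *
      ∏ i, (if uq S i (a i) then θ else 1)) = Real.exp (-(Real.log θ) / K * S.card) *
      (matW p a * ∏ i, (if uq S i (a i) then θ else 1)) := fun a => by ring
    simp only [e]
    rw [← Finset.mul_sum, this]
    gcongr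
    rw [← Finset.prod_mul_prod_compl S]
    have nn : ∀ i, 0 ≤ ∑ r : Fin n → Bool, rowW p r * (if uq S i r then θ else 1) := fun i =>
      Finset.sum_nonneg fun r _ => mul_nonneg (rowW_pos h0 h1 r).le (by split_ifs <;> linarith)
    refine mul_le_mul ?_ ?_ (Finset.prod_nonneg fun i _ => nn i) (by positivity)
    · exact prod_le_pow_card_real S _ _ (fun i _ => nn i) fun i hi => uq_in h0 h1 hθ.le hθ1 S i hi
    · have hcard : n - S.card = Sᶜ.card := by rw [Finset.card_compl, Fintype.card_fin]
      rw [hcard]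
      exact prod_le_pow_card_real _ _ _ (fun i _ => nn i)
        fun i hi => uq_out h0 h1 hθ.le hθ1 S i (Finset.mem_compl.1 hi)

end PartPE

section PartPE2

lemma choose_le_exp (n m : ℕ) (hm : 1 ≤ m) :
    (n.choose m : ℝ) ≤ (Real.exp 1 * n / m) ^ m := by
  have h1 : (n.choose m : ℝ) ≤ (n : ℝ) ^ m / m.factorial := Nat.choose_le_pow_div m n
  have h2 := Real.pow_div_factorial_le_exp (m : ℝ) (by positivity) m
  have hm' : (0:ℝ) < m := by exact_mod_cast hm
  refine h1.trans ?_
  rw [div_pow, mul_pow, ← Real.exp_nat_mul, mul_one, div_le_div_iff₀ (by positivity) (by positivity)]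
  rw [div_le_iff₀ (by positivity)] at h2
  nlinarith [mul_le_mul_of_nonneg_left h2 (show (0:ℝ) ≤ (n:ℝ)^m by positivity)]

open Classical in
lemma exp_m {n K m : ℕ} {d δ : ℝ} (hd : 0 < d) (hn : d < n) (hδ : 0 < δ) (hδ1 : δ ≤ 1) (hK : 1 ≤ K)
    (hm : 1 ≤ m) (hm2 : (m : ℝ) < δ * n) :
    ∑ S ∈ (Finset.univ : Finset (Fin n)).powersetCard m,
      Pr (d / n) (fun a : Fin n → Fin n → Bool => K * (uniqRows a S).card < S.card) ≤
      ((δ + d) * Real.exp (1 - d + d * (2 + d) * δ) * Real.exp (Real.log (n / δ) / K)) ^ m := by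
  have hn0 : (0:ℝ) < n := by linarith
  have hp0 : 0 < d / n := by positivity
  have hp1 : d / n < 1 := by rw [div_lt_one hn0]; exact hn
  have hm' : (0:ℝ) < m := by exact_mod_cast hm
  have hm1 : (1:ℝ) ≤ m := by exact_mod_cast hm
  have hKr : (0:ℝ) < K := by exact_mod_cast hK
  set x : ℝ := m / n with hx
  have hx0 : 0 < x := by positivity
  have hxδ : x ≤ δ := by rw [hx, div_le_iff₀ hn0]; exact hm2.le
  have hmn : m ≤ n := by
    have : (m:ℝ) ≤ n := by nlinarith
    exact_mod_cast this
  have hθ : 0 < δ * x := by positivity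
  have hθ1 : δ * x ≤ 1 := by nlinarith
  have hb : ∀ S ∈ (Finset.univ : Finset (Fin n)).powersetCard m,
      Pr (d / n) (fun a : Fin n → Fin n → Bool => K * (uniqRows a S).card < S.card) ≤
      Real.exp (-(Real.log (δ * x)) / K * m) * ((δ * x + m * (d / n)) ^ m *
      Real.exp (-((1 - δ * x) * (m * (d / n) * (1 - m * (d / n))))) ^ (n - m)) := by
    intro S hS
    have hc : S.card = m := (Finset.mem_powersetCard.1 hS).2
    have := exp_S (K := K) hp0 hp1 hθ hθ1 hK S
    rw [hc] at this ⊢; exact this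
  refine (Finset.sum_le_sum hb).trans ?_
  rw [Finset.sum_const, Finset.card_powersetCard, Finset.card_univ, Fintype.card_fin, nsmul_eq_mul]
  have e1 : Real.exp (-(Real.log (δ * x)) / K * m) ≤ Real.exp (Real.log (n / δ) / K) ^ m := by
    rw [← Real.exp_nat_mul]
    apply Real.exp_le_exp.2
    rw [mul_comm]
    gcongr
    rw [← Real.log_inv]
    apply Real.log_le_log (by positivity)
    rw [hx, inv_eq_one_div, div_le_div_iff₀ (by positivity) hδ]
    have : n * (δ * (m / n)) = δ * m := by field_simp
    nlinarith
  have e2 : δ * x + m * (d / n) = (δ + d) * x := by rw [hx]; ring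
  have hmd : m * (d / n) = d * x := by rw [hx]; ring
  have e3 : Real.exp (-((1 - δ * x) * (m * (d / n) * (1 - m * (d / n))))) ^ (n - m) ≤
      Real.exp (- d + d * (2 + d) * δ) ^ m := by
    rw [← Real.exp_nat_mul, ← Real.exp_nat_mul]
    apply Real.exp_le_exp.2
    rw [Nat.cast_sub hmn, hmd]
    have hnm : (n:ℝ) - m = n * (1 - x) := by rw [hx]; field_simp
    have hmx : (m:ℝ) = n * x := by rw [hx]; field_simp
    rw [hnm]
    have hx1 : x ≤ 1 := hxδ.trans hδ1
    set y := x + δ * x - δ * x * x with hy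
    have hy0 : 0 ≤ y := by nlinarith
    have hy1 : y ≤ 2 * δ := by nlinarith
    have key : 1 - (2 + d) * δ ≤ (1 - x) * (1 - δ * x) * (1 - d * x) := by
      have : (1 - x) * (1 - δ * x) * (1 - d * x) = 1 - y - d * x + y * (d * x) := by rw [hy]; ring
      rw [this]
      have : 0 ≤ y * (d * x) := by positivity
      nlinarith
    have : n * (1 - x) * -((1 - δ * x) * (d * x * (1 - d * x))) =
      -((m:ℝ) * d * ((1 - x) * (1 - δ * x) * (1 - d * x))) := by rw [hmx]; ring
    rw [this]
    have := mul_le_mul_of_nonneg_left key (show 0 ≤ (m:ℝ) * d by positivity)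
    nlinarith
  calc _ ≤ (Real.exp 1 * n / m) ^ m * (Real.exp (Real.log (n / δ) / K) ^ m *
        (((δ + d) * x) ^ m * Real.exp (- d + d * (2 + d) * δ) ^ m)) := by
        rw [e2]
        have := choose_le_exp n m hm
        gcongr
    _ = ((Real.exp 1 * n / m) * (Real.exp (Real.log (n / δ) / K) *
        (((δ + d) * x) * Real.exp (- d + d * (2 + d) * δ)))) ^ m := by
        simp only [mul_pow]
    _ = _ := by
        congr 1
        have : (1 - d + d * (2 + d) * δ) = 1 + (- d + d * (2 + d) * δ) := by ring
        rw [this, Real.exp_add 1, hx]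
        field_simp

lemma exp_prob {n K m0 : ℕ} {d δ ρ : ℝ} (hd : 0 < d) (hn : d < n) (hδ : 0 < δ) (hδ1 : δ ≤ 1)
    (hK : 1 ≤ K) (hm : 1 ≤ m0) (hρ1 : ρ < 1)
    (hρ : (δ + d) * Real.exp (1 - d + d * (2 + d) * δ) * Real.exp (Real.log (n / δ) / K) ≤ ρ) :
    Pr (d / n) (fun a : Fin n → Fin n → Bool => ¬ ExpP a m0 K δ) ≤ ρ ^ m0 / (1 - ρ) := by
  classical
  have hn0 : (0:ℝ) < n := by linarith
  have hp0 : 0 < d / n := by positivity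
  have hp1 : d / n < 1 := by rw [div_lt_one hn0]; exact hn
  have hρ0 : 0 ≤ ρ := le_trans (by positivity) hρ
  have h1 : Pr (d / n) (fun a : Fin n → Fin n → Bool => ¬ ExpP a m0 K δ) ≤
      Pr (d / n) (fun a : Fin n → Fin n → Bool => ∃ m ∈ (Finset.range (n+1)).filter
        (fun m => m0 ≤ m ∧ (m:ℝ) < δ * n), ∃ S ∈ (Finset.univ : Finset (Fin n)).powersetCard m,
        K * (uniqRows a S).card < S.card) := by
    refine Pr_mono hp0 hp1 fun a ha => ?_
    unfold ExpP at ha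
    push Not at ha
    obtain ⟨S, h1, h2, h3⟩ := ha
    refine ⟨S.card, ?_, S, ?_, h3⟩
    · simp only [Finset.mem_filter, Finset.mem_range]
      exact ⟨Nat.lt_succ_of_le (by simpa using Finset.card_le_univ S), h1, h2⟩
    · simp
  refine h1.trans ((Pr_union hp0 hp1 _ _).trans ?_)
  calc _ ≤ ∑ m ∈ (Finset.range (n+1)).filter (fun m => m0 ≤ m ∧ (m:ℝ) < δ * n), ρ ^ m := by
        refine Finset.sum_le_sum fun m hmm => ?_
        simp only [Finset.mem_filter] at hmm
        refine (Pr_union hp0 hp1 _ _).trans ((exp_m hd hn hδ hδ1 hK (hm.trans hmm.2.1) hmm.2.2).trans ?_)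
        gcongr
    _ ≤ ∑ m ∈ Finset.Ico m0 (n + 1 + m0), ρ ^ m := by
        refine Finset.sum_le_sum_of_subset_of_nonneg ?_ fun _ _ _ => by positivity
        intro m
        simp only [Finset.mem_filter, Finset.mem_range, Finset.mem_Ico]
        omega
    _ ≤ ρ ^ m0 / (1 - ρ) := geom_sum_Ico_le_of_lt_one hρ0 hρ1

lemma coldeg_prob {n : ℕ} {d : ℝ} (hd : 0 < d) (hn : d < n) (Δ : ℕ) :
    Pr (d / n) (fun a : Fin n → Fin n → Bool => ¬ ColDeg (fun i j => a j i) Δ) ≤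
      n * (Real.exp d / 2 ^ Δ) := by
  classical
  have hn0 : (0:ℝ) < n := by linarith
  have hp0 : 0 < d / n := by positivity
  have hp1 : d / n < 1 := by rw [div_lt_one hn0]; exact hn
  have h1 : Pr (d / n) (fun a : Fin n → Fin n → Bool => ¬ ColDeg (fun i j => a j i) Δ) ≤
      Pr (d / n) (fun a : Fin n → Fin n → Bool => ∃ i ∈ (Finset.univ : Finset (Fin n)),
        Δ < (Finset.univ.filter fun j => a i j = true).card) := by
    refine Pr_mono hp0 hp1 fun a ha => ?_
    unfold ColDeg at ha
    push Not at ha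
    obtain ⟨i, hi⟩ := ha
    exact ⟨i, Finset.mem_univ _, hi⟩
  refine h1.trans ((Pr_union hp0 hp1 _ _).trans ?_)
  have h2 : ∀ i ∈ (Finset.univ : Finset (Fin n)), Pr (d / n) (fun a : Fin n → Fin n → Bool =>
        Δ < (Finset.univ.filter fun j => a i j = true).card) ≤ Real.exp d / 2 ^ Δ := by
    intro i _
    refine (Pr_le_sum hp0 hp1 (fun a => ∏ k, (if k = i then
      (1 / 2 ^ Δ * ∏ j, (if a k j then (2:ℝ) else 1)) else 1)) ?_ ?_).trans ?_
    · intro a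
      refine Finset.prod_nonneg fun k _ => ?_
      split_ifs
      · exact mul_nonneg (by positivity) (Finset.prod_nonneg fun j _ => by split_ifs <;> norm_num)
      · norm_num
    · intro a ha
      rw [Finset.prod_ite_eq' Finset.univ i, if_pos (Finset.mem_univ _), Finset.prod_ite]
      simp only [Finset.prod_const, one_pow, mul_one]
      rw [one_div, inv_mul_eq_div, one_le_div (by positivity)]
      exact pow_le_pow_right₀ (by norm_num) ha.le
    · rw [sum_mat_prod (d / n) (fun k r => if k = i then
        (1 / 2 ^ Δ * ∏ j, (if r j then (2:ℝ) else 1)) else 1)]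
      have : ∀ k, ∑ r : Fin n → Bool, rowW (d / n) r * (if k = i then
        (1 / 2 ^ Δ * ∏ j, (if r j then (2:ℝ) else 1)) else 1) =
        if k = i then 1 / 2 ^ Δ * (1 + d / n) ^ n else 1 := by
        intro k
        by_cases hk : k = i
        · simp only [hk, if_true]
          have := sum_row_prod (n := n) (d / n) (fun _ b => if b then (2:ℝ) else 1)
          simp only [if_true] at this
          have e : ∀ r : Fin n → Bool, rowW (d / n) r * (1 / 2 ^ Δ * ∏ j, (if r j then (2:ℝ) else 1))
            = 1 / 2 ^ Δ * (rowW (d / n) r * ∏ j, (if r j then (2:ℝ) else 1)) := fun r => by ring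
          simp only [e]
          rw [← Finset.mul_sum, this]
          simp only [Bool.false_eq_true, if_false, Finset.prod_const, Finset.card_univ,
            Fintype.card_fin]
          congr 2; ring
        · simp [hk, sum_rowW]
      simp only [this]
      rw [Finset.prod_ite_eq' Finset.univ i, if_pos (Finset.mem_univ _)]
      have hle : (1 + d / n) ^ n ≤ Real.exp d := by
        calc (1 + d / n) ^ n ≤ Real.exp (d / n) ^ n := by
              gcongr
              have := Real.add_one_le_exp (d / n)
              linarith
          _ = Real.exp d := by rw [← Real.exp_nat_mul]; congr 1; field_simp
      rw [one_div, inv_mul_eq_div]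
      gcongr
  refine (Finset.sum_le_sum h2).trans ?_
  simp

end PartPE2

section PartPF

structure Par (n m0 K Δ t : ℕ) (z : ℂ) (δ c Q β κ κ' η P : ℝ) : Prop where
  hn : 1 ≤ n
  hc : 0 < c
  hc0 : c ≤ ‖z‖
  hc1 : c ≤ ‖1 - z‖
  hc2 : c ≤ 1
  hD : DiophZ z m0 Q
  hQ : 1 ≤ Q
  hm0 : 2 * K ≤ m0
  hK : 1 ≤ K
  hδ : δ ≤ 1
  ht : (n : ℝ) < (1 + 1 / ((2 * K * (Δ + 1) : ℕ) : ℝ)) ^ t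
  hβ0 : 0 < β
  hβ : β ≤ 1 / 2
  hκ0 : 0 < κ
  hκ1 : κ ≤ 1
  hκ : κ ≤ β ^ m0 * (c / (2 * (n + 1) * (1 + ‖z‖))) ^ t
  hsmall : Q * (c / 2 * κ + n * (1 + ‖z‖) * β) ≤ 1 / 4
  hκ'0 : 0 < κ'
  hκ'1 : κ' ≤ κ / 4
  hκ'2 : κ' ≤ ‖z‖ * (1 / (4 * Q * (1 + ‖z‖))) - n * β
  hP0 : 0 < P
  hP1 : P < 1
  hη0 : 0 ≤ η
  hb : ∀ m k : ℕ, δ * n / 4 ≤ m → k ≤ m → bpmf P m k ≤ η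

structure Good {n : ℕ} (z : ℂ) (m0 K Δ y0 : ℕ) (δ σ0 : ℝ) (a : Fin n → Fin n → Bool) : Prop where
  e1 : ExpP a m0 K δ
  e2 : ExpP (fun i j => a j i) m0 K δ
  d1 : ColDeg a Δ
  d2 : ColDeg (fun i j => a j i) Δ
  det0 : (smat a z).det ≠ 0
  nul : ¬ NN (smat a z) Finset.univ σ0 y0

lemma smat_update_ne {n : ℕ} (a : Fin n → Fin n → Bool) (z : ℂ) (i : Fin n) (r : Fin n → Bool)
    (j : Fin n) (hj : j ≠ i) : smat (Function.update a i r) z j = smat a z j := by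
  ext k
  rw [smat_apply, smat_apply, Function.update_of_ne hj]

lemma smat_update_self {n : ℕ} (a : Fin n → Fin n → Bool) (z : ℂ) (i : Fin n) (r : Fin n → Bool)
    (g : Fin n → ℂ) : (smat (Function.update a i r) z).mulVec g i =
      ∑ j, (if r j then g j else 0) + -(z * g i) := by
  rw [Matrix.mulVec, dotProduct]
  simp only [smat_apply, Function.update_self, sub_mul, Finset.sum_sub_distrib]
  simp [sub_eq_add_neg]

/-- kernel vector of all rows but `i`. -/
lemma exists_ker_erase {n : ℕ} (M : Matrix (Fin n) (Fin n) ℂ) (i : Fin n) :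
    ∃ g : Fin n → ℂ, ‖g‖ = 1 ∧ ∀ j ≠ i, (M.mulVec g) j = 0 := by
  have hdet : (M.updateRow i 0).det = 0 := Matrix.det_eq_zero_of_row_eq_zero i (by simp)
  obtain ⟨v, hv, hv0⟩ := Matrix.exists_mulVec_eq_zero_iff.2 hdet
  have hvn : ‖v‖ ≠ 0 := norm_ne_zero_iff.2 hv
  refine ⟨((‖v‖⁻¹ : ℝ) : ℂ) • v, ?_, ?_⟩
  · rw [norm_smul]
    simp [hvn]
  · intro j hj
    have := congrFun hv0 j
    rw [Matrix.mulVec_smul, Pi.smul_apply]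
    have e : (M.mulVec v) j = (M.updateRow i 0).mulVec v j := by
      simp [Matrix.mulVec, Matrix.updateRow_ne hj]
    rw [e, this]; simp

open Classical in
lemma nofail_prob {n m0 K Δ t y0 : ℕ} {z : ℂ} {δ c Q β κ κ' η P σ0 : ℝ}
    (p : Par n m0 K Δ t z δ c Q β κ κ' η P) {a : Fin n → Fin n → Bool}
    (ha : Good z m0 K Δ y0 δ σ0 a) (i : Fin n) (g : Fin n → ℂ) (hg : ‖g‖ = 1)
    (hgz : ∀ j ≠ i, ((smat a z).mulVec g) j = 0) :
    ∑ r : Fin n → Bool, rowW P r *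
      (if ‖(smat (Function.update a i r) z).mulVec g i‖ < κ' then 1 else 0) ≤ η + m0 * P := by
  have hm0P : 0 ≤ m0 * P := mul_nonneg (Nat.cast_nonneg _) p.hP0.le
  simp only [smat_update_self]
  rcases deloc p.hc p.hc0 p.hc1 p.hc2 p.hD p.hQ a ha.e1 ha.d1 p.hm0 p.hK p.hδ t p.ht p.hβ0 p.hβ p.hκ
    g hg {i} (by simp) 0 le_rfl (fun j hj => by rw [hgz j (by simpa using hj)]; simp)
    (mul_nonneg (by linarith [p.hc]) p.hκ0.le) (le_trans (by
      have := p.hκ0; have := p.hc; have := p.hQ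
      gcongr; positivity) p.hsmall) with h | h
  · have := LO p.hP0 p.hP1 p.hη0 g κ p.hκ0 h p.hb (-(z * g i))
    refine le_trans (Finset.sum_le_sum fun r _ => ?_) (this.trans (by linarith))
    refine mul_le_mul_of_nonneg_left ?_ (rowW_pos p.hP0 p.hP1 r).le
    split_ifs with h1 h2 h2
    · exact le_rfl
    · exact absurd (h1.trans_le p.hκ'1) h2
    · exact zero_le_one
    · exact le_rfl
  · obtain ⟨i', hi', S, hS, hiS, hγ, hoff⟩ := h
    rw [Finset.mem_singleton] at hi'
    subst hi'
    have key : ∀ r : Fin n → Bool,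
        (if ‖∑ j, (if r j then g j else 0) + -(z * g i')‖ < κ' then (1:ℝ) else 0) ≤
        1 - (if ∀ j ∈ S, r j = false then 1 else 0) := by
      intro r
      by_cases hr : ∀ j ∈ S, r j = false
      · rw [if_pos hr, if_neg]
        · simp
        rw [not_lt]
        have h1 : ‖∑ j, (if r j then g j else 0)‖ ≤ n * β := by
          refine (norm_sum_le _ _).trans ?_
          calc _ ≤ ∑ _j : Fin n, β := by
                refine Finset.sum_le_sum fun j _ => ?_
                by_cases hj : j ∈ S
                · simp [hr j hj, p.hβ0.le]
                · split_ifs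
                  · exact (hoff j hj).le
                  · simpa using p.hβ0.le
            _ = _ := by simp
        have h2 := norm_sub_norm_le (z * g i') (∑ j, (if r j then g j else 0))
        rw [norm_sub_rev, sub_eq_add_neg (∑ j, (if r j then g j else 0)), norm_mul] at h2
        have h3 := mul_le_mul_of_nonneg_left hγ (norm_nonneg z)
        have := p.hκ'2
        linarith
      · rw [if_neg hr]; split_ifs <;> simp
    calc _ ≤ ∑ r : Fin n → Bool, rowW P r * (1 - (if ∀ j ∈ S, r j = false then 1 else 0)) :=
          Finset.sum_le_sum fun r _ =>
            mul_le_mul_of_nonneg_left (key r) (rowW_pos p.hP0 p.hP1 r).le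
      _ = 1 - (1 - P) ^ S.card := by
          simp only [mul_sub, mul_one, Finset.sum_sub_distrib, row_none, sum_rowW]
      _ ≤ _ := by
          have hb := one_add_mul_le_pow (a := -P) (by linarith [p.hP1]) S.card
          have hc : (S.card : ℝ) ≤ m0 := by exact_mod_cast hS
          have e : 1 + -P = 1 - P := by ring
          rw [e] at hb
          have := mul_le_mul_of_nonneg_right hc p.hP0.le
          have := p.hη0
          linarith

noncomputable def Nul {n : ℕ} (z : ℂ) (y0 : ℕ) (σ : ℝ) (a : Fin n → Fin n → Bool) : ℕ :=
  @Nat.findGreatest (fun m => NN (smat a z) Finset.univ σ m) (Classical.decPred _) y0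

lemma Nul_le {n : ℕ} (z : ℂ) (y0 : ℕ) (σ : ℝ) (a : Fin n → Fin n → Bool) : Nul z y0 σ a ≤ y0 :=
  @Nat.findGreatest_le _ (Classical.decPred _) _

lemma Nul_spec {n : ℕ} (z : ℂ) (y0 : ℕ) (σ : ℝ) (a : Fin n → Fin n → Bool) :
    NN (smat a z) Finset.univ σ (Nul z y0 σ a) := by
  classical
  have h : ∀ (_ : DecidablePred fun m => NN (smat a z) Finset.univ σ m),
      NN (smat a z) Finset.univ σ (Nat.findGreatest (fun m => NN (smat a z) Finset.univ σ m) y0) :=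
    fun _ => Nat.findGreatest_spec (P := fun m => NN (smat a z) Finset.univ σ m) (Nat.zero_le _)
      (NN.zero _ _ _)
  exact h _

lemma le_Nul {n : ℕ} {z : ℂ} {y0 : ℕ} {σ : ℝ} {a : Fin n → Fin n → Bool} {m : ℕ} (hm : m ≤ y0)
    (h : NN (smat a z) Finset.univ σ m) : m ≤ Nul z y0 σ a := by
  exact @Nat.le_findGreatest _ _ (Classical.decPred _) _ hm h

/-- admissible triple of levels -/
structure Lev (n : ℕ) (z : ℂ) (c κ κ' σ σ1 σ2 : ℝ) : Prop where
  h0 : 0 ≤ σ2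
  h1 : σ2 ≤ σ1
  h2 : σ1 ≤ σ
  h3 : n * σ1 ≤ c / 2 * κ
  h4 : n * (n * σ1) + n * σ1 ≤ κ * σ
  h5 : 4 * (n * (1 + ‖z‖)) * σ2 ≤ κ' * σ1
  h6 : σ2 ≤ κ' / 2

lemma step_any {n y0 : ℕ} {z : ℂ} {c κ κ' σ σ1 σ2 : ℝ} (l : Lev n z c κ κ' σ σ1 σ2)
    (a : Fin n → Fin n → Bool) (i : Fin n) (r : Fin n → Bool) :
    Nul z y0 σ2 (Function.update a i r) ≤ Nul z y0 σ a + 1 := by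
  have h := Nul_spec z y0 σ2 (Function.update a i r)
  have h1 : NN (smat a z) (Finset.univ.erase i) σ (Nul z y0 σ2 (Function.update a i r)) :=
    h.congr (Finset.subset_univ _) (fun j hj => (smat_update_ne a z i r j (Finset.ne_of_mem_erase hj)).symm)
      (l.h1.trans l.h2)
  have h2 := NN.add_row (l.h0.trans (l.h1.trans l.h2)) i h1
  have h3 := le_Nul (y0 := y0) ((Nat.sub_le _ _).trans (Nul_le z y0 σ2 (Function.update a i r))) h2
  omega

open Classical in
lemma step_good {n y0 : ℕ} {z : ℂ} {c κ κ' σ σ1 σ2 : ℝ} (l : Lev n z c κ κ' σ σ1 σ2) (hn : 1 ≤ n)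
    (hκ : 0 < κ) (hκ' : 0 < κ') (hκ'1 : κ' ≤ 1)
    (a : Fin n → Fin n → Bool) (hnul : ¬ NN (smat a z) Finset.univ σ y0) (i : Fin n)
    (r : Fin n → Bool)
    (g : Fin n → ℂ) (hg : ‖g‖ = 1) (hgz : ∀ j ≠ i, ((smat a z).mulVec g) j = 0)
    (u : Fin n → ℂ) (hu : ‖u‖ ≤ 1) (hMu : ∀ j, ‖((smat a z).transpose.mulVec u) j‖ ≤ n * σ1) :
    (Nul z y0 σ2 (Function.update a i r) : ℝ) ≤ Nul z y0 σ a +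
      (if ‖(smat (Function.update a i r) z).mulVec g i‖ < κ' then 1 else 0) -
      (if κ ≤ ‖u i‖ then 1 else 0) := by
  set m := Nul z y0 σ2 (Function.update a i r) with hm
  have h := Nul_spec z y0 σ2 (Function.update a i r)
  rw [← hm] at h
  have hσ1 : 0 ≤ σ1 := l.h0.trans l.h1
  have ne : ∀ j ∈ Finset.univ.erase i, smat a z j = smat (Function.update a i r) z j :=
    fun j hj => (smat_update_ne a z i r j (Finset.ne_of_mem_erase hj)).symm
  have hlt : ∀ k, NN (smat a z) Finset.univ σ k → k ≤ Nul z y0 σ a := by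
    intro k hk
    by_cases hky : k ≤ y0
    · exact le_Nul hky hk
    · exact absurd (hk.anti (not_le.1 hky).le) hnul
  -- free row
  have free : ∀ k, κ ≤ ‖u i‖ → NN (smat a z) (Finset.univ.erase i) σ1 k →
      NN (smat a z) Finset.univ σ k := fun k hk hN =>
    NN.add_row_free i u hu hk hκ hMu hσ1 l.h4 l.h2 hN
  have nonfree : ∀ k, NN (smat a z) (Finset.univ.erase i) σ1 k →
      NN (smat a z) Finset.univ σ (k - 1) := fun k hN =>
    (NN.add_row hσ1 i hN).congr (Finset.Subset.refl _) (fun _ _ => rfl) l.h2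
  have base : NN (smat a z) (Finset.univ.erase i) σ1 m :=
    h.congr (Finset.subset_univ _) ne l.h1
  have hnr : (1:ℝ) ≤ n := by exact_mod_cast hn
  have drop : ¬ ‖(smat (Function.update a i r) z).mulVec g i‖ < κ' →
      NN (smat a z) (Finset.univ.erase i) σ1 (m + 1) := by
    intro hf
    have := NN.drop_row (D := n * (1 + ‖z‖)) i g hg (fun j hj => by
      have h1 := hgz j hj
      rw [Matrix.mulVec] at h1 ⊢
      rw [smat_update_ne a z i r j hj]; exact h1) (not_lt.1 hf) hκ' (by nlinarith [norm_nonneg z])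
      (fun v => norm_mulVec_le _ _ (smat_norm_le _ z) v i) l.h0 l.h6 l.h5 h
    exact this.congr (Finset.Subset.refl _) ne le_rfl
  by_cases hf : ‖(smat (Function.update a i r) z).mulVec g i‖ < κ' <;> by_cases hk : κ ≤ ‖u i‖
  · rw [if_pos hf, if_pos hk]
    have : (m : ℝ) ≤ Nul z y0 σ a := by exact_mod_cast hlt _ (free _ hk base)
    linarith
  · rw [if_pos hf, if_neg hk]
    have := hlt _ (nonfree _ base)
    have : (m : ℝ) ≤ (Nul z y0 σ a + 1 : ℕ) := by exact_mod_cast (by omega)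
    push_cast at this
    linarith
  · rw [if_neg hf, if_pos hk]
    have : ((m + 1 : ℕ) : ℝ) ≤ Nul z y0 σ a := by exact_mod_cast hlt _ (free _ hk (drop hf))
    push_cast at this
    linarith
  · rw [if_neg hf, if_neg hk]
    have : (m : ℝ) ≤ Nul z y0 σ a := by exact_mod_cast hlt _ (nonfree _ (drop hf))
    linarith

open Classical in
/-- conditional drift for a good matrix -/
lemma drift_good {n m0 K Δ t y0 : ℕ} {z : ℂ} {δ c Q β κ κ' η P σ0 σ σ1 σ2 : ℝ}
    (p : Par n m0 K Δ t z δ c Q β κ κ' η P) (l : Lev n z c κ κ' σ σ1 σ2) (hσ0 : σ ≤ σ0)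
    {a : Fin n → Fin n → Bool} (ha : Good z m0 K Δ y0 δ σ0 a) :
    (1 / (n : ℝ)) * ∑ i, ∑ r, rowW P r * (Nul z y0 σ2 (Function.update a i r) : ℝ) ≤
      Nul z y0 σ a + (η + m0 * P) - δ * (if NN (smat a z) Finset.univ σ2 1 then 1 else 0) := by
  have hnr : (0:ℝ) < n := by exact_mod_cast p.hn
  have hσ1 : 0 ≤ σ1 := l.h0.trans l.h1
  have hnul : ¬ NN (smat a z) Finset.univ σ y0 := fun h =>
    ha.nul (h.congr (Finset.Subset.refl _) (fun _ _ => rfl) hσ0)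
  -- choose u
  obtain ⟨u, hu, hMu, hcard⟩ : ∃ u : Fin n → ℂ, ‖u‖ ≤ 1 ∧
      (∀ j, ‖((smat a z).transpose.mulVec u) j‖ ≤ n * σ1) ∧
      δ * n * (if NN (smat a z) Finset.univ σ2 1 then 1 else 0) ≤ (lev u κ).card := by
    by_cases hN : NN (smat a z) Finset.univ σ2 1
    · obtain ⟨u, hu, hMu⟩ := exists_left_of_NN hσ1 ha.det0
        (hN.congr (Finset.Subset.refl _) (fun _ _ => rfl) l.h1)
      refine ⟨u, hu.le, hMu, ?_⟩
      rw [if_pos hN, mul_one]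
      rw [smat_transpose] at hMu
      rcases deloc p.hc p.hc0 p.hc1 p.hc2 p.hD p.hQ (fun i j => a j i) ha.e2 ha.d2 p.hm0 p.hK p.hδ t
        p.ht p.hβ0 p.hβ p.hκ u hu ∅ (by simp) (n * σ1) (by positivity) (fun j _ => hMu j) l.h3
        (le_trans (by
          have := p.hQ; have := l.h3
          gcongr) p.hsmall) with h | h
      · exact h
      · obtain ⟨i, hi, _⟩ := h
        simp at hi
    · exact ⟨0, by simp, fun j => by simp; positivity, by rw [if_neg hN]; simp⟩
  choose g hg hgz using fun i => exists_ker_erase (smat a z) i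
  have hκ'1 : κ' ≤ 1 := by linarith [p.hκ'1, p.hκ1]
  have h1 : ∀ i, ∑ r, rowW P r * (Nul z y0 σ2 (Function.update a i r) : ℝ) ≤
      Nul z y0 σ a + (η + m0 * P) - (if κ ≤ ‖u i‖ then 1 else 0) := by
    intro i
    calc _ ≤ ∑ r, rowW P r * (Nul z y0 σ a +
          (if ‖(smat (Function.update a i r) z).mulVec (g i) i‖ < κ' then 1 else 0) -
          (if κ ≤ ‖u i‖ then 1 else 0)) := Finset.sum_le_sum fun r _ =>
            mul_le_mul_of_nonneg_left (step_good l p.hn p.hκ0 p.hκ'0 hκ'1 a hnul i r (g i) (hg i)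
              (hgz i) u hu hMu) (rowW_pos p.hP0 p.hP1 r).le
      _ = Nul z y0 σ a - (if κ ≤ ‖u i‖ then 1 else 0) + ∑ r, rowW P r *
          (if ‖(smat (Function.update a i r) z).mulVec (g i) i‖ < κ' then 1 else 0) := by
          have e : ∀ r : Fin n → Bool, rowW P r * (Nul z y0 σ a +
            (if ‖(smat (Function.update a i r) z).mulVec (g i) i‖ < κ' then 1 else 0) -
            (if κ ≤ ‖u i‖ then 1 else 0)) = rowW P r * (Nul z y0 σ a - (if κ ≤ ‖u i‖ then 1 else 0))
            + rowW P r * (if ‖(smat (Function.update a i r) z).mulVec (g i) i‖ < κ' then 1 else 0) :=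
            fun r => by ring
          simp only [e]
          rw [Finset.sum_add_distrib, ← Finset.sum_mul, sum_rowW, one_mul]
      _ ≤ _ := by
          have := nofail_prob p ha i (g i) (hg i) (hgz i)
          linarith
  have h2 := Finset.sum_le_sum (s := Finset.univ) fun i _ => h1 i
  have h3 : ∑ i : Fin n, (if κ ≤ ‖u i‖ then (1:ℝ) else 0) = (lev u κ).card := by
    rw [Finset.sum_boole, lev]
  rw [Finset.sum_sub_distrib, h3] at h2
  simp only [Finset.sum_const, Finset.card_univ, Fintype.card_fin, nsmul_eq_mul] at h2
  rw [one_div, inv_mul_le_iff₀ hnr]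
  refine h2.trans ?_
  rw [mul_sub]
  have : (n:ℝ) * (δ * (if NN (smat a z) Finset.univ σ2 1 then 1 else 0)) =
    δ * n * (if NN (smat a z) Finset.univ σ2 1 then 1 else 0) := by ring
  rw [this]
  linarith

open Classical in
lemma drift {n m0 K Δ t y0 : ℕ} {z : ℂ} {δ c Q β κ κ' η P σ0 σ σ1 σ2 σL s q : ℝ}
    (p : Par n m0 K Δ t z δ c Q β κ κ' η P) (l : Lev n z c κ κ' σ σ1 σ2) (hσ0 : σ ≤ σ0)
    (hq0 : 0 < q) (hq1 : q < 1) (hs : 0 < s) (hσL : σL ≤ σ2) (hδ0 : 0 ≤ δ) :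
    ∑ a : Fin n → Fin n → Bool, matW q a * (Nul z y0 σ2 a : ℝ) ≤
    ∑ a : Fin n → Fin n → Bool, matW q a * (Nul z y0 σ a : ℝ) + ((η + m0 * P) +
      2 * Pr q (fun a : Fin n → Fin n → Bool => ¬ Good z m0 K Δ y0 δ σ0 a) +
      y0 * (s + VV n q P / (n * s)) -
      δ * Pr q (fun a : Fin n → Fin n → Bool => NN (smat a z) Finset.univ σL 1)) := by
  have hnr : (0:ℝ) < n := by exact_mod_cast p.hn
  have h1 := planted_compare (P := P) p.hn hq0 hq1
    (fun a : Fin n → Fin n → Bool => (Nul z y0 σ2 a : ℝ)) y0 s hs (fun a => Nat.cast_nonneg _)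
    (fun a => by exact_mod_cast Nul_le z y0 σ2 a)
  have h2 : ∀ a : Fin n → Fin n → Bool,
      (1 / (n : ℝ)) * ∑ i, ∑ r, rowW P r * (Nul z y0 σ2 (Function.update a i r) : ℝ) ≤
      Nul z y0 σ a + (η + m0 * P) + 2 * (if ¬ Good z m0 K Δ y0 δ σ0 a then 1 else 0) -
        δ * (if NN (smat a z) Finset.univ σL 1 then 1 else 0) := by
    intro a
    have hη := p.hη0
    have hm0P : 0 ≤ m0 * P := mul_nonneg (Nat.cast_nonneg _) p.hP0.le
    by_cases ha : Good z m0 K Δ y0 δ σ0 a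
    · have := drift_good p l hσ0 ha
      rw [if_neg (not_not.2 ha)]
      refine this.trans ?_
      have : (if NN (smat a z) Finset.univ σL 1 then (1:ℝ) else 0) ≤
          (if NN (smat a z) Finset.univ σ2 1 then (1:ℝ) else 0) := by
        by_cases h : NN (smat a z) Finset.univ σL 1
        · rw [if_pos h, if_pos (h.congr (Finset.Subset.refl _) (fun _ _ => rfl) hσL)]
        · rw [if_neg h]; split_ifs <;> simp
      have := mul_le_mul_of_nonneg_left this hδ0
      linarith
    · rw [if_pos ha]
      have h3 : (1 / (n : ℝ)) * ∑ i, ∑ r, rowW P r * (Nul z y0 σ2 (Function.update a i r) : ℝ) ≤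
          Nul z y0 σ a + 1 := by
        calc _ ≤ (1 / (n : ℝ)) * ∑ i : Fin n, ∑ r : Fin n → Bool,
              rowW P r * ((Nul z y0 σ a + 1 : ℕ) : ℝ) := by
              have := fun i r => step_any (y0 := y0) l a i r
              gcongr with i _ r _
              · exact (rowW_pos p.hP0 p.hP1 r).le
              · exact this i r
          _ = _ := by
              simp only [← Finset.sum_mul, sum_rowW]
              simp
              field_simp
      refine h3.trans ?_
      have : δ * (if NN (smat a z) Finset.univ σL 1 then (1:ℝ) else 0) ≤ 1 := by
        have := p.hδ
        split_ifs <;> linarith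
      linarith
  refine h1.trans ?_
  have h4 := Finset.sum_le_sum (s := Finset.univ) fun a _ =>
    mul_le_mul_of_nonneg_left (h2 a) (matW_pos hq0 hq1 a).le
  have e : ∀ a : Fin n → Fin n → Bool, matW q a * (Nul z y0 σ a + (η + m0 * P) +
      2 * (if ¬ Good z m0 K Δ y0 δ σ0 a then 1 else 0) -
        δ * (if NN (smat a z) Finset.univ σL 1 then 1 else 0)) =
      matW q a * (Nul z y0 σ a : ℝ) + matW q a * (η + m0 * P) +
      2 * (matW q a * (if ¬ Good z m0 K Δ y0 δ σ0 a then 1 else 0)) -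
      δ * (matW q a * (if NN (smat a z) Finset.univ σL 1 then 1 else 0)) := fun a => by ring
  simp only [e] at h4
  rw [Finset.sum_sub_distrib, Finset.sum_add_distrib, Finset.sum_add_distrib, ← Finset.mul_sum,
    ← Finset.mul_sum, ← Finset.sum_mul, sum_matW, one_mul] at h4
  have e2 : Pr q (fun a : Fin n → Fin n → Bool => ¬ Good z m0 K Δ y0 δ σ0 a) =
      ∑ a : Fin n → Fin n → Bool, matW q a * (if ¬ Good z m0 K Δ y0 δ σ0 a then 1 else 0) := by
    unfold Pr
    refine Finset.sum_congr rfl fun a _ => ?_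
    by_cases h : Good z m0 K Δ y0 δ σ0 a <;> simp [h]
  have e3 : Pr q (fun a : Fin n → Fin n → Bool => NN (smat a z) Finset.univ σL 1) =
      ∑ a : Fin n → Fin n → Bool, matW q a * (if NN (smat a z) Finset.univ σL 1 then 1 else 0) := rfl
  rw [e2, e3]
  linarith

/-- telescoping -/
lemma telescope {n m0 K Δ t y0 L : ℕ} {z : ℂ} {δ c Q β κ κ' η P s q τ σ0 : ℝ}
    (p : Par n m0 K Δ t z δ c Q β κ κ' η P) (hδ0 : 0 ≤ δ)
    (hq0 : 0 < q) (hq1 : q < 1) (hs : 0 < s) (hL : 1 ≤ L)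
    (hτ0 : 0 < τ) (hτ : τ ≤ κ * κ' / (8 * n ^ 3 * (1 + ‖z‖))) (hσ0 : 0 < σ0) (hσc : σ0 ≤ c) :
    δ * Pr q (fun a : Fin n → Fin n → Bool => NN (smat a z) Finset.univ (τ ^ L * σ0) 1) ≤
      y0 / L + (η + m0 * P) +
      2 * Pr q (fun a : Fin n → Fin n → Bool => ¬ Good z m0 K Δ y0 δ σ0 a) +
      y0 * (s + VV n q P / (n * s)) := by
  have hn1 : (1:ℝ) ≤ n := by exact_mod_cast p.hn
  have hκ := p.hκ0
  have hκ1 := p.hκ1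
  have hκ' := p.hκ'0
  have hc := p.hc
  have hc2 := p.hc2
  have hz := norm_nonneg z
  have hκ'1 : κ' ≤ 1 := by linarith [p.hκ'1]
  have hτ1 : τ ≤ 1 := by
    refine hτ.trans ?_
    rw [div_le_one (by positivity)]
    have h8 : (1:ℝ) ≤ n ^ 3 := one_le_pow₀ hn1
    have : κ * κ' ≤ 1 := by nlinarith
    have : (1:ℝ) ≤ n ^ 3 * (1 + ‖z‖) := by nlinarith
    nlinarith
  have hpow : ∀ k, τ ^ k ≤ 1 := fun k => pow_le_one₀ hτ0.le hτ1
  have lev : ∀ k, Lev n z c κ κ' (τ ^ k * σ0) (κ * (τ ^ k * σ0) / (2 * n ^ 2)) (τ ^ (k+1) * σ0) := by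
    intro k
    set σ := τ ^ k * σ0 with hσ
    have hσp : 0 < σ := by positivity
    have hσ1 : σ ≤ c := le_trans (by rw [hσ]; nlinarith [hpow k]) hσc
    have e : τ ^ (k+1) * σ0 = τ * σ := by rw [hσ]; ring
    rw [e]
    set σ1 := κ * σ / (2 * n ^ 2) with hsd1
    have hsp1 : 0 < σ1 := by positivity
    have hle : τ * σ * (4 * (n * (1 + ‖z‖))) ≤ κ' * σ1 := by
      calc τ * σ * (4 * (n * (1 + ‖z‖))) ≤
          κ * κ' / (8 * n ^ 3 * (1 + ‖z‖)) * σ * (4 * (n * (1 + ‖z‖))) := by gcongr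
        _ = κ' * σ1 := by rw [hsd1]; field_simp; norm_num
    have h12 : σ1 ≤ σ := by
      rw [hsd1, div_le_iff₀ (by positivity)]
      have : (1:ℝ) ≤ n ^ 2 := one_le_pow₀ hn1
      nlinarith
    have hD : (4:ℝ) ≤ 4 * (n * (1 + ‖z‖)) := by nlinarith
    have hτσ : 0 < τ * σ := by positivity
    have hnn : n * σ1 = κ * σ / (2 * n) := by rw [hsd1]; field_simp
    have hhalf : n * σ1 ≤ κ * σ / 2 := by
      rw [hnn]
      gcongr; linarith
    refine ⟨hτσ.le, ?_, h12, ?_, ?_, ?_, ?_⟩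
    · nlinarith
    · nlinarith
    · have : n * (n * σ1) = κ * σ / 2 := by rw [hsd1]; field_simp
      linarith
    · linarith
    · have : σ1 ≤ 1 := by linarith
      nlinarith
  set B := (η + m0 * P) +
      2 * Pr q (fun a : Fin n → Fin n → Bool => ¬ Good z m0 K Δ y0 δ σ0 a) +
      y0 * (s + VV n q P / (n * s)) -
      δ * Pr q (fun a : Fin n → Fin n → Bool => NN (smat a z) Finset.univ (τ ^ L * σ0) 1) with hB
  have ind : ∀ k ≤ L, ∑ a : Fin n → Fin n → Bool, matW q a * (Nul z y0 (τ ^ k * σ0) a : ℝ) ≤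
      y0 + k * B := by
    intro k
    induction k with
    | zero =>
      intro _
      calc _ ≤ ∑ a : Fin n → Fin n → Bool, matW q a * (y0 : ℝ) := by
            refine Finset.sum_le_sum fun a _ => mul_le_mul_of_nonneg_left ?_ (matW_pos hq0 hq1 a).le
            exact_mod_cast Nul_le z y0 _ a
        _ = _ := by rw [← Finset.sum_mul, sum_matW]; simp
    | succ k ih =>
      intro hk
      have h1 := drift (y0 := y0) p (lev k) (σ0 := σ0) (by nlinarith [hpow k]) hq0 hq1 hs (σL := τ ^ L * σ0)
        (by
          have := pow_le_pow_of_le_one hτ0.le hτ1 hk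
          gcongr) hδ0
      have := ih (by omega)
      push_cast
      linarith
  have h1 := ind L le_rfl
  have h0 : 0 ≤ ∑ a : Fin n → Fin n → Bool, matW q a * (Nul z y0 (τ ^ L * σ0) a : ℝ) :=
    Finset.sum_nonneg fun a _ => mul_nonneg (matW_pos hq0 hq1 a).le (Nat.cast_nonneg _)
  have hLr : (0:ℝ) < L := by exact_mod_cast hL
  have h2 : 0 ≤ y0 / L + B := by
    have : y0 / L + B = (y0 + L * B) / L := by field_simp
    rw [this]; apply div_nonneg _ hLr.le; linarith
  linarith

end PartPF

section PartPG

open MeasureTheory in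
/-- points near the spectrum -/
def nearSpec {n : ℕ} (a : Fin n → Fin n → Bool) (ρ : ℝ) : Set ℂ :=
  ⋃ w ∈ (smat a 0).charpoly.roots.toFinset, Metric.ball w ρ

lemma nearSpec_open {n : ℕ} (a : Fin n → Fin n → Bool) (ρ : ℝ) : IsOpen (nearSpec a ρ) :=
  isOpen_biUnion fun _ _ => Metric.isOpen_ball

lemma smat_det {n : ℕ} (a : Fin n → Fin n → Bool) (z : ℂ) :
    ‖(smat a z).det‖ = ‖(smat a 0).charpoly.eval z‖ := by
  rw [Matrix.eval_charpoly]
  have : Matrix.scalar (Fin n) z - smat a 0 = -(smat a z) := by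
    ext i j
    simp only [Matrix.sub_apply, Matrix.neg_apply, smat_apply, Matrix.scalar_apply,
      Matrix.diagonal_apply]
    split_ifs <;> ring
  rw [this, Matrix.det_neg, norm_mul]
  simp

lemma nearSpec_det {n : ℕ} (a : Fin n → Fin n → Bool) {ρ : ℝ} (hρ : 0 ≤ ρ) {z : ℂ}
    (hz : z ∉ nearSpec a ρ) : ρ ^ n ≤ ‖(smat a z).det‖ := by
  have hs : (smat a 0).charpoly.Splits := IsAlgClosed.splits _
  have hm := Matrix.charpoly_monic (smat a 0)
  rw [smat_det, hs.eval_eq_prod_roots_of_monic hm]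
  have hcard : (smat a 0).charpoly.roots.card = n := by
    rw [← hs.natDegree_eq_card_roots, Matrix.charpoly_natDegree_eq_dim, Fintype.card_fin]
  simp only [nearSpec, Set.mem_iUnion, not_exists, Metric.mem_ball, not_lt, Multiset.mem_toFinset] at hz
  have key : ∀ s : Multiset ℂ, (∀ w ∈ s, ρ ≤ dist z w) →
      ρ ^ s.card ≤ ‖(s.map fun w => z - w).prod‖ := by
    intro s
    induction s using Multiset.induction with
    | empty => intro _; simp
    | cons w s ih =>
      intro h
      rw [Multiset.card_cons, Multiset.map_cons, Multiset.prod_cons, norm_mul, pow_succ, mul_comm]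
      refine mul_le_mul ?_ (ih fun w hw => h w (Multiset.mem_cons_of_mem hw)) (by positivity)
        (norm_nonneg _)
      rw [← dist_eq_norm]
      exact h w (Multiset.mem_cons_self _ _)
  have := key _ hz
  rwa [hcard] at this

open MeasureTheory in
lemma nearSpec_vol {n : ℕ} (a : Fin n → Fin n → Bool) {ρ : ℝ} (hρ : 0 ≤ ρ) :
    volume (nearSpec a ρ) ≤ ENNReal.ofReal (n * (ρ ^ 2 * Real.pi)) := by
  have h1 : volume (nearSpec a ρ) ≤
      ∑ w ∈ (smat a 0).charpoly.roots.toFinset, volume (Metric.ball w ρ) :=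
    measure_biUnion_finset_le _ _
  refine h1.trans ?_
  have hcard : (smat a 0).charpoly.roots.toFinset.card ≤ n := by
    refine (Multiset.toFinset_card_le _).trans ((Polynomial.card_roots' _).trans ?_)
    rw [Matrix.charpoly_natDegree_eq_dim, Fintype.card_fin]
  have e : ∀ w : ℂ, volume (Metric.ball w ρ) = ENNReal.ofReal (ρ ^ 2 * Real.pi) := by
    intro w
    rw [Complex.volume_ball, ENNReal.ofReal_mul (by positivity), ENNReal.ofReal_pow hρ]
    congr 1
    rw [← NNReal.coe_real_pi, ENNReal.ofReal_coe_nnreal]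
  simp only [e, Finset.sum_const, nsmul_eq_mul]
  rw [ENNReal.ofReal_mul (p := (n:ℝ)) (by positivity), ENNReal.ofReal_natCast]
  gcongr

open MeasureTheory Classical in
lemma det_prob (d : ℝ) (hd : 0 < d) : ∀ᵐ z ∂(volume : Measure ℂ), Filter.Tendsto
    (fun n : ℕ => Pr (d / n) (fun a : Fin n → Fin n → Bool => ‖(smat a z).det‖ < (1 / (n:ℝ) ^ 2) ^ n))
    Filter.atTop (nhds 0) := by
  let h : ℕ → ℂ → ENNReal := fun n z => if d < n then ∑ a : Fin n → Fin n → Bool,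
    ENNReal.ofReal (matW (d / n) a) * (nearSpec a (1 / (n:ℝ) ^ 2)).indicator 1 z else 0
  have hmeas : ∀ n, Measurable (h n) := by
    intro n
    by_cases hn : d < n
    · simp only [h, hn, if_true]
      refine Finset.measurable_sum _ fun a _ => Measurable.const_mul ?_ _
      exact measurable_one.indicator (nearSpec_open a _).measurableSet
    · simp only [h, hn, if_false]
      exact measurable_const
  have hintg : ∀ n, ∫⁻ z, h n z ≤ ENNReal.ofReal (Real.pi * (1 / (n:ℝ) ^ 2)) := by
    intro n
    by_cases hn : d < n
    · have hn0 : (0:ℝ) < n := by linarith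
      have hn1 : (1:ℝ) ≤ n := by
        have : 0 < n := by exact_mod_cast hn0
        exact_mod_cast this
      have hp0 : 0 < d / n := by positivity
      have hp1 : d / n < 1 := by rw [div_lt_one hn0]; exact hn
      simp only [h, hn, if_true]
      rw [lintegral_finsetSum]
      · calc _ ≤ ∑ a : Fin n → Fin n → Bool, ENNReal.ofReal (matW (d / n) a) *
              ENNReal.ofReal (Real.pi * (1 / (n:ℝ) ^ 2)) := by
              refine Finset.sum_le_sum fun a _ => ?_
              rw [lintegral_const_mul _ (measurable_one.indicator (nearSpec_open a _).measurableSet)]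
              gcongr
              rw [lintegral_indicator_one (nearSpec_open a _).measurableSet]
              refine (nearSpec_vol a (by positivity)).trans ?_
              apply ENNReal.ofReal_le_ofReal
              have : n * ((1 / (n:ℝ) ^ 2) ^ 2 * Real.pi) = Real.pi * (1 / (n:ℝ) ^ 3) := by
                field_simp
              rw [this]
              gcongr
              norm_num
          _ = _ := by
              rw [← Finset.sum_mul, ← ENNReal.ofReal_sum_of_nonneg fun a _ => (matW_pos hp0 hp1 a).le,
                sum_matW]
              simp
      · intro a _
        exact Measurable.const_mul (measurable_one.indicator (nearSpec_open a _).measurableSet) _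
    · simp [h, hn]
  have hsum : ∫⁻ z, ∑' n, h n z ≠ ⊤ := by
    rw [lintegral_tsum fun n => (hmeas n).aemeasurable]
    refine ne_top_of_le_ne_top ?_ (ENNReal.tsum_le_tsum hintg)
    exact ((Real.summable_one_div_nat_pow.2 (by norm_num)).mul_left _).tsum_ofReal_ne_top
  filter_upwards [ae_lt_top (Measurable.tsum hmeas) hsum] with z hz
  have ht := ENNReal.tendsto_atTop_zero_of_tsum_ne_top hz.ne
  have ht2 := (ENNReal.tendsto_toReal ENNReal.zero_ne_top).comp ht
  simp only [ENNReal.toReal_zero] at ht2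
  have hev : ∀ᶠ n : ℕ in Filter.atTop, d < n := by
    filter_upwards [Filter.eventually_gt_atTop ⌈d⌉₊] with n hn
    exact (Nat.le_ceil d).trans_lt (by exact_mod_cast hn)
  refine squeeze_zero' ?_ ?_ ht2
  · filter_upwards [hev] with n hn
    have hn0 : (0:ℝ) < n := by linarith
    exact Pr_nonneg (by positivity) (by rw [div_lt_one hn0]; exact hn) _
  · filter_upwards [hev] with n hn
    have hn0 : (0:ℝ) < n := by linarith
    have hp0 : 0 < d / n := by positivity
    have hp1 : d / n < 1 := by rw [div_lt_one hn0]; exact hn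
    simp only [Function.comp, h, hn, if_true]
    rw [ENNReal.toReal_sum]
    · refine Finset.sum_le_sum fun a _ => ?_
      rw [ENNReal.toReal_mul, ENNReal.toReal_ofReal (matW_pos hp0 hp1 a).le]
      refine mul_le_mul_of_nonneg_left ?_ (matW_pos hp0 hp1 a).le
      by_cases hz : z ∈ nearSpec a (1 / (n:ℝ) ^ 2)
      · rw [Set.indicator_of_mem hz]; split_ifs <;> simp
      · rw [if_neg (not_lt.2 (nearSpec_det a (by positivity) hz))]
        simp
    · intro a _
      refine ENNReal.mul_ne_top ENNReal.ofReal_ne_top ?_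
      by_cases hz : z ∈ nearSpec a (1 / (n:ℝ) ^ 2)
      · rw [Set.indicator_of_mem hz]; simp
      · rw [Set.indicator_of_notMem hz]; simp

lemma inv_bound {m : ℕ} (B : Fin m → Fin m → Bool) (z : ℂ) (v : Fin m → ℂ) :
    ‖(smat B z).det‖ * ‖v‖ ≤ m * (m.factorial * (1 + ‖z‖) ^ m) * ‖(smat B z).mulVec v‖ := by
  have h1 : (smat B z).det • v = (smat B z).adjugate.mulVec ((smat B z).mulVec v) := by
    rw [Matrix.mulVec_mulVec, Matrix.adjugate_mul, Matrix.smul_mulVec, Matrix.one_mulVec]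
  rw [← norm_smul, h1, pi_norm_le_iff_of_nonneg (by positivity)]
  intro i
  refine norm_mulVec_le _ _ ?_ _ i
  intro i j
  rw [Matrix.adjugate_apply]
  have := norm_det_le_cols ((smat B z).updateRow j (Pi.single i 1)) (fun _ => 1 + ‖z‖) ?_
  · simpa using this
  · intro k l
    by_cases hk : k = j
    · subst hk
      rw [Matrix.updateRow_self, Pi.single_apply]
      have := norm_nonneg z
      split_ifs <;> simp <;> linarith
    · rw [Matrix.updateRow_ne hk]
      exact smat_norm_le B z k l

lemma exists_pos_lb {ι : Type*} [Finite ι] (f : ι → ℝ) (hf : ∀ i, 0 < f i) :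
    ∃ C : ℝ, 0 < C ∧ C ≤ 1 ∧ ∀ i, C ≤ f i := by
  rcases isEmpty_or_nonempty ι with h | h
  · exact ⟨1, one_pos, le_rfl, fun i => h.elim i⟩
  · obtain ⟨i, hi⟩ := Finite.exists_min f
    exact ⟨min 1 (f i), lt_min one_pos (hf i), min_le_left _ _, fun j => (min_le_right _ _).trans (hi j)⟩

lemma dioph_sum1 : ∑' m : ℕ, ENNReal.ofReal (Real.pi * ((m:ℝ) ^ 1 * (1/2:ℝ) ^ m)) ≠ ⊤ := by
  have h0 : Summable fun m : ℕ => ((m:ℝ) ^ 1 * (1/2:ℝ) ^ m) :=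
    summable_pow_mul_geometric_of_norm_lt_one 1 (by norm_num)
  exact (h0.mul_left Real.pi).tsum_ofReal_ne_top

open MeasureTheory in
lemma dioph_sum2 (m : ℕ) : volume (⋃ B : Fin m → Fin m → Bool, nearSpec B (1 / 2 ^ (m ^ 2))) ≤
    ENNReal.ofReal (Real.pi * ((m:ℝ) ^ 1 * (1/2:ℝ) ^ m)) := by
  refine (measure_iUnion_fintype_le _ _).trans ?_
  calc _ ≤ ∑ _B : Fin m → Fin m → Bool,
        ENNReal.ofReal (m * ((1 / 2 ^ (m ^ 2)) ^ 2 * Real.pi)) :=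
        Finset.sum_le_sum fun B _ => nearSpec_vol B (by positivity)
    _ = ENNReal.ofReal (2 ^ (m ^ 2) * (m * ((1 / 2 ^ (m ^ 2)) ^ 2 * Real.pi))) := by
        rw [Finset.sum_const, nsmul_eq_mul, ENNReal.ofReal_mul (p := 2 ^ (m ^ 2)) (by positivity)]
        congr 1
        simp only [Finset.card_univ, Fintype.card_pi, Fintype.card_bool, Finset.prod_const,
          Fintype.card_fin]
        rw [← pow_mul, ← pow_two]
        push_cast
        rw [ENNReal.ofReal_pow (by norm_num)]
        simp
    _ ≤ _ := by
        apply ENNReal.ofReal_le_ofReal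
        have e : (2:ℝ) ^ (m ^ 2) * (m * ((1 / 2 ^ (m ^ 2)) ^ 2 * Real.pi)) =
          Real.pi * (m ^ 1 * (1 / 2) ^ (m ^ 2)) := by
          simp only [one_div_pow]
          field_simp
        rw [e]
        have : (1/2 : ℝ) ^ (m ^ 2) ≤ (1/2) ^ m :=
          pow_le_pow_of_le_one (by norm_num) (by norm_num) (Nat.le_self_pow (by norm_num) m)
        gcongr

open MeasureTheory in
lemma dioph_ae : ∀ᵐ z ∂(volume : Measure ℂ), z ≠ 0 ∧ z ≠ 1 ∧ ∃ C : ℝ, 0 < C ∧ ∀ m0 : ℕ, ∀ Q : ℝ,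
    C * (m0 * (m0.factorial * (1 + ‖z‖) ^ m0) * 2 ^ (m0 ^ 3)) ≤ Q → DiophZ z m0 Q := by
  have h1 : ∑' m : ℕ, volume (⋃ B : Fin m → Fin m → Bool, nearSpec B (1 / 2 ^ (m ^ 2))) ≠ ⊤ :=
    ne_top_of_le_ne_top dioph_sum1 (ENNReal.tsum_le_tsum dioph_sum2)
  have h2 : ∀ᵐ z ∂(volume : Measure ℂ), ∀ m : ℕ, ∀ B : Fin m → Fin m → Bool,
      (smat B z).det ≠ 0 := by
    rw [ae_all_iff]; intro m
    rw [ae_all_iff]; intro B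
    have hfin : (({x | x ∈ (smat B 0).charpoly.roots.toFinset} : Set ℂ)).Finite :=
      Finset.finite_toSet (smat B 0).charpoly.roots.toFinset
    have := hfin.measure_zero volume
    rw [← compl_compl {x | x ∈ (smat B 0).charpoly.roots.toFinset}] at this
    filter_upwards [this] with z hz hdet
    apply hz
    have e := smat_det B z
    rw [hdet, norm_zero, eq_comm, norm_eq_zero] at e
    show z ∈ (smat B 0).charpoly.roots.toFinset
    rw [Multiset.mem_toFinset, Polynomial.mem_roots (Matrix.charpoly_monic _).ne_zero]
    exact e
  filter_upwards [ae_eventually_notMem h1, h2, (Set.finite_singleton (0:ℂ)).countable.ae_notMem volume,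
    (Set.finite_singleton (1:ℂ)).countable.ae_notMem volume] with z hz1 hz2 hz3 hz4
  refine ⟨by simpa using hz3, by simpa using hz4, ?_⟩
  obtain ⟨M, hM⟩ := Filter.eventually_atTop.1 hz1
  obtain ⟨C, hC0, hC1, hC⟩ := exists_pos_lb (ι := Σ m : Fin M, (Fin m → Fin m → Bool))
    (fun x => ‖(smat x.2 z).det‖) (fun x => norm_pos_iff.2 (hz2 _ x.2))
  have hdet : ∀ m : ℕ, ∀ B : Fin m → Fin m → Bool, C / 2 ^ (m ^ 3) ≤ ‖(smat B z).det‖ := by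
    intro m B
    by_cases hm : m < M
    · refine le_trans ?_ (hC ⟨⟨m, hm⟩, B⟩)
      exact div_le_self hC0.le (one_le_pow₀ (by norm_num))
    · have h3 := hM m (not_lt.1 hm)
      simp only [Set.mem_iUnion, not_exists] at h3
      refine le_trans ?_ (nearSpec_det B (by positivity) (h3 B))
      rw [one_div_pow, ← pow_mul]
      have : m ^ 2 * m = m ^ 3 := by ring
      rw [this]
      gcongr
  refine ⟨1 / C, by positivity, ?_⟩
  intro m0 Q hQ m hm B v
  have hb := inv_bound B z v
  have hd := hdet m B
  have hX : m * (m.factorial * (1 + ‖z‖) ^ m) * 2 ^ (m ^ 3) ≤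
      (m0 * (m0.factorial * (1 + ‖z‖) ^ m0) * 2 ^ (m0 ^ 3) : ℝ) := by
    have := norm_nonneg z
    gcongr <;> linarith
  set X := (m * (m.factorial * (1 + ‖z‖) ^ m) : ℝ) with hXd
  set N := ‖(smat B z).mulVec v‖ with hN
  have h5 : C / 2 ^ (m ^ 3) * ‖v‖ ≤ X * N := (mul_le_mul_of_nonneg_right hd (norm_nonneg _)).trans hb
  have h6 : ‖v‖ ≤ 1 / C * (X * 2 ^ (m ^ 3)) * N := by
    calc ‖v‖ = (2 ^ (m ^ 3) / C) * (C / 2 ^ (m ^ 3) * ‖v‖) := by field_simp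
      _ ≤ (2 ^ (m ^ 3) / C) * (X * N) := by gcongr
      _ = _ := by ring
  refine h6.trans (mul_le_mul_of_nonneg_right (le_trans ?_ hQ) (norm_nonneg _))
  gcongr

end PartPG

section PartPH
open MeasureTheory

/-- cast -/
noncomputable def bcast (b : Bool) : ℂ := if b then 1 else 0

noncomputable def mcast {n : ℕ} (a : Fin n → Fin n → Bool) : Fin n → Fin n → ℂ :=
  fun i j => bcast (a i j)

lemma mcast_sub {n : ℕ} (a : Fin n → Fin n → Bool) (z : ℂ) :
    Matrix.of (mcast a) - z • 1 = smat a z := by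
  ext i j
  simp only [Matrix.sub_apply, Matrix.of_apply, mcast, bcast, smat_apply, Matrix.smul_apply,
    Matrix.one_apply, smul_eq_mul, mul_ite, mul_one, mul_zero]

lemma bern_prob {p : ℝ} (h0 : 0 < p) (h1 : p < 1) : IsProbabilityMeasure (bernoulliC p) := by
  constructor
  simp only [bernoulliC, Measure.add_apply, Measure.smul_apply, measure_univ, smul_eq_mul, mul_one]
  rw [← ENNReal.ofReal_add h0.le (by linarith)]
  simp

lemma bern_single {p : ℝ} (b : Bool) : bernoulliC p {bcast b} = ENNReal.ofReal (wt p b) := by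
  cases b <;> simp [bernoulliC, bcast, wt, Measure.dirac_apply]

open Classical in
lemma law_le {n : ℕ} {p : ℝ} (h0 : 0 < p) (h1 : p < 1) (E : Set (Fin n → Fin n → ℂ))
    (F : (Fin n → Fin n → Bool) → Prop) (h : ∀ a, mcast a ∈ E → F a) :
    iidMatrixLaw n p E ≤ ENNReal.ofReal (Pr p F) := by
  haveI := bern_prob h0 h1
  haveI : IsProbabilityMeasure (iidMatrixLaw n p) := by
    unfold iidMatrixLaw; infer_instance
  have hs : ∀ a : Fin n → Fin n → Bool, iidMatrixLaw n p {mcast a} = ENNReal.ofReal (matW p a) := by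
    intro a
    rw [iidMatrixLaw, Measure.pi_singleton]
    simp only [Measure.pi_singleton, mcast, bern_single]
    rw [matW, ENNReal.ofReal_prod_of_nonneg fun i _ => (rowW_pos h0 h1 _).le]
    refine Finset.prod_congr rfl fun i _ => ?_
    rw [rowW, ENNReal.ofReal_prod_of_nonneg fun i _ => (wt_pos h0 h1 _).le]
  have hinj : Function.Injective (mcast (n := n)) := by
    intro a b hab
    ext i j
    have := congrFun (congrFun hab i) j
    simp only [mcast, bcast] at this
    cases h1 : a i j <;> cases h2 : b i j <;> simp_all
  let S : Finset (Fin n → Fin n → Bool) → Finset (Fin n → Fin n → ℂ) := fun T => T.image mcast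
  have hS : ∀ T, iidMatrixLaw n p (S T : Set (Fin n → Fin n → ℂ)) = ENNReal.ofReal (∑ a ∈ T, matW p a) := by
    intro T
    rw [← sum_measure_singleton, Finset.sum_image fun x _ y _ hxy => hinj hxy,
      ENNReal.ofReal_sum_of_nonneg fun a _ => (matW_pos h0 h1 a).le]
    exact Finset.sum_congr rfl fun a _ => hs a
  have hfull : iidMatrixLaw n p ((S Finset.univ : Set (Fin n → Fin n → ℂ))ᶜ) = 0 := by
    rw [prob_compl_eq_zero_iff (Finset.measurableSet _), hS, sum_matW]
    simp
  have hsub : E ⊆ (S (Finset.univ.filter F) : Set (Fin n → Fin n → ℂ)) ∪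
      (S Finset.univ : Set (Fin n → Fin n → ℂ))ᶜ := by
    intro x hx
    by_cases hx2 : x ∈ (S Finset.univ : Set (Fin n → Fin n → ℂ))
    · left
      simp only [S, Finset.coe_image, Set.mem_image, Finset.mem_coe, Finset.mem_univ, true_and,
        Finset.mem_filter] at hx2 ⊢
      obtain ⟨a, rfl⟩ := hx2
      exact ⟨a, h a hx, rfl⟩
    · right; exact hx2
  refine (measure_mono hsub).trans ((measure_union_le _ _).trans ?_)
  rw [hfull, add_zero, hS]
  apply ENNReal.ofReal_le_ofReal
  rw [Pr, Finset.sum_filter]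
  exact (Finset.sum_congr rfl fun a _ => by split_ifs <;> simp).le

lemma vecNorm2_smul_norm {n : ℕ} (v : Fin n → ℂ) (i : Fin n) : ‖v i‖ ≤ vecNorm2 v := by
  unfold vecNorm2
  apply Real.le_sqrt_of_sq_le
  exact Finset.single_le_sum (f := fun i => ‖v i‖ ^ 2) (fun i _ => by positivity) (Finset.mem_univ i)

lemma vecNorm2_le {n : ℕ} (v : Fin n → ℂ) : vecNorm2 v ≤ n * ‖v‖ := by
  unfold vecNorm2
  apply Real.sqrt_le_iff.2
  refine ⟨by positivity, ?_⟩
  calc ∑ i, ‖v i‖ ^ 2 ≤ ∑ _i : Fin n, ‖v‖ ^ 2 := by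
        refine Finset.sum_le_sum fun i _ => ?_
        have := norm_le_pi_norm v i
        gcongr
    _ = n * ‖v‖ ^ 2 := by simp
    _ ≤ n ^ 2 * ‖v‖ ^ 2 := by
        gcongr
        exact_mod_cast Nat.le_self_pow (by norm_num) n
    _ = _ := by ring

lemma NN_of_lsv {n : ℕ} (M : Matrix (Fin n) (Fin n) ℂ) (hn : 1 ≤ n) {x : ℝ} (hx : 0 < x)
    (h : leastSingVal M ≤ x) : NN M Finset.univ (n * (2 * x)) 1 := by
  have hne : {r | ∃ v : Fin n → ℂ, vecNorm2 v = 1 ∧ r = vecNorm2 (M.mulVec v)}.Nonempty := by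
    refine ⟨_, Pi.single ⟨0, hn⟩ 1, ?_, rfl⟩
    unfold vecNorm2
    rw [Finset.sum_eq_single ⟨0, hn⟩]
    · simp
    · intro b _ hb; simp [Pi.single_apply, hb]
    · simp
  have h2 : leastSingVal M < 2 * x := by linarith
  obtain ⟨r, ⟨v, hv, rfl⟩, hr⟩ := exists_lt_of_csInf_lt hne h2
  have hv0 : v ≠ 0 := by
    rintro rfl
    simp [vecNorm2] at hv
  refine ⟨ℂ ∙ v, finrank_span_singleton hv0, ?_⟩
  intro w hw i _
  obtain ⟨c, rfl⟩ := Submodule.mem_span_singleton.1 hw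
  rw [Matrix.mulVec_smul, Pi.smul_apply, norm_smul, norm_smul]
  have h3 := (vecNorm2_smul_norm (M.mulVec v) i).trans hr.le
  have h4 := vecNorm2_le v
  rw [hv] at h4
  calc ‖c‖ * ‖M.mulVec v i‖ ≤ ‖c‖ * (2 * x) := by gcongr
    _ = ‖c‖ * (2 * x) * 1 := by ring
    _ ≤ ‖c‖ * (2 * x) * (n * ‖v‖) := by gcongr
    _ = _ := by ring

end PartPH

section PartPI

/-- polynomial exponent bounding `log Q` -/
noncomputable def qq (b x : ℝ) : ℝ := 1 + b + 2 * x ^ 2 + 4 * x ^ 4 + 2 * b * x ^ 2 + 8 * x ^ 6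

lemma poly_facts {b x : ℝ} (hb : 0 ≤ b) (hx : b + 100 ≤ x) :
    b + qq b x + (x + 1) + 10 + 2 * b ≤ x ^ 7 ∧ x ^ 7 + 100 ≤ x ^ 10 ∧
    2 * x ^ 9 + (2 * b + x + 4) * (2 * x ^ 2 * (3 * x + 1) * (x + 1)) ≤ x ^ 10 ∧
    x ^ 10 + 3 ≤ x ^ 11 ∧ x ^ 10 + x ^ 11 + 3 + 3 * (x + 1) + b ≤ x ^ 12 := by
  have hx1 : 1 ≤ x := by linarith
  have step : ∀ k : ℕ, b * x ^ k + 100 * x ^ k ≤ x ^ (k + 1) := by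
    intro k
    have h0 : 0 ≤ x ^ k := by positivity
    rw [pow_succ']
    nlinarith [mul_le_mul_of_nonneg_right hx h0]
  have pos : ∀ k : ℕ, 0 ≤ b * x ^ k := fun k => by positivity
  have s0 := step 0; have s1 := step 1; have s2 := step 2; have s3 := step 3
  have s4 := step 4; have s5 := step 5; have s6 := step 6; have s7 := step 7
  have s8 := step 8; have s9 := step 9; have s10 := step 10; have s11 := step 11
  have p0 := pos 0; have p1 := pos 1; have p2 := pos 2; have p3 := pos 3
  have p4 := pos 4; have p5 := pos 5; have p6 := pos 6; have p7 := pos 7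
  have p8 := pos 8; have p9 := pos 9; have p10 := pos 10; have p11 := pos 11
  have m1 := mul_le_mul_of_nonneg_left s2 hb
  have m2 := mul_le_mul_of_nonneg_left s3 hb
  norm_num at s0 s1 s2 s3 s4 s5 s6 s7 s8 s9 s10 s11 p0 p1
  unfold qq
  refine ⟨?_, ?_, ?_, ?_, ?_⟩
  · linarith
  · linarith
  · ring_nf
    ring_nf at s0 s1 s2 s3 s4 s5 s6 s7 s8 s9 s10 s11 p0 p1 p2 p3 p4 p5 p6 p7 p8 p9 
    linarith
  · linarith
  · linarith

lemma fact_le_exp (m : ℕ) : (m.factorial : ℝ) ≤ Real.exp (m ^ 2) := by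
  have h1 : (m.factorial : ℝ) ≤ (m:ℝ) ^ m := by exact_mod_cast Nat.factorial_le_pow m
  refine h1.trans ?_
  have h2 : (m:ℝ) ≤ Real.exp m := by have := Real.add_one_le_exp (m:ℝ); linarith
  calc (m:ℝ) ^ m ≤ (Real.exp m) ^ m := by gcongr
    _ = _ := by rw [← Real.exp_nat_mul]; ring_nf

lemma two_pow_le_exp (m : ℕ) : (2:ℝ) ^ m ≤ Real.exp m := by
  have h2 : (2:ℝ) ≤ Real.exp 1 := by have := Real.add_one_le_exp (1:ℝ); linarith
  calc (2:ℝ) ^ m ≤ (Real.exp 1) ^ m := by gcongr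
    _ = _ := by rw [← Real.exp_nat_mul]; ring_nf

lemma one_add_pow_le_exp {r : ℝ} (hr : 0 ≤ r) (m : ℕ) : (1 + r) ^ m ≤ Real.exp (r * m) := by
  have h2 : 1 + r ≤ Real.exp r := by have := Real.add_one_le_exp r; linarith
  calc (1 + r) ^ m ≤ (Real.exp r) ^ m := by gcongr
    _ = _ := by rw [← Real.exp_nat_mul]; ring_nf

noncomputable def QQ (C : ℝ) (r : ℝ) (m0 : ℕ) : ℝ :=
  1 + C * (m0 * (m0.factorial * (1 + r) ^ m0) * 2 ^ (m0 ^ 3))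

lemma QQ_le {C r b : ℝ} (hC : 0 ≤ C) (hCb : C ≤ b) (hr : 0 ≤ r) (hrb : r ≤ b) (l : ℕ) :
    QQ C r (2 * l ^ 2) ≤ Real.exp (qq b l) := by
  set m := 2 * l ^ 2 with hm
  have hmr : (m:ℝ) = 2 * (l:ℝ) ^ 2 := by rw [hm]; push_cast; ring
  have hb : 0 ≤ b := hC.trans hCb
  have h1 : C ≤ Real.exp b := by have := Real.add_one_le_exp b; linarith
  have h2 : (m:ℝ) ≤ Real.exp m := by have := Real.add_one_le_exp (m:ℝ); linarith
  have h3 := fact_le_exp m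
  have h4 : (1 + r) ^ m ≤ Real.exp (b * m) :=
    (one_add_pow_le_exp hr m).trans (by gcongr)
  have h5 := two_pow_le_exp (m ^ 3)
  have h6 : C * (m * (m.factorial * (1 + r) ^ m) * 2 ^ (m ^ 3)) ≤
      Real.exp b * (Real.exp m * (Real.exp (m^2) * Real.exp (b * m)) * Real.exp ((m ^ 3 : ℕ) : ℝ)) := by
    gcongr
  have h7 : Real.exp b * (Real.exp m * (Real.exp (m^2) * Real.exp (b * m)) * Real.exp ((m ^ 3 : ℕ) : ℝ))
      = Real.exp (qq b l - 1) := by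
    rw [← Real.exp_add, ← Real.exp_add, ← Real.exp_add, ← Real.exp_add]
    congr 1
    push_cast
    rw [hmr, qq]; ring
  have h8 : 0 ≤ qq b l - 1 := by
    have e : qq b l - 1 = b + 2 * (l:ℝ) ^ 2 + 4 * (l:ℝ) ^ 4 + 2 * b * (l:ℝ) ^ 2 + 8 * (l:ℝ) ^ 6 := by
      rw [qq]; ring
    rw [e]; positivity
  have h9 : (1:ℝ) ≤ Real.exp (qq b l - 1) := Real.one_le_exp h8
  have h10 : (2:ℝ) ≤ Real.exp 1 := by have := Real.add_one_le_exp (1:ℝ); linarith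
  have h11 : Real.exp (qq b l) = Real.exp (qq b l - 1) * Real.exp 1 := by
    rw [← Real.exp_add]; congr 1; ring
  rw [QQ, h11]
  rw [h7] at h6
  nlinarith

lemma exp3 : Real.exp (-3) ≤ 1 / 8 := by
  have h10 : (2:ℝ) ≤ Real.exp 1 := by have := Real.add_one_le_exp (1:ℝ); linarith
  have h : Real.exp 3 = (Real.exp 1) ^ 3 := by rw [← Real.exp_nat_mul]; norm_num
  rw [Real.exp_neg, one_div]
  apply inv_anti₀ (by norm_num)
  rw [h]
  calc (8:ℝ) = 2 ^ 3 := by norm_num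
    _ ≤ _ := by gcongr

lemma exp1 : Real.exp (-1) ≤ 1 / 2 := by
  have h10 : (2:ℝ) ≤ Real.exp 1 := by have := Real.add_one_le_exp (1:ℝ); linarith
  rw [Real.exp_neg, one_div]
  exact inv_anti₀ (by norm_num) h10

lemma par_holds {n l : ℕ} {z : ℂ} {C a b δ η P : ℝ} (hC : 0 ≤ C) (hCb : C ≤ b) (ha : 0 ≤ a) (hab : a ≤ b)
    (hzb : ‖z‖ ≤ b) (hc0 : Real.exp (-a) ≤ ‖z‖) (hc1 : Real.exp (-a) ≤ ‖1 - z‖)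
    (hl : b + 100 ≤ l) (hn1 : 1 ≤ n) (hn2 : n < 2 ^ (l + 1))
    (hD : ∀ m0 : ℕ, ∀ Q : ℝ, C * (m0 * (m0.factorial * (1 + ‖z‖) ^ m0) * 2 ^ (m0 ^ 3)) ≤ Q → DiophZ z m0 Q)
    (hδ : δ ≤ 1) (hP0 : 0 < P) (hP1 : P < 1) (hη : 0 ≤ η)
    (hb : ∀ m k : ℕ, δ * n / 4 ≤ m → k ≤ m → bpmf P m k ≤ η) :
    Par n (2 * l ^ 2) (l ^ 2) (3 * l) (2 * l ^ 2 * (3 * l + 1) * (l + 1)) z δ (Real.exp (-a))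
      (QQ C ‖z‖ (2 * l ^ 2)) (Real.exp (-(l:ℝ) ^ 7)) (Real.exp (-(l:ℝ) ^ 10))
      (Real.exp (-(l:ℝ) ^ 11)) η P ∧
    Real.exp (-(l:ℝ) ^ 12) ≤ Real.exp (-(l:ℝ) ^ 10) * Real.exp (-(l:ℝ) ^ 11) /
      (8 * n ^ 3 * (1 + ‖z‖)) := by
  have hb0 : 0 ≤ b := hC.trans hCb
  set x : ℝ := (l:ℝ) with hx
  obtain ⟨f1, f2, f3, f4, f5⟩ := poly_facts hb0 hl
  have hx0 : 100 ≤ x := by linarith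
  have hQe := QQ_le (r := ‖z‖) hC hCb (norm_nonneg z) hzb l
  set Q := QQ C ‖z‖ (2 * l ^ 2) with hQd
  have hQ1 : 1 ≤ Q := by
    rw [hQd, QQ]
    have : 0 ≤ C * (((2 * l ^ 2 : ℕ):ℝ) * (((2 * l ^ 2).factorial : ℕ) * (1 + ‖z‖) ^ (2 * l ^ 2)) * 2 ^ ((2 * l ^ 2) ^ 3)) := by
      positivity
    linarith
  have hz0 := norm_nonneg z
  have hz1 : 1 + ‖z‖ ≤ Real.exp b := by have := Real.add_one_le_exp b; linarith
  have hne : (n:ℝ) ≤ Real.exp (x + 1) := by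
    have h1 : (n:ℝ) ≤ 2 ^ (l + 1) := by exact_mod_cast hn2.le
    have h2 := two_pow_le_exp (l + 1)
    push_cast at h2
    exact h1.trans h2
  have hnp : (1:ℝ) ≤ n := by exact_mod_cast hn1
  have hq1 : 1 ≤ qq b x := by
    unfold qq
    have : 0 ≤ b + 2 * x ^ 2 + 4 * x ^ 4 + 2 * b * x ^ 2 + 8 * x ^ 6 := by positivity
    linarith
  have hca : Real.exp (-a) ≤ 1 := Real.exp_le_one_iff.2 (by linarith)
  have hl1 : 1 ≤ l := by
    have : (1:ℝ) ≤ l := by linarith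
    exact_mod_cast this
  have hk1 : Real.exp (-x ^ 10) ≤ 1 := by
    apply Real.exp_le_one_iff.2
    have : 0 ≤ x ^ 10 := by positivity
    linarith
  refine ⟨⟨hn1, Real.exp_pos _, hc0, hc1, hca, ?_, hQ1, le_rfl, Nat.one_le_pow _ _ hl1, hδ, ?_,
    Real.exp_pos _, ?_, Real.exp_pos _, hk1, ?_, ?_, Real.exp_pos _, ?_, ?_, hP0, hP1, hη, hb⟩, ?_⟩
  · apply hD
    rw [hQd, QQ]
    linarith
  · set y := 2 * l ^ 2 * (3 * l + 1) with hy
    have hy0 : 0 < y := by positivity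
    have hyr : (0:ℝ) < y := by exact_mod_cast hy0
    have h1 : (2:ℝ) ≤ (1 + 1 / (y:ℝ)) ^ y := by
      have := one_add_mul_le_pow (a := 1 / (y:ℝ)) (by have : 0 ≤ 1 / (y:ℝ) := by positivity
                                                      linarith) y
      have e : (y:ℝ) * (1 / y) = 1 := by field_simp
      rw [e] at this
      linarith
    calc (n:ℝ) < 2 ^ (l + 1) := by exact_mod_cast hn2
      _ ≤ ((1 + 1 / (y:ℝ)) ^ y) ^ (l + 1) := by gcongr
      _ = _ := by rw [← pow_mul]
  · refine le_trans (Real.exp_le_exp.2 ?_) exp1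
    linarith
  · have h1 : Real.exp (-(2 * b + x + 4)) ≤ Real.exp (-a) / (2 * (n + 1) * (1 + ‖z‖)) := by
      rw [le_div_iff₀ (by positivity)]
      have h2 : (2:ℝ) * (n + 1) * (1 + ‖z‖) ≤ Real.exp 1 * Real.exp (x + 2) * Real.exp b := by
        have e1 : (2:ℝ) ≤ Real.exp 1 := by have := Real.add_one_le_exp (1:ℝ); linarith
        have e2 : (n:ℝ) + 1 ≤ Real.exp (x + 2) := by
          have : Real.exp (x + 2) = Real.exp (x + 1) * Real.exp 1 := by rw [← Real.exp_add]; ring_nf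
          rw [this]
          nlinarith
        gcongr
      calc Real.exp (-(2 * b + x + 4)) * (2 * (n + 1) * (1 + ‖z‖)) ≤
          Real.exp (-(2 * b + x + 4)) * (Real.exp 1 * Real.exp (x + 2) * Real.exp b) := by gcongr
        _ = Real.exp (-(b + 1)) := by
          rw [← Real.exp_add, ← Real.exp_add, ← Real.exp_add]; ring_nf
        _ ≤ _ := Real.exp_le_exp.2 (by linarith)
    calc Real.exp (-x ^ 10) ≤ Real.exp (-x ^ 7) ^ (2 * l ^ 2) *
          Real.exp (-(2 * b + x + 4)) ^ (2 * l ^ 2 * (3 * l + 1) * (l + 1)) := by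
          rw [← Real.exp_nat_mul, ← Real.exp_nat_mul, ← Real.exp_add, Real.exp_le_exp]
          push_cast
          rw [← hx]
          linarith
      _ ≤ _ := by gcongr
  · have h1 : Q * (Real.exp (-a) / 2 * Real.exp (-x ^ 10)) ≤ 1 / 8 := by
      calc Q * (Real.exp (-a) / 2 * Real.exp (-x ^ 10)) ≤
          Real.exp (qq b x) * (1 * Real.exp (-x ^ 10)) := by
            gcongr
            linarith
        _ = Real.exp (qq b x - x ^ 10) := by rw [one_mul, ← Real.exp_add]; ring_nf
        _ ≤ Real.exp (-3) := Real.exp_le_exp.2 (by linarith)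
        _ ≤ _ := exp3
    have h2 : Q * (n * (1 + ‖z‖) * Real.exp (-x ^ 7)) ≤ 1 / 8 := by
      calc Q * (n * (1 + ‖z‖) * Real.exp (-x ^ 7)) ≤
          Real.exp (qq b x) * (Real.exp (x + 1) * Real.exp b * Real.exp (-x ^ 7)) := by
            gcongr
        _ = Real.exp (qq b x + (x + 1) + b - x ^ 7) := by
            rw [← Real.exp_add, ← Real.exp_add, ← Real.exp_add]; ring_nf
        _ ≤ Real.exp (-3) := Real.exp_le_exp.2 (by linarith)
        _ ≤ _ := exp3
    rw [mul_add]
    linarith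
  · calc Real.exp (-x ^ 11) ≤ Real.exp (-x ^ 10 + (-3)) := Real.exp_le_exp.2 (by linarith)
      _ = Real.exp (-x ^ 10) * Real.exp (-3) := Real.exp_add _ _
      _ ≤ Real.exp (-x ^ 10) * (1 / 8) := by gcongr; exact exp3
      _ ≤ _ := by have := Real.exp_pos (-x ^ 10); linarith
  · have h1 : Real.exp (-(b + 3 + qq b x + b)) ≤ ‖z‖ * (1 / (4 * Q * (1 + ‖z‖))) := by
      rw [mul_one_div, le_div_iff₀ (by positivity)]
      have e1 : (4:ℝ) ≤ Real.exp 3 := by have := Real.add_one_le_exp (3:ℝ); linarith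
      calc Real.exp (-(b + 3 + qq b x + b)) * (4 * Q * (1 + ‖z‖)) ≤
          Real.exp (-(b + 3 + qq b x + b)) * (Real.exp 3 * Real.exp (qq b x) * Real.exp b) := by gcongr
        _ = Real.exp (-b) := by
          rw [← Real.exp_add, ← Real.exp_add, ← Real.exp_add]; ring_nf
        _ ≤ Real.exp (-a) := Real.exp_le_exp.2 (by linarith)
        _ ≤ _ := hc0
    have h2 : Real.exp (-x ^ 11) ≤ Real.exp (-(b + 3 + qq b x + b)) * (1/2) := by
      calc Real.exp (-x ^ 11) ≤ Real.exp (-(b + 3 + qq b x + b) + (-1)) := Real.exp_le_exp.2 (by linarith)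
        _ = Real.exp (-(b + 3 + qq b x + b)) * Real.exp (-1) := Real.exp_add _ _
        _ ≤ _ := by gcongr; exact exp1
    have h3 : n * Real.exp (-x ^ 7) ≤ Real.exp (-(b + 3 + qq b x + b)) * (1/2) := by
      calc n * Real.exp (-x ^ 7) ≤ Real.exp (x + 1) * Real.exp (-x ^ 7) := by gcongr
        _ = Real.exp (x + 1 - x ^ 7) := by rw [← Real.exp_add]; ring_nf
        _ ≤ Real.exp (-(b + 3 + qq b x + b) + (-1)) := Real.exp_le_exp.2 (by linarith)
        _ = Real.exp (-(b + 3 + qq b x + b)) * Real.exp (-1) := Real.exp_add _ _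
        _ ≤ _ := by gcongr; exact exp1
    linarith
  · rw [le_div_iff₀ (by positivity)]
    have e1 : (8:ℝ) ≤ Real.exp 3 := by
      have h := exp3
      rw [Real.exp_neg, one_div] at h
      exact (inv_le_inv₀ (Real.exp_pos _) (by norm_num)).1 h
    calc Real.exp (-x ^ 12) * (8 * n ^ 3 * (1 + ‖z‖)) ≤
        Real.exp (-x ^ 12) * (Real.exp 3 * Real.exp (x + 1) ^ 3 * Real.exp b) := by gcongr
      _ = Real.exp (-x ^ 12 + (3 + 3 * (x + 1) + b)) := by
        rw [← Real.exp_nat_mul, ← Real.exp_add, ← Real.exp_add, ← Real.exp_add]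
        push_cast; ring_nf
      _ ≤ Real.exp (-x ^ 10 + -x ^ 11) := Real.exp_le_exp.2 (by linarith)
      _ = _ := Real.exp_add _ _

end PartPI

section PartPJ
open Filter

lemma exists_delta {d : ℝ} (hd : 1 < d) : ∃ δ : ℝ, 0 < δ ∧ δ ≤ 1 ∧
    (δ + d) * Real.exp (1 - d + d * (2 + d) * δ) < 1 := by
  have hc : Continuous fun δ : ℝ => (δ + d) * Real.exp (1 - d + d * (2 + d) * δ) := by fun_prop
  have h0 : (0 + d) * Real.exp (1 - d + d * (2 + d) * 0) < 1 := by
    have h1 : d - 1 + 1 < Real.exp (d - 1) := Real.add_one_lt_exp (by linarith)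
    have h2 : Real.exp (d - 1) * Real.exp (1 - d) = 1 := by
      rw [← Real.exp_add]; simp
    have h3 := Real.exp_pos (1 - d)
    rw [mul_zero, add_zero, zero_add]
    nlinarith
  have h1 := (hc.tendsto 0).eventually_lt_const h0
  have h2 : ∀ᶠ δ in nhdsWithin (0:ℝ) (Set.Ioi 0), δ ∈ Set.Ioc (0:ℝ) 1 :=
    Ioc_mem_nhdsGT one_pos
  obtain ⟨δ, h3, h4⟩ := (h2.and (h1.filter_mono nhdsWithin_le_nhds)).exists
  exact ⟨δ, h3.1, h3.2, h4⟩

/-- base two logarithm -/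
def lg (n : ℕ) : ℕ := Nat.log 2 n

lemma lg_tendsto : Tendsto lg atTop atTop := by
  refine tendsto_atTop.2 fun b => ?_
  filter_upwards [eventually_ge_atTop (2 ^ b)] with n hn
  exact Nat.le_log_of_pow_le (by norm_num) hn

lemma lg_tendsto_real : Tendsto (fun n => (lg n : ℝ)) atTop atTop :=
  tendsto_natCast_atTop_atTop.comp lg_tendsto

lemma lg_le {n : ℕ} (hn : 1 ≤ n) : (2:ℝ) ^ lg n ≤ n := by
  have := Nat.pow_log_le_self 2 (x := n) (by omega)
  exact_mod_cast this

lemma lg_lt (n : ℕ) : n < 2 ^ (lg n + 1) := Nat.lt_pow_succ_log_self (by norm_num) n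

lemma lg_exp (n : ℕ) : (n:ℝ) ≤ Real.exp (lg n + 1) := by
  have h1 : (n:ℝ) ≤ 2 ^ (lg n + 1) := by exact_mod_cast (lg_lt n).le
  have h2 := two_pow_le_exp (lg n + 1)
  push_cast at h2
  exact h1.trans h2

lemma lg_poly (k : ℕ) : Tendsto (fun n : ℕ => (lg n : ℝ) ^ k / n) atTop (nhds 0) := by
  have h := (tendsto_pow_const_div_const_pow_of_one_lt k (r := (2:ℝ)) (by norm_num)).comp lg_tendsto
  refine squeeze_zero' (Eventually.of_forall fun n => by positivity) ?_ h
  filter_upwards [eventually_ge_atTop 1] with n hn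
  have := lg_le hn
  simp only [Function.comp]
  gcongr

lemma lg_ev {d : ℝ} (hd : 1 < d) {δ : ℝ} (hδ : 0 < δ)
    (h : (δ + d) * Real.exp (1 - d + d * (2 + d) * δ) < 1) : ∃ ρ : ℝ, 0 ≤ ρ ∧ ρ < 1 ∧ ∀ᶠ n : ℕ in atTop,
    (δ + d) * Real.exp (1 - d + d * (2 + d) * δ) * Real.exp (Real.log (n / δ) / (lg n ^ 2 : ℕ)) ≤ ρ := by
  set r := (δ + d) * Real.exp (1 - d + d * (2 + d) * δ) with hr
  have hr0 : 0 < r := by positivity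
  have ht : Tendsto (fun n : ℕ => r * Real.exp ((lg n + 1 - Real.log δ) / (lg n : ℝ) ^ 2)) atTop (nhds (r * Real.exp 0)) := by
    refine Tendsto.const_mul _ ((Real.continuous_exp.tendsto 0).comp ?_)
    have h1 : Tendsto (fun x : ℝ => (x + 1 - Real.log δ) / x ^ 2) atTop (nhds 0) := by
      have e1 : Tendsto (fun x : ℝ => x⁻¹ + (1 - Real.log δ) * (x⁻¹ * x⁻¹)) atTop (nhds (0 + (1 - Real.log δ) * (0 * 0))) :=
        tendsto_inv_atTop_zero.add ((tendsto_inv_atTop_zero.mul tendsto_inv_atTop_zero).const_mul _)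
      simp only [mul_zero, add_zero] at e1
      refine e1.congr' ?_
      filter_upwards [eventually_gt_atTop 0] with x hx
      field_simp
      ring
    exact h1.comp lg_tendsto_real
  rw [Real.exp_zero, mul_one] at ht
  refine ⟨(r + 1) / 2, by linarith, by linarith, ?_⟩
  filter_upwards [ht.eventually_lt_const (show r < (r + 1) / 2 by linarith), eventually_ge_atTop 1] with n hn hn1
  refine le_trans ?_ hn.le
  have hn0 : (0:ℝ) < n := by exact_mod_cast hn1
  push_cast
  gcongr
  rw [Real.log_div hn0.ne' hδ.ne']
  have := (Real.log_le_iff_le_exp hn0).2 (lg_exp n)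
  linarith

lemma nul_of_det {n : ℕ} {ε : ℝ} (a : Fin n → Fin n → Bool) (z : ℂ) (hn : 1 ≤ n)
    (hl : 3 * ((lg n : ℝ) + 1) + ‖z‖ < ε / 2 * (lg n : ℝ) ^ 2)
    (hdet : (1 / (n:ℝ) ^ 2) ^ n ≤ ‖(smat a z).det‖) :
    ¬ NN (smat a z) Finset.univ (Real.exp (-(ε / 2 * n))) (lg n ^ 2) := by
  intro hN
  have h1 := hN.det_le (smat_norm_le a z)
  have hn0 : (0:ℝ) < n := by exact_mod_cast hn
  have h2 : (n.factorial : ℝ) ≤ Real.exp ((lg n + 1) * n) := by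
    calc (n.factorial : ℝ) ≤ (n:ℝ) ^ n := by exact_mod_cast Nat.factorial_le_pow n
      _ ≤ Real.exp (lg n + 1) ^ n := by gcongr; exact lg_exp n
      _ = _ := by rw [← Real.exp_nat_mul]; ring_nf
  have h3 : (1 + ‖z‖) ^ (n - lg n ^ 2) ≤ Real.exp (‖z‖ * n) := by
    refine le_trans ?_ (one_add_pow_le_exp (norm_nonneg z) n)
    exact pow_le_pow_right₀ (by have := norm_nonneg z; linarith) (Nat.sub_le _ _)
  have h4 : Real.exp (-(2 * (lg n + 1) * n)) ≤ (1 / (n:ℝ) ^ 2) ^ n := by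
    calc Real.exp (-(2 * (lg n + 1) * n)) = (1 / (Real.exp (lg n + 1)) ^ 2) ^ n := by
          rw [one_div, ← Real.exp_nat_mul, ← Real.exp_neg, ← Real.exp_nat_mul]
          push_cast; ring_nf
      _ ≤ _ := by gcongr; exact lg_exp n
  have h5 : (n.factorial : ℝ) * (Real.exp (-(ε / 2 * n)) ^ (lg n ^ 2) * (1 + ‖z‖) ^ (n - lg n ^ 2)) ≤
      Real.exp ((lg n + 1) * n) * (Real.exp (-(ε / 2 * n)) ^ (lg n ^ 2) * Real.exp (‖z‖ * n)) := by
    gcongr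
  have h6 : Real.exp ((lg n + 1) * n) * (Real.exp (-(ε / 2 * n)) ^ (lg n ^ 2) * Real.exp (‖z‖ * n)) <
      Real.exp (-(2 * (lg n + 1) * n)) := by
    rw [← Real.exp_nat_mul, ← Real.exp_add, ← Real.exp_add, Real.exp_lt_exp]
    push_cast
    nlinarith [mul_lt_mul_of_pos_right hl hn0]
  linarith

lemma ev_ge (x : ℝ) : ∀ᶠ n : ℕ in atTop, x < n :=
  tendsto_natCast_atTop_atTop.eventually_gt_atTop x

open Classical in
lemma good_prob {d ε δ : ℝ} (hd : 1 < d) (hε : 0 < ε) (hδ : 0 < δ) (hδ1 : δ ≤ 1)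
    (h : (δ + d) * Real.exp (1 - d + d * (2 + d) * δ) < 1) (z : ℂ)
    (hdet : Tendsto (fun n : ℕ => Pr (d / n) (fun a : Fin n → Fin n → Bool =>
      ‖(smat a z).det‖ < (1 / (n:ℝ) ^ 2) ^ n)) atTop (nhds 0)) :
    Tendsto (fun n : ℕ => Pr (d / n) (fun a : Fin n → Fin n → Bool =>
      ¬ Good z (2 * lg n ^ 2) (lg n ^ 2) (3 * lg n) (lg n ^ 2) δ (Real.exp (-(ε / 2 * n))) a))
      atTop (nhds 0) := by
  obtain ⟨ρ, hρ0, hρ1, hρ⟩ := lg_ev hd hδ h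
  have hd0 : 0 < d := by linarith
  have t1 : Tendsto (fun n : ℕ => ρ ^ (2 * lg n ^ 2) / (1 - ρ)) atTop (nhds 0) := by
    have e : Tendsto (fun n : ℕ => 2 * lg n ^ 2) atTop atTop := by
      refine tendsto_atTop_mono (fun n => ?_) lg_tendsto
      nlinarith [Nat.le_self_pow (two_ne_zero) (lg n)]
    have := ((tendsto_pow_atTop_nhds_zero_of_lt_one hρ0 hρ1).comp e).div_const (1 - ρ)
    simpa using this
  have t2 : Tendsto (fun n : ℕ => (n:ℝ) * (Real.exp d / 2 ^ (3 * lg n))) atTop (nhds 0) := by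
    have e : Tendsto (fun n : ℕ => 2 * Real.exp d * (1 / 2 : ℝ) ^ lg n) atTop (nhds (2 * Real.exp d * 0)) :=
      ((tendsto_pow_atTop_nhds_zero_of_lt_one (by norm_num) (by norm_num)).comp lg_tendsto).const_mul _
    rw [mul_zero] at e
    refine squeeze_zero (fun n => by positivity) (fun n => ?_) e
    have h1 : (n:ℝ) ≤ 2 ^ (lg n + 1) := by exact_mod_cast (lg_lt n).le
    calc (n:ℝ) * (Real.exp d / 2 ^ (3 * lg n)) ≤ 2 ^ (lg n + 1) * (Real.exp d / 2 ^ (2 * lg n)) := by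
          gcongr
          · norm_num
          · omega
      _ = _ := by
          rw [pow_succ, one_div_pow, two_mul, pow_add]
          field_simp
  have tt : Tendsto (fun n : ℕ => (2 * (ρ ^ (2 * lg n ^ 2) / (1 - ρ)) +
      2 * ((n:ℝ) * (Real.exp d / 2 ^ (3 * lg n)))) + Pr (d / n) (fun a : Fin n → Fin n → Bool =>
      ‖(smat a z).det‖ < (1 / (n:ℝ) ^ 2) ^ n)) atTop (nhds 0) := by
    have := ((t1.const_mul 2).add (t2.const_mul 2)).add hdet
    simpa using this
  have hl : ∀ᶠ n : ℕ in atTop, 3 * ((lg n : ℝ) + 1) + ‖z‖ < ε / 2 * (lg n : ℝ) ^ 2 := by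
    have h1 : ∀ᶠ n : ℕ in atTop, 1 + 2 / ε * (6 + ‖z‖) < lg n := lg_tendsto_real.eventually_gt_atTop _
    filter_upwards [h1] with n hn
    have hz := norm_nonneg z
    have a1 : 0 ≤ 2 / ε * (6 + ‖z‖) := by positivity
    have a2 : 1 ≤ (lg n : ℝ) := by linarith
    have a3 : 6 + ‖z‖ < ε / 2 * lg n := by
      have : 2 / ε * (6 + ‖z‖) < lg n := by linarith
      calc 6 + ‖z‖ = ε / 2 * (2 / ε * (6 + ‖z‖)) := by field_simp
        _ < _ := by gcongr
    nlinarith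
  refine squeeze_zero' ?_ ?_ tt
  · filter_upwards [ev_ge d] with n hn
    have hn0 : (0:ℝ) < n := by linarith
    exact Pr_nonneg (by positivity) (by rw [div_lt_one hn0]; exact hn) _
  · filter_upwards [ev_ge d, hρ, hl, lg_tendsto.eventually_ge_atTop 1] with n hn h1 h2 h3
    have hn0 : (0:ℝ) < n := by linarith
    have hp0 : 0 < d / n := by positivity
    have hp1 : d / n < 1 := by rw [div_lt_one hn0]; exact hn
    have hn1 : 1 ≤ n := by exact_mod_cast hn0
    have hK : 1 ≤ lg n ^ 2 := Nat.one_le_pow _ _ h3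
    have b1 := exp_prob (n := n) (K := lg n ^ 2) (m0 := 2 * lg n ^ 2) hd0 hn hδ hδ1 hK (by omega) hρ1 h1
    have b2 := b1
    rw [← Pr_transpose] at b2
    have b3 := coldeg_prob (n := n) hd0 hn (3 * lg n)
    have b4 := b3
    rw [← Pr_transpose] at b4
    have m1 : ∀ a : Fin n → Fin n → Bool,
        ¬ Good z (2 * lg n ^ 2) (lg n ^ 2) (3 * lg n) (lg n ^ 2) δ (Real.exp (-(ε / 2 * n))) a →
        ((((¬ ExpP a (2 * lg n ^ 2) (lg n ^ 2) δ) ∨ ¬ ExpP (fun i j => a j i) (2 * lg n ^ 2) (lg n ^ 2) δ) ∨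
          ((¬ ColDeg (fun i j => a j i) (3 * lg n)) ∨ ¬ ColDeg a (3 * lg n))) ∨
          ‖(smat a z).det‖ < (1 / (n:ℝ) ^ 2) ^ n) := by
      intro a ha
      by_contra hcon
      push Not at hcon
      obtain ⟨⟨⟨c1, c2⟩, c3, c4⟩, c5⟩ := hcon
      refine ha ⟨c1, c2, c4, c3, ?_, nul_of_det a z hn1 h2 c5⟩
      have : 0 < (1 / (n:ℝ) ^ 2) ^ n := by positivity
      exact norm_pos_iff.1 (by linarith)
    refine (Pr_mono hp0 hp1 m1).trans ?_
    refine (Pr_or hp0 hp1 _ _).trans (add_le_add ?_ le_rfl)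
    refine (Pr_or hp0 hp1 _ _).trans (add_le_add ?_ ?_)
    · refine (Pr_or hp0 hp1 _ _).trans ?_
      exact (add_le_add b1 b2).trans (two_mul _).symm.le
    · refine (Pr_or hp0 hp1 _ _).trans ?_
      exact (add_le_add b3 b4).trans (two_mul _).symm.le

end PartPJ

section PartPK
open MeasureTheory Filter

lemma VV_le {n : ℕ} {d T : ℝ} (hd : 0 < d) (hn : 2 * d < n) :
    VV n (d / n) (T * d / n) ≤ Real.exp (2 * d * (T - 1) ^ 2) := by
  have hn0 : (0:ℝ) < n := by linarith
  have hp0 : 0 < d / n := by positivity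
  have hp2 : d / n ≤ 1 / 2 := by rw [div_le_div_iff₀ hn0 (by norm_num)]; linarith
  rw [VV_eq hp0 (by linarith)]
  set u := (T * d / n - d / n) ^ 2 / (d / n * (1 - d / n)) with hu
  have hu0 : 0 ≤ u := by
    apply div_nonneg (by positivity)
    exact mul_nonneg hp0.le (by linarith)
  have hu1 : u ≤ 2 * d * (T - 1) ^ 2 / n := by
    rw [hu, div_le_iff₀ (mul_pos hp0 (by linarith))]
    calc (T * d / n - d / n) ^ 2 = 2 * d * (T - 1) ^ 2 / n * (d / n * (1 / 2)) := by
          field_simp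
      _ ≤ _ := by
          gcongr
          linarith
  calc (1 + u) ^ n ≤ Real.exp (u * n) := one_add_pow_le_exp hu0 n
    _ ≤ Real.exp (2 * d * (T - 1) ^ 2 / n * n) := by gcongr
    _ = _ := by congr 1; field_simp

lemma bp_le {n : ℕ} {d T δ w : ℝ} (hd : 0 < d) (hT : 0 < T) (hδ : 0 < δ) (hw : w = δ * T * d / 8)
    (hn : 2 * (T * d) < n) (m k : ℕ) (hm : δ * n / 4 ≤ m) (hk : k ≤ m) :
    bpmf (T * d / n) m k ≤ 2 / Real.sqrt w := by
  have hn0 : (0:ℝ) < n := by have : 0 < T * d := by positivity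
                             linarith
  have hp0 : 0 < T * d / n := by positivity
  have hp2 : T * d / n ≤ 1 / 2 := by rw [div_le_div_iff₀ hn0 (by norm_num)]; linarith
  have hw0 : 0 < w := by rw [hw]; positivity
  have hs : 0 < Real.sqrt w := Real.sqrt_pos.2 hw0
  refine (bpmf_bound hp0 (by linarith) m k hk (Real.sqrt w) hs).trans ?_
  have h1 : w ≤ (m + 1 : ℕ) * (T * d / n) * (1 - T * d / n) := by
    calc w = δ * n / 4 * (T * d / n) * (1 / 2) := by rw [hw]; field_simp; norm_num
      _ ≤ _ := by
        gcongr
        · push_cast; linarith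
        · linarith
  have h2 : Real.sqrt w / ((m + 1 : ℕ) * (T * d / n) * (1 - T * d / n)) ≤ 1 / Real.sqrt w := by
    calc _ ≤ Real.sqrt w / w := by gcongr
      _ = 1 / Real.sqrt w := by
        rw [div_eq_div_iff hw0.ne' hs.ne', Real.mul_self_sqrt hw0.le, one_mul]
  calc _ ≤ 1 / Real.sqrt w + 1 / Real.sqrt w := by gcongr
    _ = _ := by ring

lemma main_tendsto {d ε : ℝ} (hd : 1 < d) (hε : 0 < ε) (z : ℂ)
    (hdet : Tendsto (fun n : ℕ => Pr (d / n) (fun a : Fin n → Fin n → Bool =>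
      ‖(smat a z).det‖ < (1 / (n:ℝ) ^ 2) ^ n)) atTop (nhds 0))
    (hz0 : z ≠ 0) (hz1 : z ≠ 1) (C : ℝ) (hC : 0 < C)
    (hD : ∀ m0 : ℕ, ∀ Q : ℝ, C * (m0 * (m0.factorial * (1 + ‖z‖) ^ m0) * 2 ^ (m0 ^ 3)) ≤ Q →
      DiophZ z m0 Q) :
    Tendsto (fun n : ℕ => Pr (d / n) (fun a : Fin n → Fin n → Bool =>
      NN (smat a z) Finset.univ (n * (2 * Real.exp (-(ε * n)))) 1)) atTop (nhds 0) := by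
  have hd0 : 0 < d := by linarith
  obtain ⟨δ, hδ, hδ1, hδ2⟩ := exists_delta hd
  have hg := good_prob hd hε hδ hδ1 hδ2 z hdet
  obtain ⟨c, hc0, hc1, hc⟩ := exists_pos_lb (ι := Bool) (fun b => if b then ‖z‖ else ‖1 - z‖) (by
    intro b
    cases b
    · simpa using sub_ne_zero.2 (Ne.symm hz1)
    · simpa using hz0)
  have hcz : c ≤ ‖z‖ := by simpa using hc true
  have hcz1 : c ≤ ‖1 - z‖ := by simpa using hc false
  set a := -Real.log c with ha
  have hca : Real.exp (-a) = c := by rw [ha, neg_neg, Real.exp_log hc0]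
  have ha0 : 0 ≤ a := by have := Real.log_nonpos hc0.le hc1; linarith
  set b := C + a + ‖z‖ with hb
  have hzn := norm_nonneg z
  rw [Metric.tendsto_atTop']
  suffices H : ∀ e > 0, ∀ᶠ n : ℕ in atTop, Pr (d / n) (fun a : Fin n → Fin n → Bool =>
      NN (smat a z) Finset.univ (n * (2 * Real.exp (-(ε * n)))) 1) < e by
    intro e he
    obtain ⟨N, hN⟩ := eventually_atTop.1 ((H e he).and (ev_ge d))
    refine ⟨N, fun n hn => ?_⟩
    obtain ⟨h1, h2⟩ := hN n hn.le
    have hn0 : (0:ℝ) < n := by linarith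
    rw [Real.dist_0_eq_abs, abs_of_nonneg (Pr_nonneg (by positivity) (by rw [div_lt_one hn0]; exact h2) _)]
    exact h1
  intro e he
  -- choose T
  obtain ⟨T, hT, hTe⟩ : ∃ T : ℝ, 0 < T ∧ 2 / Real.sqrt (δ * T * d / 8) ≤ δ * e / 2 := by
    refine ⟨8 / (δ * d) * (4 / (δ * e)) ^ 2, by positivity, ?_⟩
    have e1 : δ * (8 / (δ * d) * (4 / (δ * e)) ^ 2) * d / 8 = (4 / (δ * e)) ^ 2 := by field_simp
    rw [e1, Real.sqrt_sq (by positivity)]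
    apply le_of_eq
    field_simp
    norm_num
  set w := δ * T * d / 8 with hw
  set V := Real.exp (2 * d * (T - 1) ^ 2) with hV
  have tt : Tendsto (fun n : ℕ => (((lg n : ℝ))⁻¹ + 2 * T * d * ((lg n : ℝ) ^ 2 / n)) +
      2 * Pr (d / n) (fun a : Fin n → Fin n → Bool =>
        ¬ Good z (2 * lg n ^ 2) (lg n ^ 2) (3 * lg n) (lg n ^ 2) δ (Real.exp (-(ε / 2 * n))) a) +
      ((lg n : ℝ)⁻¹ + V * ((lg n : ℝ) ^ 5 / n))) atTop (nhds 0) := by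
    have i1 : Tendsto (fun n : ℕ => ((lg n : ℝ))⁻¹) atTop (nhds 0) :=
      tendsto_inv_atTop_zero.comp lg_tendsto_real
    have := ((i1.add ((lg_poly 2).const_mul (2 * T * d))).add (hg.const_mul 2)).add
      (i1.add ((lg_poly 5).const_mul V))
    simpa using this
  have hsig : ∀ᶠ n : ℕ in atTop, (lg n : ℝ) ^ 15 + (lg n + 2) < ε / 2 * n := by
    have t := ((lg_poly 15).add (lg_poly 1)).add ((lg_poly 0).const_mul 2)
    simp only [add_zero, mul_zero] at t
    filter_upwards [t.eventually_lt_const (show 0 < ε / 2 by positivity), eventually_ge_atTop 1] with n h1 h2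
    have hn0 : (0:ℝ) < n := by exact_mod_cast h2
    have : ((lg n : ℝ) ^ 15 / n + (lg n : ℝ) ^ 1 / n + 2 * ((lg n : ℝ) ^ 0 / n)) * n < ε / 2 * n := by
      gcongr
    calc _ = ((lg n : ℝ) ^ 15 / n + (lg n : ℝ) ^ 1 / n + 2 * ((lg n : ℝ) ^ 0 / n)) * n := by
          field_simp; ring
      _ < _ := this
  have hsc : ∀ᶠ n : ℕ in atTop, Real.exp (-(ε / 2 * n)) ≤ c := by
    filter_upwards [ev_ge (a * (2 / ε))] with n hn
    rw [← hca, Real.exp_le_exp]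
    have : a * (2 / ε) * (ε / 2) ≤ n * (ε / 2) := by gcongr
    have e2 : a * (2 / ε) * (ε / 2) = a := by field_simp
    linarith
  filter_upwards [tt.eventually_lt_const (show 0 < δ * e / 2 by positivity), hsig, hsc, ev_ge (2 * d),
    ev_ge (2 * (T * d)), lg_tendsto_real.eventually_ge_atTop (b + 100)] with n k1 k2 k3 k4 k5 k6
  have hn0 : (0:ℝ) < n := by linarith
  have hn1 : 1 ≤ n := by exact_mod_cast hn0
  have hp0 : 0 < d / n := by positivity
  have hp1 : d / n < 1 := by rw [div_lt_one hn0]; linarith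
  have hP0 : 0 < T * d / n := by positivity
  have hP1 : T * d / n < 1 := by
    rw [div_lt_one hn0]
    have : 0 < T * d := by positivity
    linarith
  have hl1 : (1:ℝ) ≤ lg n := by linarith
  have hl1' : 1 ≤ lg n := by exact_mod_cast hl1
  have hl0 : (0:ℝ) < lg n := by linarith
  obtain ⟨p, hτ⟩ := par_holds (n := n) (l := lg n) (z := z) (C := C) (a := a) (b := b) (δ := δ)
    (η := 2 / Real.sqrt w) (P := T * d / n) hC.le (by linarith) ha0 (by linarith) (by linarith)
    (by rw [hca]; exact hcz) (by rw [hca]; exact hcz1) k6 hn1 (lg_lt n) hD hδ1 hP0 hP1 (by positivity)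
    (fun m k hm hk => bp_le hd0 hT hδ hw k5 m k hm hk)
  have tel := telescope (y0 := lg n ^ 2) (L := lg n ^ 3) (s := ((lg n : ℝ) ^ 3)⁻¹) (q := d / n)
    (σ0 := Real.exp (-(ε / 2 * n))) p hδ.le hp0 hp1 (by positivity) (Nat.one_le_pow _ _ hl1')
    (Real.exp_pos _) hτ (Real.exp_pos _) (by rw [hca]; exact k3)
  have hmono : Pr (d / n) (fun a : Fin n → Fin n → Bool =>
      NN (smat a z) Finset.univ (n * (2 * Real.exp (-(ε * n)))) 1) ≤
      Pr (d / n) (fun a : Fin n → Fin n → Bool => NN (smat a z) Finset.univ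
        (Real.exp (-(lg n : ℝ) ^ 12) ^ (lg n ^ 3) * Real.exp (-(ε / 2 * n))) 1) := by
    refine Pr_mono hp0 hp1 fun a hN => ?_
    obtain ⟨W, hW, hN⟩ := hN
    refine ⟨W, hW, fun v hv i hi => (hN v hv i hi).trans ?_⟩
    refine mul_le_mul_of_nonneg_right ?_ (norm_nonneg v)
    have e2 : (2:ℝ) ≤ Real.exp 1 := by have := Real.add_one_le_exp (1:ℝ); linarith
    calc n * (2 * Real.exp (-(ε * n))) ≤ Real.exp (lg n + 1) * (Real.exp 1 * Real.exp (-(ε * n))) := by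
          gcongr; exact lg_exp n
      _ = Real.exp ((lg n + 2) - ε * n) := by
          rw [← Real.exp_add, ← Real.exp_add]; ring_nf
      _ ≤ Real.exp (-(lg n : ℝ) ^ 15 - ε / 2 * n) := Real.exp_le_exp.2 (by linarith)
      _ = _ := by
          rw [← Real.exp_nat_mul, ← Real.exp_add]
          push_cast; ring_nf
  have hVV := VV_le (T := T) hd0 k4
  have a1 : ((lg n ^ 2 : ℕ) : ℝ) / ((lg n ^ 3 : ℕ) : ℝ) = (lg n : ℝ)⁻¹ := by
    push_cast; field_simp
  have a2 : ((2 * lg n ^ 2 : ℕ) : ℝ) * (T * d / n) = 2 * T * d * ((lg n : ℝ) ^ 2 / n) := by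
    push_cast; ring
  have a3 : ((lg n ^ 2 : ℕ) : ℝ) * (((lg n : ℝ) ^ 3)⁻¹ + VV n (d / n) (T * d / n) / (n * ((lg n : ℝ) ^ 3)⁻¹)) ≤
      (lg n : ℝ)⁻¹ + V * ((lg n : ℝ) ^ 5 / n) := by
    calc _ ≤ ((lg n ^ 2 : ℕ) : ℝ) * (((lg n : ℝ) ^ 3)⁻¹ + V / (n * ((lg n : ℝ) ^ 3)⁻¹)) := by gcongr
      _ = _ := by push_cast; field_simp
  rw [a1, a2] at tel
  have hfin : δ * Pr (d / n) (fun a : Fin n → Fin n → Bool =>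
      NN (smat a z) Finset.univ (n * (2 * Real.exp (-(ε * n)))) 1) < δ * e := by
    have := mul_le_mul_of_nonneg_left hmono hδ.le
    linarith
  exact lt_of_mul_lt_mul_left hfin hδ.le

end PartPK

theorem least_singular_value_shifted (d ε : ℝ) (hd : 1 < d) (hε : 0 < ε) :
    ∀ᵐ z ∂(volume : Measure ℂ),
      Filter.Tendsto
        (fun n : ℕ =>
          iidMatrixLaw n (d / n)
            {A | leastSingVal (Matrix.of A - z • 1) ≤ Real.exp (-(ε * n))})
        Filter.atTop (nhds 0) := by
  filter_upwards [det_prob d (by linarith), dioph_ae] with z hdet hD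
  obtain ⟨hz0, hz1, C, hC, hD⟩ := hD
  have h := main_tendsto hd hε z hdet hz0 hz1 C hC hD
  have h2 := ENNReal.tendsto_ofReal h
  rw [ENNReal.ofReal_zero] at h2
  refine tendsto_of_tendsto_of_tendsto_of_le_of_le' tendsto_const_nhds h2
    (Filter.Eventually.of_forall fun n => zero_le) ?_
  filter_upwards [ev_ge d] with n hn
  have hn0 : (0:ℝ) < n := by linarith
  have hp0 : 0 < d / n := by have : 0 < d := by linarith
                             positivity
  refine law_le hp0 (by rw [div_lt_one hn0]; exact hn) _ _ fun a ha => ?_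
  have ha2 : leastSingVal (Matrix.of (mcast a) - z • 1) ≤ Real.exp (-(ε * n)) := ha
  rw [mcast_sub] at ha2
  exact NN_of_lsv _ (by exact_mod_cast hn0) (Real.exp_pos _) ha2
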